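/- arXiv:1502.04429 — 5 statements merged into one kernel-verified Lean document; each statement's English description precedes it below -/
import Mathlib

section
/- Let L be a first-order language and let A be a countable L-structure that is ultrahomogeneous, locally finite, and linearly ordered, and such that the class of finite substructures of A has the Ramsey property. Then the automorphism group Aut(A), equipped with the topology of pointwise convergence (A discrete) and with composition as the group operation, is extremely amenable, i.e., every continuous action of Aut(A) on a nonempty compact Hausdorff space has a fixed point. -/
open FirstOrder

/-- A topological group `G` is *extremely amenable* if every continuous action of `G` on a
nonempty compact Hausdorff space has a fixed point. -/
def ExtremelyAmenable (G : Type) [Group G] [TopologicalSpace G] : Prop :=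
  ∀ (K : Type) [TopologicalSpace K] [CompactSpace K] [T2Space K] [Nonempty K]
    [MulAction G K] [ContinuousSMul G K], ∃ x : K, ∀ g : G, g • x = x

namespace FirstOrder.Language

variable (L : FirstOrder.Language.{0, 0}) (M : Type) [L.Structure M]

/-- `M` is *ultrahomogeneous* if every isomorphism between two finite substructures of `M`
extends to an automorphism of `M`. -/
def UltrahomogeneousFin : Prop :=
  ∀ (S₁ S₂ : L.Substructure M), Finite S₁ → Finite S₂ →
    ∀ φ : S₁ ≃[L] S₂, ∃ ψ : M ≃[L] M, ∀ x : S₁, ψ (x : M) = (φ x : M)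

/-- `M` is *locally finite* if every finitely generated substructure of `M` is finite. -/
def LocallyFiniteStruct : Prop :=
  ∀ S : L.Substructure M, S.FG → Finite S

/-- `M` is *linearly ordered*: `L` has a binary relation symbol interpreted in `M` as a
linear order. -/
def LinearlyOrderedStruct : Prop :=
  ∃ r : L.Relations 2, IsLinearOrder M (fun a b => Structure.RelMap r ![a, b])

/-- The class of finite substructures of `M` has the *Ramsey property*. -/
def FiniteSubstructureRamsey : Prop :=
  ∀ c : ℕ, 0 < c → ∀ A₀ B₀ : L.Substructure M, Finite A₀ → Finite B₀ →
    ∃ C₀ : L.Substructure M, Finite C₀ ∧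
      ∀ χ : L.Substructure M → Fin c,
        ∃ B' : L.Substructure M, B' ≤ C₀ ∧ Nonempty (B' ≃[L] B₀) ∧
          ∃ color : Fin c, ∀ A' : L.Substructure M,
            A' ≤ B' → Nonempty (A' ≃[L] A₀) → χ A' = color

/-- The automorphism group of `M`, with composition as the group operation. -/
instance autGroup : Group (M ≃[L] M) where
  mul f g := f.comp g
  one := Equiv.refl L M
  inv := Equiv.symm
  mul_assoc f g h := (Equiv.comp_assoc h g f).symm
  one_mul _ := rfl
  mul_one _ := rfl
  inv_mul_cancel f := by
    ext x
    exact f.symm_apply_apply x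

/-- The topology of pointwise convergence on the automorphism group of `M`
(`M` discrete). -/
def autTopology : TopologicalSpace (M ≃[L] M) :=
  TopologicalSpace.induced (fun (f : M ≃[L] M) => (f : M → M))
    (@Pi.topologicalSpace M (fun _ => M) (fun _ => ⊥))

end FirstOrder.Language

open FirstOrder

/-!
Let `G = Aut(M)` act continuously on a compact space `K`. A finite linear order has no nontrivial
automorphism, so the setwise stabilizer of a finite substructure `A` fixes `A` pointwise; these
stabilizers form a neighbourhood basis of the identity, and by ultrahomogeneity their cosets
correspond to the copies of `A` inside `M`. For `A` large enough, the point `g⁻¹ • x₀` of `K`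
depends, up to a prescribed error, only on the copy `g • A`, so covering `K` by finitely many small
sets colors the copies of `A`. Given finitely many `f ∈ G`, the Ramsey property and
ultrahomogeneity provide `g` such that all the copies `(g * f⁻¹) • A`, as well as `g • A`, have the
same color. Hence every `f` moves `g⁻¹ • x₀` only slightly, and compactness turns such almost fixed
points into a fixed point.
-/

namespace KPT

open Filter MulAction
open scoped SetRel Topology Uniformity

section Dynamics

variable {G K : Type*}

theorem exists_forall_smul_eq_of_approx [SMul G K] [UniformSpace K] [CompactSpace K] [T0Space K]
    [ContinuousConstSMul G K]
    (h : ∀ U ∈ 𝓤 K, ∀ F : Finset G, ∃ x : K, ∀ g ∈ F, (g • x, x) ∈ U) :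
    ∃ x : K, ∀ g : G, g • x = x := by
  classical
  let ι := G × {U : Set (K × K) // U ∈ 𝓤 K ∧ IsClosed U}
  let almostFixed (i : ι) : Set K := {x | (i.1 • x, x) ∈ i.2.1}
  have isClosed_almostFixed (i : ι) : IsClosed (almostFixed i) :=
    i.2.2.2.preimage ((continuous_const_smul i.1).prodMk continuous_id)
  have finite_inter_nonempty (s : Finset ι) : (⋂ i ∈ s, almostFixed i).Nonempty := by
    have hs : (⋂ i ∈ s, i.2.1) ∈ 𝓤 K := (biInter_finset_mem s).2 fun i _ => i.2.2.1
    obtain ⟨x, hx⟩ := h _ hs (s.image Prod.fst)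
    exact ⟨x, Set.mem_iInter₂.2 fun i hi =>
      Set.mem_iInter₂.1 (hx i.1 (Finset.mem_image_of_mem _ hi)) i hi⟩
  obtain ⟨x, hx⟩ := CompactSpace.iInter_nonempty isClosed_almostFixed finite_inter_nonempty
  exact ⟨x, fun g => eq_of_uniformity_basis uniformity_hasBasis_closed fun {V} hV =>
    Set.mem_iInter.1 hx (g, ⟨V, hV⟩)⟩

theorem eventually_forall_smul_mem_uniformity [Monoid G] [TopologicalSpace G] [MulAction G K]
    [UniformSpace K] [CompactSpace K] [ContinuousSMul G K] {V : Set (K × K)} (hV : V ∈ 𝓤 K) :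
    ∀ᶠ g in 𝓝 (1 : G), ∀ x : K, (g • x, x) ∈ V := by
  have near_one (x : K) : ∀ᶠ p : G × K in 𝓝 (1, x), (p.1 • p.2, p.2) ∈ V := by
    have hcont : Continuous fun p : G × K => (p.1 • p.2, p.2) := by fun_prop
    refine hcont.continuousAt.eventually_mem ?_
    simpa only [one_smul] using nhds_le_uniformity x hV
  simpa only [Set.mem_univ, true_imp_iff] using
    isCompact_univ.eventually_forall_of_forall_eventually fun x _ => near_one x

theorem exists_fin_cover_mem_uniformity [UniformSpace K] [CompactSpace K] {V : Set (K × K)}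
    (hV : V ∈ 𝓤 K) :
    ∃ (n : ℕ) (p : Fin n → K) (idx : K → Fin n), ∀ x, (x, p (idx x)) ∈ V := by
  obtain ⟨t, ht, hcover⟩ := isCompact_univ.totallyBounded V hV
  obtain ⟨n, p, -, rfl⟩ := ht.fin_param
  have (x : K) : ∃ i, (x, p i) ∈ V := by
    simpa using hcover (Set.mem_univ x)
  choose idx hidx using this
  exact ⟨n, p, idx, hidx⟩

end Dynamics

section Colorings

variable {G K : Type*} [Group G] {H : Subgroup G}

/-- `FiniteColoringProperty H` is the combinatorial content of extreme amenability for the subgroup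
`H` of `G`: every coloring of `G ⧸ H` with finitely many colors is constant on some translate of
any given finite set of cosets. -/
def FiniteColoringProperty (H : Subgroup G) : Prop :=
  ∀ (c : ℕ) (χ : G ⧸ H → Fin c) (F : Finset (G ⧸ H)), ∃ (g : G) (color : Fin c),
    ∀ q ∈ F, χ (g • q) = color

variable [MulAction G K]

/-- Orbits are parametrized by inverses so that a left coset `g H` gives the points
`h⁻¹ • g⁻¹ • x₀`, which are uniformly close to each other. -/
theorem exists_coloring_approx_orbit [UniformSpace K] [CompactSpace K] {V : Set (K × K)}
    (hV : V ∈ 𝓤 K) (hH : ∀ h ∈ H, ∀ x : K, (h • x, x) ∈ V) (x₀ : K) :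
    ∃ (c : ℕ) (p : Fin c → K) (χ : G ⧸ H → Fin c), ∀ g : G, (g⁻¹ • x₀, p (χ g)) ∈ V ○ V := by
  obtain ⟨c, p, idx, hidx⟩ := exists_fin_cover_mem_uniformity hV
  refine ⟨c, p, fun q => idx (q.out⁻¹ • x₀), fun g => ⟨(g : G ⧸ H).out⁻¹ • x₀, ?_, hidx _⟩⟩
  obtain ⟨h, hout⟩ := QuotientGroup.mk_out_eq_mul H g
  have hg : g⁻¹ • x₀ = (h : G) • (g : G ⧸ H).out⁻¹ • x₀ := by
    rw [hout, smul_smul, mul_inv_rev, mul_inv_cancel_left]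
  rw [hg]
  exact hH h h.2 _

variable [TopologicalSpace G]

theorem exists_smul_approx_of_finiteColoringProperty
    (hG : ∀ N ∈ 𝓝 (1 : G), ∃ H : Subgroup G, (H : Set G) ⊆ N ∧ FiniteColoringProperty H)
    [UniformSpace K] [CompactSpace K] [ContinuousSMul G K] (x₀ : K)
    {U : Set (K × K)} (hU : U ∈ 𝓤 K) (F : Finset G) :
    ∃ x : K, ∀ f ∈ F, (f • x, x) ∈ U := by
  classical
  obtain ⟨W, hW, hWsymm, hWU⟩ := comp_symm_mem_uniformity_sets hU
  obtain ⟨V, hV, hVW⟩ := comp_mem_uniformity_sets hW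
  obtain ⟨H, hHV, hH⟩ := hG _ (eventually_forall_smul_mem_uniformity hV)
  obtain ⟨c, p, χ, hχ⟩ := exists_coloring_approx_orbit hV hHV x₀
  obtain ⟨g, color, hg⟩ := hH c χ ((insert 1 F).image fun f => ((f⁻¹ : G) : G ⧸ H))
  have near_color (f : G) (hf : f ∈ insert 1 F) : (f • g⁻¹ • x₀, p color) ∈ W := by
    have hcolor : χ ((g * f⁻¹ : G) : G ⧸ H) = color := hg _ (Finset.mem_image_of_mem _ hf)
    have := hVW (hχ (g * f⁻¹))
    rwa [hcolor, mul_inv_rev, inv_inv, mul_smul] at this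
  refine ⟨g⁻¹ • x₀, fun f hf => hWU ⟨p color, near_color f (Finset.mem_insert_of_mem hf), ?_⟩⟩
  simpa only [one_smul] using hWsymm.symm _ _ (near_color 1 (Finset.mem_insert_self 1 F))

theorem exists_forall_smul_eq_of_finiteColoringProperty
    (hG : ∀ N ∈ 𝓝 (1 : G), ∃ H : Subgroup G, (H : Set G) ⊆ N ∧ FiniteColoringProperty H)
    [TopologicalSpace K] [CompactSpace K] [T2Space K] [Nonempty K] [ContinuousSMul G K] :
    ∃ x : K, ∀ g : G, g • x = x := by
  let _ : UniformSpace K := uniformSpaceOfCompactR1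
  obtain ⟨x₀⟩ := ‹Nonempty K›
  exact exists_forall_smul_eq_of_approx fun _ hU F =>
    exists_smul_approx_of_finiteColoringProperty hG x₀ hU F

end Colorings

section Rigidity

universe u v

theorem relMap_pair_iff {L : FirstOrder.Language.{u, v}} {M N : Type*} [L.Structure M]
    [L.Structure N] (f : N ↪[L] M) (r : L.Relations 2) (a b : N) :
    Language.Structure.RelMap r ![f a, f b] ↔ Language.Structure.RelMap r ![a, b] := by
  have hcomp : ![f a, f b] = f ∘ ![a, b] := funext (Fin.forall_fin_two.2 ⟨rfl, rfl⟩)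
  rw [hcomp, f.map_rel]

variable {L : FirstOrder.Language.{0, 0}} {M : Type} [L.Structure M]

theorem linearlyOrderedStruct_of_embedding {N : Type} [L.Structure N] (f : N ↪[L] M)
    (hM : L.LinearlyOrderedStruct M) : L.LinearlyOrderedStruct N := by
  obtain ⟨r, hr⟩ := hM
  let relEmbedding : (fun a b : N => Language.Structure.RelMap r ![a, b]) ↪r
      (fun a b : M => Language.Structure.RelMap r ![a, b]) :=
    ⟨f.toEmbedding, relMap_pair_iff f r _ _⟩
  exact ⟨r, relEmbedding.isLinearOrder⟩

theorem subsingleton_equiv_of_linearlyOrdered [Finite M] (hM : L.LinearlyOrderedStruct M) :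
    Subsingleton (M ≃[L] M) := by
  classical
  obtain ⟨r, hr⟩ := hM
  let _ : LinearOrder M :=
    { le := fun a b => Language.Structure.RelMap r ![a, b]
      le_refl := hr.refl
      le_trans := hr.trans
      le_antisymm := hr.antisymm
      le_total := hr.total
      toDecidableLE := Classical.decRel _ }
  let toOrderIso (σ : M ≃[L] M) : M ≃o M := ⟨σ.toEquiv, relMap_pair_iff σ.toEmbedding r _ _⟩
  refine ⟨fun σ τ => Language.Equiv.ext fun x => ?_⟩
  exact DFunLike.congr_fun (Subsingleton.elim (toOrderIso σ) (toOrderIso τ)) x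

end Rigidity

section Automorphisms

variable {L : FirstOrder.Language.{0, 0}} {M : Type} [L.Structure M]

/-- The tautological action, through which `fixingSubgroup` denotes the pointwise stabilizers. -/
instance autMulAction : MulAction (M ≃[L] M) M where
  smul g x := g x
  one_smul _ := rfl
  mul_smul _ _ _ := rfl

/-- The action by images. Its stabilizers are the setwise stabilizers and, if `M` is
ultrahomogeneous, the orbit of a finite substructure `A` consists of all copies of `A` in `M`. -/
instance substructureMulAction : MulAction (M ≃[L] M) (L.Substructure M) where
  smul g A := A.map g.toHom
  one_smul A := A.map_id
  mul_smul g h A := (A.map_map g.toHom h.toHom).symm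

theorem exists_equiv_of_smul_eq {A B : L.Substructure M} {g : M ≃[L] M} (h : g • A = B) :
    ∃ σ : A ≃[L] B, ∀ x : A, (σ x : M) = g x := by
  subst h
  exact ⟨g.toEmbedding.substructureEquivMap A, fun _ => rfl⟩

theorem smul_eq_of_forall_apply_eq {A B : L.Substructure M} {g : M ≃[L] M} (σ : A ≃[L] B)
    (h : ∀ x : A, g x = (σ x : M)) : g • A = B := by
  ext y
  constructor
  · rintro ⟨x, hx, rfl⟩
    exact (h ⟨x, hx⟩).symm ▸ (σ ⟨x, hx⟩).2
  · intro hy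
    refine ⟨σ.symm ⟨y, hy⟩, (σ.symm ⟨y, hy⟩).2, (h _).trans ?_⟩
    rw [Language.Equiv.apply_symm_apply]

theorem stabilizer_le_fixingSubgroup (A : L.Substructure M) [Subsingleton (A ≃[L] A)] :
    stabilizer (M ≃[L] M) A ≤ fixingSubgroup (M ≃[L] M) (A : Set M) := by
  intro g hg
  obtain ⟨σ, hσ⟩ := exists_equiv_of_smul_eq (mem_stabilizer_iff.1 hg)
  rw [mem_fixingSubgroup_iff]
  intro x hx
  have hσ_refl : σ = Language.Equiv.refl L A := Subsingleton.elim _ _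
  exact (hσ ⟨x, hx⟩).symm.trans (by rw [hσ_refl]; rfl)

theorem hasBasis_nhds_one_fixingSubgroup :
    letI : TopologicalSpace (M ≃[L] M) := L.autTopology M
    (𝓝 (1 : M ≃[L] M)).HasBasis Set.Finite
      fun I : Set M => (fixingSubgroup (M ≃[L] M) I : Set (M ≃[L] M)) := by
  let _ : TopologicalSpace M := ⊥
  have : DiscreteTopology M := ⟨rfl⟩
  let _ : TopologicalSpace (M ≃[L] M) := L.autTopology M
  have hnhds : 𝓝 (1 : M ≃[L] M) =
      comap (fun g : M ≃[L] M => (g : M → M)) (pi fun x : M => pure x) := by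
    refine (nhds_induced _ _).trans ?_
    simp only [nhds_pi, nhds_discrete]
    rfl
  have hbasis := (hasBasis_pi fun x : M => hasBasis_pure x).comap
    fun g : M ≃[L] M => (g : M → M)
  rw [hnhds]
  refine hbasis.to_hasBasis (fun ⟨I, _⟩ hI => ⟨I, hI.1, fun g hg x hx => ?_⟩)
    fun I hI => ⟨(I, fun _ => ()), ⟨hI, fun _ _ => trivial⟩, fun g hg => ?_⟩
  · exact (mem_fixingSubgroup_iff _).1 hg x hx
  · exact (mem_fixingSubgroup_iff _).2 hg

theorem exists_monochromatic_smul (hU : L.UltrahomogeneousFin M)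
    (hR : L.FiniteSubstructureRamsey M) {c : ℕ} (hc : 0 < c) (A B : L.Substructure M) [Finite A]
    [Finite B] (χ : L.Substructure M → Fin c) :
    ∃ (g : M ≃[L] M) (color : Fin c), ∀ A' ≤ g • B, Nonempty (A' ≃[L] A) → χ A' = color := by
  obtain ⟨_, -, hC⟩ := hR c hc A B ‹_› ‹_›
  obtain ⟨B', -, ⟨φ⟩, color, hcolor⟩ := hC χ
  obtain ⟨g, hg⟩ := hU B B' ‹_› (Finite.of_equiv _ φ.symm.toEquiv) φ.symm
  exact ⟨g, color, (smul_eq_of_forall_apply_eq φ.symm hg).symm ▸ hcolor⟩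

theorem finite_finset_sup (hLF : L.LocallyFiniteStruct M) {ι : Type*} (s : Finset ι)
    (A : ι → L.Substructure M) (hA : ∀ i ∈ s, Finite (A i)) : Finite (s.sup A : L.Substructure M) :=
  hLF _ <| Finset.sup_induction Language.Substructure.fg_bot (fun _ h₁ _ h₂ => h₁.sup h₂)
    fun i hi => have := hA i hi; Language.Substructure.FG.of_finite

theorem finiteColoringProperty_stabilizer (hU : L.UltrahomogeneousFin M)
    (hLF : L.LocallyFiniteStruct M) (hR : L.FiniteSubstructureRamsey M) (A : L.Substructure M)
    [Finite A] : FiniteColoringProperty (stabilizer (M ≃[L] M) A) := by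
  intro c χ F
  let copy := ofQuotientStabilizer (M ≃[L] M) A
  have copy_equiv (q) : Nonempty (copy q ≃[L] A) := by
    obtain ⟨g, hg⟩ := ofQuotientStabilizer_mem_orbit (M ≃[L] M) A q
    obtain ⟨σ, -⟩ := exists_equiv_of_smul_eq hg
    exact ⟨σ.symm⟩
  let B : L.Substructure M := F.sup copy
  have : Finite B := finite_finset_sup hLF F copy fun q _ =>
    let ⟨σ⟩ := copy_equiv q
    Finite.of_equiv _ σ.symm.toEquiv
  let χ' : L.Substructure M → Fin c := Function.extend copy χ fun _ => χ (1 : M ≃[L] M)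
  obtain ⟨g, color, hg⟩ := exists_monochromatic_smul hU hR (χ (1 : M ≃[L] M)).pos A B χ'
  refine ⟨g, color, fun q hq => ?_⟩
  have copy_le : copy (g • q) ≤ g • B := by
    rw [show copy (g • q) = g • copy q from ofQuotientStabilizer_smul ..]
    exact Language.Substructure.monotone_map (Finset.le_sup hq)
  rw [← hg _ copy_le (copy_equiv _)]
  exact ((injective_ofQuotientStabilizer (M ≃[L] M) A).extend_apply χ _ _).symm

end Automorphisms

end KPT

open KPT in
theorem kpt_extremelyAmenable_general (L : FirstOrder.Language.{0, 0}) (M : Type) [L.Structure M]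
    (hU : L.UltrahomogeneousFin M) (hLF : L.LocallyFiniteStruct M)
    (hRigid : ∀ A : L.Substructure M, Finite A → Subsingleton (A ≃[L] A))
    (hR : L.FiniteSubstructureRamsey M) :
    letI : TopologicalSpace (M ≃[L] M) := L.autTopology M
    ExtremelyAmenable (M ≃[L] M) := by
  let _ : TopologicalSpace (M ≃[L] M) := L.autTopology M
  intro K _ _ _ _ _ _
  refine exists_forall_smul_eq_of_finiteColoringProperty fun N hN => ?_
  obtain ⟨I, hI, hIN⟩ := hasBasis_nhds_one_fixingSubgroup.mem_iff.1 hN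
  let A := Language.Substructure.closure L I
  have : Finite A := hLF A (Language.Substructure.fg_closure hI)
  have := hRigid A this
  refine ⟨MulAction.stabilizer _ A, ?_, finiteColoringProperty_stabilizer hU hLF hR A⟩
  calc (MulAction.stabilizer (M ≃[L] M) A : Set (M ≃[L] M))
    _ ⊆ fixingSubgroup (M ≃[L] M) (A : Set M) := stabilizer_le_fixingSubgroup A
    _ ⊆ fixingSubgroup (M ≃[L] M) I :=
      fixingSubgroup_antitone _ _ Language.Substructure.subset_closure
    _ ⊆ N := hIN

/-- **Kechris–Pestov–Todorcevic (one direction).** If `A` is a countable, ultrahomogeneous,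
locally finite, linearly ordered structure whose class of finite substructures has the
Ramsey property, then `Aut(A)` with the topology of pointwise convergence is extremely
amenable. -/
theorem kpt_extremelyAmenable (L : FirstOrder.Language.{0, 0}) (M : Type) [L.Structure M] [Countable M]
    (hU : L.UltrahomogeneousFin M) (hLF : L.LocallyFiniteStruct M)
    (hLin : L.LinearlyOrderedStruct M) (hR : L.FiniteSubstructureRamsey M) :
    letI : TopologicalSpace (M ≃[L] M) := L.autTopology M
    ExtremelyAmenable (M ≃[L] M) := by
  refine kpt_extremelyAmenable_general L M hU hLF (fun A _ => ?_) hR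
  exact KPT.subsingleton_equiv_of_linearlyOrdered
    (KPT.linearlyOrderedStruct_of_embedding A.subtype hLin)
end

section
/- Let G be a non-Archimedean, second countable, completely metrizable topological group that is extremely amenable. Then there exist a countable first-order language L and a countable L-structure A that is ultrahomogeneous, locally finite, and linearly ordered, such that the class of finite substructures of A has the Ramsey property and G is isomorphic as a topological group to the automorphism group Aut(A) equipped with the topology of pointwise convergence (A discrete) and composition as the group operation. -/
open FirstOrder

open FirstOrder

/-!
Let `V` run over a countable basis of open subgroups of `G`, and let `M` be the disjoint union of
the coset spaces `G ⧸ V`: a countable discrete set on which `G` acts, and the topology of `G` is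
that of pointwise convergence on `M`. Extreme amenability, applied to the compact space of linear
orders on `M`, gives a `G`-invariant linear order. The structure on `M` consists of this order and
of one relation symbol for each orbit of `G` on tuples. An isomorphism between finite substructures
maps an enumeration of its domain into the same orbit, hence is induced by an element of `G`; this
is ultrahomogeneity, and it makes the image of `G` dense in the automorphism group. A completely
metrizable dense subgroup is everything, because two dense `Gδ` cosets of it would meet.

For the Ramsey property, the embeddings of a finite substructure `A` into `M` form a single orbit
of `G`. Were some coloring without a translate of `B` on which it is constant, then the colorings
of this kind would form a nonempty closed invariant set, which would contain an invariant coloring;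
but an invariant coloring is constant on the orbit. By compactness finitely many translates of `B`
suffice for all colorings.
-/

universe u v u' v' w

section Topology

open Topology Filter Set Pointwise

-- A point is in the range exactly if it has neighborhoods with preimages of arbitrarily small
-- diameter: by completeness these preimages shrink to a point, which `f` maps to the given one.
theorem isGδ_range_of_isDenseEmbedding {X Y : Type*} [TopologicalSpace X]
    [TopologicalSpace.IsCompletelyMetrizableSpace X] [TopologicalSpace Y] [T2Space Y] {f : X → Y}
    (hf : IsDenseEmbedding f) : IsGδ (range f) := by
  let := TopologicalSpace.upgradeIsCompletelyMetrizable X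
  let U : ℕ → Set Y := fun n =>
    ⋃₀ {V | IsOpen V ∧ ∀ x ∈ f ⁻¹' V, ∀ y ∈ f ⁻¹' V, dist x y < 1 / (n + 1 : ℝ)}
  have range_eq : range f = ⋂ n, U n := by
    refine Subset.antisymm ?_ fun y hy => ?_
    · rintro _ ⟨x, rfl⟩
      refine mem_iInter.2 fun n => ?_
      obtain ⟨V, V_open, V_eq⟩ := hf.isInducing.isOpen_iff.1
        (Metric.isOpen_ball (x := x) (ε := 1 / (n + 1 : ℝ) / 2))
      refine ⟨V, ⟨V_open, fun a ha b hb => ?_⟩, ?_⟩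
      · rw [V_eq, Metric.mem_ball] at ha hb
        linarith [dist_triangle_right a b x]
      · rw [← mem_preimage, V_eq]
        exact Metric.mem_ball_self (by positivity)
    · have comap_neBot := hf.comap_nhds_neBot y
      have cauchy_comap : Cauchy (comap f (𝓝 y)) := by
        refine Metric.cauchy_iff.2 ⟨comap_neBot, fun ε hε => ?_⟩
        obtain ⟨n, hn⟩ := exists_nat_one_div_lt hε
        obtain ⟨V, ⟨V_open, hV⟩, hyV⟩ := mem_iInter.1 hy n
        exact ⟨f ⁻¹' V, preimage_mem_comap (V_open.mem_nhds hyV),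
          fun a ha b hb => (hV a ha b hb).trans hn⟩
      obtain ⟨x, hx⟩ := CompleteSpace.complete cauchy_comap
      exact ⟨x, tendsto_nhds_unique ((hf.continuous.tendsto x).mono_left hx) tendsto_comap⟩
  rw [range_eq]
  exact .iInter_of_isOpen fun n => isOpen_sUnion fun V hV => hV.1

theorem dense_preimage_of_isDenseInducing {X Y : Type*} [TopologicalSpace X] [TopologicalSpace Y]
    {f : X → Y} (hf : IsDenseInducing f) {U : Set Y} (U_open : IsOpen U) (U_dense : Dense U) :
    Dense (f ⁻¹' U) := by
  rw [← hf.dense_image, image_preimage_eq_inter_range]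
  exact U_dense.inter_of_isOpen_left hf.dense U_open

-- The Baire category theorem is applied in `G`: the preimage of the coset `k • range φ` is a dense
-- `Gδ` set, hence nonempty, so that the coset meets `range φ`.
theorem surjective_of_isDenseEmbedding {G K : Type*} [Group G] [TopologicalSpace G]
    [TopologicalSpace.IsCompletelyMetrizableSpace G] [Group K] [TopologicalSpace K] [T2Space K]
    [ContinuousConstSMul K K] (φ : G →* K) (hφ : IsDenseEmbedding φ) : Function.Surjective φ := by
  intro k
  obtain ⟨U, U_open, range_eq⟩ := (isGδ_range_of_isDenseEmbedding hφ).eq_iInter_nat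
  have open_translate (n : ℕ) : IsOpen (k • U n) := (U_open n).smul k
  have dense_translate (n : ℕ) : Dense (k • U n) :=
    (hφ.dense.mono (range_eq.trans_subset (iInter_subset U n))).smul k
  obtain ⟨g, hg⟩ := (dense_iInter_of_isOpen (fun n => (open_translate n).preimage hφ.continuous)
    fun n => dense_preimage_of_isDenseInducing hφ.isDenseInducing (open_translate n)
      (dense_translate n)).nonempty
  obtain ⟨h, hh⟩ : k⁻¹ * φ g ∈ range φ := by
    rw [range_eq, mem_iInter]
    exact fun n => mem_smul_set_iff_inv_smul_mem.1 (mem_iInter.1 hg n)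
  exact ⟨g * h⁻¹, by simp [hh]⟩

theorem mem_closure_pi_discrete_iff {ι α : Type*} [TopologicalSpace α] [DiscreteTopology α]
    {S : Set (ι → α)} {f : ι → α} :
    f ∈ closure S ↔ ∀ F : Finset ι, ∃ g ∈ S, ∀ i ∈ F, g i = f i := by
  refine ⟨fun hf F => ?_, fun hf => mem_closure_iff.2 fun U hU hfU => ?_⟩
  · have isOpen_cylinder : IsOpen ((F : Set ι).pi fun i => {f i}) :=
      isOpen_set_pi F.finite_toSet fun _ _ => isOpen_discrete _
    obtain ⟨g, hgF, hgS⟩ := mem_closure_iff.1 hf _ isOpen_cylinder fun _ _ => rfl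
    exact ⟨g, hgS, hgF⟩
  · obtain ⟨F, V, hV, hVU⟩ := isOpen_pi_iff.1 hU f hfU
    obtain ⟨g, hgS, hgF⟩ := hf F
    exact ⟨g, hVU fun i hi => hgF i hi ▸ (hV i hi).2, hgS⟩

end Topology

section PermutationRepresentation

open Topology Filter Set

theorem continuousSMul_of_discreteTopology {G X : Type*} [TopologicalSpace G]
    [TopologicalSpace X] [DiscreteTopology X] [SMul G X]
    (h : Continuous fun (g : G) (x : X) => g • x) : ContinuousSMul G X :=
  ⟨continuous_prod_of_discrete_right.2 fun x => (continuous_apply x).comp h⟩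

variable {G : Type*} [Group G] [TopologicalSpace G]

theorem isInducing_smul_sigma_quotient [IsTopologicalGroup G] {ι : Type*} {V : ι → OpenSubgroup G}
    (hV : (𝓝 (1 : G)).HasBasis (fun _ => True) fun i => (V i : Set G)) :
    IsInducing fun (g : G) (x : Σ i, G ⧸ (V i).toSubgroup) => g • x := by
  have (i : ι) : DiscreteTopology (G ⧸ (V i).toSubgroup) :=
    QuotientGroup.discreteTopology (V i).isOpen
  have continuous_action : Continuous fun (g : G) (x : Σ i, G ⧸ (V i).toSubgroup) => g • x :=
    continuous_pi fun x => continuous_sigmaMk.comp (continuous_id.smul continuous_const)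
  refine isInducing_iff_nhds.2 fun g => le_antisymm continuous_action.continuousAt.le_comap ?_
  rw [← map_mul_left_nhds_one g]
  refine (hV.map _).ge_iff.2 fun i _ => ?_
  let coset : Σ i, G ⧸ (V i).toSubgroup := ⟨i, (1 : G)⟩
  refine mem_comap.2 ⟨{f | f coset = g • coset}, ?_, fun h hh => ?_⟩
  · exact (continuous_apply coset).continuousAt.preimage_mem_nhds
      ((isOpen_discrete {g • coset}).mem_nhds rfl)
  · have coset_eq : ((h * 1 : G) : G ⧸ (V i).toSubgroup) = (g * 1 : G) :=
      eq_of_heq (Sigma.ext_iff.1 hh).2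
    rw [mul_one, mul_one, eq_comm, QuotientGroup.eq] at coset_eq
    exact ⟨g⁻¹ * h, coset_eq, mul_inv_cancel_left g h⟩

theorem countable_quotient_openSubgroup [ContinuousMul G] [TopologicalSpace.SeparableSpace G]
    (V : OpenSubgroup G) : Countable (G ⧸ V.toSubgroup) := by
  have : DiscreteTopology (G ⧸ V.toSubgroup) := QuotientGroup.discreteTopology V.isOpen
  exact TopologicalSpace.separableSpace_iff_countable.1
    (QuotientGroup.isQuotientMap_mk (N := V.toSubgroup)).separableSpace

theorem exists_openSubgroup_seq_hasBasis_nhds_one [NonarchimedeanGroup G]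
    [(𝓝 (1 : G)).IsCountablyGenerated] :
    ∃ V : ℕ → OpenSubgroup G,
      (𝓝 (1 : G)).HasBasis (fun _ => True) fun n => (V n : Set G) := by
  obtain ⟨U, hU⟩ := (𝓝 (1 : G)).exists_antitone_basis
  choose V hV using fun n => NonarchimedeanGroup.is_nonarchimedean (U n) (hU.mem n)
  exact ⟨V, hU.toHasBasis.to_hasBasis (fun n _ => ⟨n, trivial, hV n⟩)
    fun n _ => (hU.mem_iff.1 (V n).mem_nhds_one).imp fun m hm => ⟨trivial, hm⟩⟩

theorem exists_countable_discrete_isInducing_smul (G : Type u) [Group G] [TopologicalSpace G]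
    [NonarchimedeanGroup G] [SecondCountableTopology G] :
    ∃ (M : Type u) (_ : TopologicalSpace M) (_ : MulAction G M),
      DiscreteTopology M ∧ Countable M ∧ IsInducing fun (g : G) (x : M) => g • x := by
  obtain ⟨V, hV⟩ := exists_openSubgroup_seq_hasBasis_nhds_one (G := G)
  have (n : ℕ) : Countable (G ⧸ (V n).toSubgroup) := countable_quotient_openSubgroup (V n)
  have (n : ℕ) : DiscreteTopology (G ⧸ (V n).toSubgroup) :=
    QuotientGroup.discreteTopology (V n).isOpen
  exact ⟨Σ n, G ⧸ (V n).toSubgroup, inferInstance, inferInstance, inferInstance, inferInstance,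
    isInducing_smul_sigma_quotient hV⟩

end PermutationRepresentation

section LinearOrderIndicators

open Set

/-- The set of linear orders on `X`, as a subset of the compact space of colorings of `X × X` with
two colors: `χ` represents the relation `χ (a, b) = true`. -/
def linearOrderIndicators (X : Type*) : Set (X × X → Bool) :=
  {χ | IsLinearOrder X fun a b => χ (a, b) = true}

theorem isClosed_linearOrderIndicators (X : Type*) : IsClosed (linearOrderIndicators X) := by
  have isClopen_rel (p : X × X) : IsClopen {χ : X × X → Bool | χ p = true} :=
    (isClopen_discrete {true}).preimage (continuous_apply p)
  have eq_axioms : linearOrderIndicators X =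
      {χ | (∀ a, χ (a, a) = true) ∧
        (∀ a b c, χ (a, b) = true → χ (b, c) = true → χ (a, c) = true) ∧
        (∀ a b, χ (a, b) = true → χ (b, a) = true → a = b) ∧
        (∀ a b, χ (a, b) = true ∨ χ (b, a) = true)} := by
    ext χ
    exact ⟨fun h => ⟨h.refl, h.trans, h.antisymm, h.total⟩,
      fun ⟨hr, ht, ha, hl⟩ => { refl := hr, trans := ht, antisymm := ha, total := hl }⟩
  rw [eq_axioms]
  simp only [ofPred_and, ofPred_forall]
  refine .inter ?_ (.inter ?_ (.inter ?_ ?_))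
  · exact isClosed_iInter fun a => (isClopen_rel _).1
  · exact isClosed_iInter fun a => isClosed_iInter fun b => isClosed_iInter fun c =>
      isClosed_imp (isClopen_rel _).2 (isClosed_imp (isClopen_rel _).2 (isClopen_rel _).1)
  · exact isClosed_iInter fun a => isClosed_iInter fun b =>
      isClosed_imp (isClopen_rel _).2 (isClosed_imp (isClopen_rel _).2 isClosed_const)
  · exact isClosed_iInter fun a => isClosed_iInter fun b =>
      (isClopen_rel _).1.union (isClopen_rel _).1

theorem linearOrderIndicators_nonempty (X : Type*) : (linearOrderIndicators X).Nonempty := by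
  classical
  let := linearOrderOfSTO (WellOrderingRel (α := X))
  refine ⟨fun p => decide (p.1 ≤ p.2), ?_⟩
  simpa [linearOrderIndicators] using (inferInstance : IsLinearOrder X (· ≤ ·))

theorem comp_map_mem_linearOrderIndicators {X Y : Type*} {f : X → Y} (hf : f.Injective)
    {χ : Y × Y → Bool} (hχ : χ ∈ linearOrderIndicators Y) :
    (fun p => χ (p.map f f)) ∈ linearOrderIndicators X :=
  have : IsLinearOrder Y fun a b => χ (a, b) = true := hχ
  hf.isLinearOrder_onFun fun a b => χ (a, b) = true

end LinearOrderIndicators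

section ExtremeAmenability

open Topology Filter Set

attribute [local instance] arrowAction

theorem continuousSMul_arrowAction {G X F : Type*} [Group G] [TopologicalSpace G]
    [ContinuousInv G] [TopologicalSpace X] [DiscreteTopology X] [MulAction G X]
    [ContinuousSMul G X] [TopologicalSpace F] : ContinuousSMul G (X → F) where
  continuous_smul := by
    have continuous_eval : Continuous fun p : (X → F) × X => p.1 p.2 :=
      continuous_prod_of_discrete_right.2 continuous_apply
    exact continuous_pi fun x => continuous_eval.comp
      (continuous_snd.prodMk (continuous_fst.inv.smul continuous_const))

namespace ExtremelyAmenable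

variable {G : Type} [Group G] [TopologicalSpace G]

theorem exists_fixed_mem (hG : ExtremelyAmenable G) {K : Type} [TopologicalSpace K]
    [CompactSpace K] [T2Space K] [MulAction G K] [ContinuousSMul G K] {C : Set K}
    (C_closed : IsClosed C) (C_nonempty : C.Nonempty)
    (C_invariant : ∀ (g : G), ∀ x ∈ C, g • x ∈ C) : ∃ x ∈ C, ∀ g : G, g • x = x := by
  let S : SubMulAction G K := ⟨C, fun g _ => C_invariant g _⟩
  have : CompactSpace S := isCompact_iff_compactSpace.1 C_closed.isCompact
  have : Nonempty S := C_nonempty.to_subtype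
  obtain ⟨x, hx⟩ := hG S
  exact ⟨x, x.2, fun g => congrArg Subtype.val (hx g)⟩

variable [ContinuousInv G]

theorem exists_invariant_mem (hG : ExtremelyAmenable G) {X F : Type} [TopologicalSpace X]
    [DiscreteTopology X] [MulAction G X] [ContinuousSMul G X] [TopologicalSpace F]
    [CompactSpace F] [T2Space F] {C : Set (X → F)} (C_closed : IsClosed C)
    (C_nonempty : C.Nonempty) (C_invariant : ∀ (g : G), ∀ χ ∈ C, (fun x => χ (g • x)) ∈ C) :
    ∃ χ ∈ C, ∀ (g : G) (x : X), χ (g • x) = χ x := by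
  have := continuousSMul_arrowAction (G := G) (X := X) (F := F)
  obtain ⟨χ, hχC, hχ⟩ := hG.exists_fixed_mem C_closed C_nonempty fun g => C_invariant g⁻¹
  refine ⟨χ, hχC, fun g x => ?_⟩
  have hgx : χ (g⁻¹⁻¹ • x) = χ x := congrFun (hχ g⁻¹) x
  rwa [inv_inv] at hgx

theorem exists_invariant_linearOrder (hG : ExtremelyAmenable G) (X : Type) [TopologicalSpace X]
    [DiscreteTopology X] [MulAction G X] [ContinuousSMul G X] :
    ∃ r : X → X → Prop, IsLinearOrder X r ∧ ∀ (g : G) a b, r (g • a) (g • b) ↔ r a b := by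
  obtain ⟨χ, hχ, χ_invariant⟩ := hG.exists_invariant_mem (isClosed_linearOrderIndicators X)
    (linearOrderIndicators_nonempty X)
    fun g χ hχ => comp_map_mem_linearOrderIndicators (MulAction.injective g) hχ
  refine ⟨fun a b => χ (a, b) = true, hχ, fun g a b => ?_⟩
  simp only [← χ_invariant g (a, b), Prod.smul_mk]

theorem exists_finset_monochromatic (hG : ExtremelyAmenable G) {X κ : Type} [TopologicalSpace X]
    [DiscreteTopology X] [MulAction G X] [ContinuousSMul G X] [Finite κ] {x : X} {P : Set X}
    (P_finite : P.Finite) (P_orbit : P ⊆ MulAction.orbit G x) :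
    ∃ T : Finset G, ∀ χ : X → κ, ∃ g ∈ T, ∃ color, ∀ y ∈ P, χ (g • y) = color := by
  let : TopologicalSpace κ := ⊥
  have : DiscreteTopology κ := ⟨rfl⟩
  let monochromatic (g : G) : Set (X → κ) := {χ | ∃ color, ∀ y ∈ P, χ (g • y) = color}
  have monochromatic_open (g : G) : IsOpen (monochromatic g) := by
    simp only [monochromatic, ofPred_exists, ofPred_forall]
    refine isOpen_iUnion fun color => ?_
    exact P_finite.isOpen_biInter fun y _ =>
      (isOpen_discrete {color}).preimage (continuous_apply (A := fun _ : X => κ) (g • y))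
  have cover : univ ⊆ ⋃ g, monochromatic g := by
    rw [univ_subset_iff]
    by_contra not_cover
    have compl_invariant (g : G) (χ : X → κ) (hχ : χ ∈ (⋃ g, monochromatic g)ᶜ) :
        (fun y => χ (g • y)) ∈ (⋃ g, monochromatic g)ᶜ := by
      simp only [mem_compl_iff, mem_iUnion, not_exists] at hχ ⊢
      rintro h ⟨color, hcolor⟩
      exact hχ (g * h) ⟨color, fun y hy => (congrArg χ (mul_smul g h y)).trans (hcolor y hy)⟩
    obtain ⟨χ, hχ, χ_invariant⟩ := hG.exists_invariant_mem
      (isOpen_iUnion monochromatic_open).isClosed_compl (nonempty_compl.2 not_cover)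
      compl_invariant
    refine hχ (mem_iUnion.2 ⟨1, χ x, fun y hy => ?_⟩)
    obtain ⟨h, rfl⟩ := P_orbit hy
    rw [χ_invariant, χ_invariant]
  obtain ⟨T, hT⟩ := isCompact_univ.elim_finite_subcover _ monochromatic_open cover
  exact ⟨T, fun χ => by simpa [monochromatic] using hT (mem_univ χ)⟩

end ExtremelyAmenable

end ExtremeAmenability

section ActsByAutomorphisms

open Topology Set FirstOrder.Language FirstOrder.Language.Structure

/-- The action of `G` on the structure `M` is by automorphisms. -/
structure ActsByAutomorphisms (G : Type*) [Group G] (L : FirstOrder.Language.{u, v}) (M : Type*)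
    [MulAction G M] [L.Structure M] : Prop where
  funMap_smul (g : G) {n : ℕ} (f : L.Functions n) (v : Fin n → M) :
    funMap f (g • v) = g • funMap f v
  relMap_smul (g : G) {n : ℕ} (R : L.Relations n) (v : Fin n → M) :
    RelMap R (g • v) ↔ RelMap R v

/-- Every isomorphism between finite substructures of `M` is the restriction of the action of an
element of `G`: ultrahomogeneity with the extension taken in `G`. -/
def InducesFiniteIsomorphisms (G : Type*) [Group G] (L : FirstOrder.Language.{u, v}) (M : Type*)
    [MulAction G M] [L.Structure M] : Prop :=
  ∀ (S₁ S₂ : L.Substructure M), Finite S₁ →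
    ∀ φ : S₁ ≃[L] S₂, ∃ g : G, ∀ x : S₁, g • (x : M) = φ x

section Homogeneity

variable {G : Type*} [Group G] {L : FirstOrder.Language.{0, 0}} {M : Type} [MulAction G M]
  [L.Structure M]

/-- The homomorphism into the automorphism group of `M` that is given by an action by
automorphisms. -/
def ActsByAutomorphisms.toAut (hGM : ActsByAutomorphisms G L M) : G →* (M ≃[L] M) where
  toFun g :=
    { MulAction.toPerm g with
      map_fun' := fun f v => (hGM.funMap_smul g f v).symm
      map_rel' := fun R v => hGM.relMap_smul g R v }
  map_one' := by ext x; exact one_smul G x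
  map_mul' g h := by ext x; exact mul_smul g h x

theorem ActsByAutomorphisms.mem_map_toAut (hGM : ActsByAutomorphisms G L M) {g : G} {x : M}
    {B : L.Substructure M} : x ∈ B.map (hGM.toAut g).toHom ↔ g⁻¹ • x ∈ B :=
  mem_smul_set_iff_inv_smul_mem (A := (B : Set M))

theorem InducesFiniteIsomorphisms.ultrahomogeneousFin (hM : InducesFiniteIsomorphisms G L M)
    (hGM : ActsByAutomorphisms G L M) : L.UltrahomogeneousFin M := by
  intro S₁ S₂ hS₁ _ φ
  obtain ⟨g, hg⟩ := hM S₁ S₂ hS₁ φ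
  exact ⟨hGM.toAut g, hg⟩

theorem InducesFiniteIsomorphisms.exists_smul_eq_on_finset (hM : InducesFiniteIsomorphisms G L M)
    (hL : L.LocallyFiniteStruct M) (f : M ≃[L] M) (F : Finset M) :
    ∃ g : G, ∀ x ∈ F, g • x = f x := by
  let S := Substructure.closure L (F : Set M)
  obtain ⟨g, hg⟩ := hM S _ (hL S (Substructure.fg_closure F.finite_toSet))
    (f.toEmbedding.substructureEquivMap S)
  exact ⟨g, fun x hx => hg ⟨x, Substructure.subset_closure hx⟩⟩

theorem InducesFiniteIsomorphisms.exists_range_smul_eq (hM : InducesFiniteIsomorphisms G L M)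
    {A A' : L.Substructure M} [A_finite : Finite A] (φ : A ≃[L] A') :
    ∃ g : G, range (g • (Subtype.val : A → M)) = A' := by
  obtain ⟨g, hg⟩ := hM A A' A_finite φ
  have smul_val : g • (Subtype.val : A → M) = Subtype.val ∘ φ := funext hg
  exact ⟨g, by rw [smul_val, φ.surjective.range_comp]; exact Subtype.range_coe⟩

end Homogeneity

-- The coloring of the copies of `A` is pulled back along `range` to the tuples `A → M`, on which
-- `G` acts.
theorem ExtremelyAmenable.finiteSubstructureRamsey {G : Type} [Group G] [TopologicalSpace G]
    [ContinuousInv G] (hG : ExtremelyAmenable G) {L : FirstOrder.Language.{0, 0}} {M : Type}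
    [TopologicalSpace M] [DiscreteTopology M] [MulAction G M] [ContinuousSMul G M] [L.Structure M]
    (hL : L.LocallyFiniteStruct M) (hGM : ActsByAutomorphisms G L M)
    (hM : InducesFiniteIsomorphisms G L M) : L.FiniteSubstructureRamsey M := by
  intro c _ A B A_finite B_finite
  let P : Set (A → M) := {v | v ∈ MulAction.orbit G (Subtype.val : A → M) ∧ ∀ a, v a ∈ B}
  have P_finite : P.Finite :=
    (Finite.pi' fun _ => (B_finite : (B : Set M).Finite)).subset fun _ hv => hv.2
  obtain ⟨T, hT⟩ := hG.exists_finset_monochromatic (κ := Fin c) P_finite fun _ hv => hv.1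
  let translate (g : G) : L.Substructure M := B.map (hGM.toAut g).toHom
  have union_finite : (⋃ g ∈ T, (translate g : Set M)).Finite :=
    T.finite_toSet.biUnion fun _ _ => Set.Finite.image _ B_finite
  refine ⟨Substructure.closure L (⋃ g ∈ T, translate g),
    hL _ (Substructure.fg_closure union_finite), fun χ => ?_⟩
  obtain ⟨g, hgT, color, hcolor⟩ := hT fun v => χ (Substructure.closure L (range v))
  refine ⟨translate g, ?_, ⟨((hGM.toAut g).toEmbedding.substructureEquivMap B).symm⟩, color, ?_⟩
  · exact (subset_biUnion_of_mem (u := fun g => (translate g : Set M)) hgT).trans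
      Substructure.subset_closure
  · rintro A' hA' ⟨φ⟩
    obtain ⟨h, range_eq⟩ := hM.exists_range_smul_eq φ.symm
    have mem_P : g⁻¹ • h • (Subtype.val : A → M) ∈ P := by
      refine ⟨⟨g⁻¹ * h, mul_smul _ _ _⟩, fun a => hGM.mem_map_toAut.1 (hA' ?_)⟩
      exact range_eq.subset (mem_range_self a)
    simpa [range_eq] using hcolor _ mem_P

section AutTopology

variable {L : FirstOrder.Language.{0, 0}} {M : Type} [L.Structure M]

/-- The topology of pointwise convergence, as an instance in this section only. -/
local instance autTopologicalSpace : TopologicalSpace (M ≃[L] M) := L.autTopology M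

theorem isInducing_coe_aut [TopologicalSpace M] [DiscreteTopology M] :
    IsInducing fun f : M ≃[L] M => (f : M → M) := by
  refine ⟨?_⟩
  obtain rfl := ‹DiscreteTopology M›.eq_bot
  rfl

theorem t2Space_aut : T2Space (M ≃[L] M) := by
  let : TopologicalSpace M := ⊥
  have : DiscreteTopology M := ⟨rfl⟩
  exact .of_injective_continuous DFunLike.coe_injective isInducing_coe_aut.continuous

theorem continuousConstSMul_aut : ContinuousConstSMul (M ≃[L] M) (M ≃[L] M) where
  continuous_const_smul k := by
    let : TopologicalSpace M := ⊥
    have : DiscreteTopology M := ⟨rfl⟩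
    refine isInducing_coe_aut.continuous_iff.2 (continuous_pi fun x => ?_)
    exact (continuous_of_discreteTopology (f := k)).comp
      ((continuous_apply x).comp isInducing_coe_aut.continuous)

namespace ActsByAutomorphisms

variable {G : Type*} [Group G] [MulAction G M]

theorem isInducing_toAut [TopologicalSpace G] [TopologicalSpace M] [DiscreteTopology M]
    (hGM : ActsByAutomorphisms G L M) (hind : IsInducing fun (g : G) (x : M) => g • x) :
    IsInducing hGM.toAut :=
  isInducing_coe_aut.of_comp_iff.1 hind

theorem denseRange_toAut (hGM : ActsByAutomorphisms G L M) (hL : L.LocallyFiniteStruct M)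
    (hM : InducesFiniteIsomorphisms G L M) : DenseRange hGM.toAut := by
  let : TopologicalSpace M := ⊥
  have : DiscreteTopology M := ⟨rfl⟩
  refine isInducing_coe_aut.dense_iff.2 fun f => mem_closure_pi_discrete_iff.2 fun F => ?_
  obtain ⟨g, hg⟩ := hM.exists_smul_eq_on_finset hL f F
  exact ⟨_, ⟨_, ⟨g, rfl⟩, rfl⟩, hg⟩

theorem exists_continuous_mulEquiv [TopologicalSpace G]
    [TopologicalSpace.IsCompletelyMetrizableSpace G] [TopologicalSpace M] [DiscreteTopology M]
    (hGM : ActsByAutomorphisms G L M) (hL : L.LocallyFiniteStruct M)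
    (hM : InducesFiniteIsomorphisms G L M) (hind : IsInducing fun (g : G) (x : M) => g • x) :
    ∃ e : G ≃* (M ≃[L] M), Continuous e ∧ Continuous e.symm := by
  have := t2Space_aut (L := L) (M := M)
  have := continuousConstSMul_aut (L := L) (M := M)
  have inducing := hGM.isInducing_toAut hind
  have surjective := surjective_of_isDenseEmbedding hGM.toAut
    { inducing with dense := hGM.denseRange_toAut hL hM, injective := inducing.injective }
  let e := MulEquiv.ofBijective hGM.toAut ⟨inducing.injective, surjective⟩
  refine ⟨e, inducing.continuous, inducing.continuous_iff.2 ?_⟩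
  exact continuous_id.congr fun f => (e.apply_symm_apply f).symm

end ActsByAutomorphisms

end AutTopology

end ActsByAutomorphisms

section OrbitLanguage

open FirstOrder.Language FirstOrder.Language.Structure

/-- The relational language with one `n`-ary relation symbol for each orbit of `G` on `n`-tuples
of elements of `M`. -/
def orbitLanguage (G : Type*) (M : Type w) [Group G] [MulAction G M] :
    FirstOrder.Language.{0, w} where
  Functions _ := Empty
  Relations n := MulAction.orbitRel.Quotient G (Fin n → M)

instance isRelational_orbitLanguage (G M : Type*) [Group G] [MulAction G M] :
    (orbitLanguage G M).IsRelational :=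
  fun _ => inferInstanceAs (IsEmpty Empty)

/-- Each relation symbol of the orbit language is interpreted as the orbit that it names. -/
instance orbitStructure (G M : Type*) [Group G] [MulAction G M] :
    (orbitLanguage G M).Structure M where
  RelMap q v := Quotient.mk _ v = q

variable {G M : Type*} [Group G] [MulAction G M]

theorem relMap_orbit_iff {n : ℕ} {v w : Fin n → M} :
    RelMap (L := orbitLanguage G M) (Quotient.mk _ w) v ↔ v ∈ MulAction.orbit G w :=
  Quotient.eq.trans MulAction.orbitRel_apply

theorem actsByAutomorphisms_orbitLanguage : ActsByAutomorphisms G (orbitLanguage G M) M where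
  funMap_smul _ _ f := isEmptyElim f
  relMap_smul g _ q v :=
    have same_orbit : (Quotient.mk _ (g • v) : MulAction.orbitRel.Quotient G _) = Quotient.mk _ v :=
      Quotient.sound (MulAction.mem_orbit v g)
    iff_of_eq (congrArg (· = q) same_orbit)

theorem actsByAutomorphisms_order [LE M] [FirstOrder.Language.order.Structure M]
    [FirstOrder.Language.order.OrderedStructure M]
    (le_invariant : ∀ (g : G) (a b : M), g • a ≤ g • b ↔ a ≤ b) :
    ActsByAutomorphisms G FirstOrder.Language.order M where
  funMap_smul _ _ f := isEmptyElim f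
  relMap_smul g _ R v := by
    cases R
    exact (relMap_leSymb _).trans ((le_invariant g _ _).trans (relMap_leSymb _).symm)

theorem ActsByAutomorphisms.sum {L : FirstOrder.Language.{u, v}} {L' : FirstOrder.Language.{u', v'}}
    [L.Structure M] [L'.Structure M] (h : ActsByAutomorphisms G L M)
    (h' : ActsByAutomorphisms G L' M) : ActsByAutomorphisms G (L.sum L') M where
  funMap_smul g _ f v := by
    cases f with
    | inl f => exact h.funMap_smul g f v
    | inr f => exact h'.funMap_smul g f v
  relMap_smul g _ R v := by
    cases R with
    | inl R => exact h.relMap_smul g R v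
    | inr R => exact h'.relMap_smul g R v

theorem inducesFiniteIsomorphisms_orbitLanguage_sum (L : FirstOrder.Language.{u, v})
    [L.Structure M] : InducesFiniteIsomorphisms G ((orbitLanguage G M).sum L) M := by
  intro S₁ S₂ _ φ
  obtain ⟨n, ⟨e⟩⟩ := Finite.exists_equiv_fin S₁
  let enum : Fin n → M := fun i => e.symm i
  let orbit : ((orbitLanguage G M).sum L).Relations n := Sum.inl (Quotient.mk _ enum)
  have relMap_enum : RelMap orbit e.symm := rfl
  obtain ⟨g, hg⟩ : (fun i => (φ (e.symm i) : M)) ∈ MulAction.orbit G enum :=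
    relMap_orbit_iff.1 ((φ.map_rel orbit e.symm).2 relMap_enum)
  exact ⟨g, fun x => by simpa [enum] using congrFun hg (e x)⟩

theorem locallyFiniteStruct_of_isRelational (L : FirstOrder.Language.{0, 0}) [L.IsRelational]
    (M : Type) [L.Structure M] : L.LocallyFiniteStruct M :=
  fun _ => Substructure.FG.finite

instance orderedStructure_sum (L : FirstOrder.Language.{u, v}) [L.Structure M] [LE M]
    [FirstOrder.Language.order.Structure M] [FirstOrder.Language.order.OrderedStructure M] :
    (L.sum FirstOrder.Language.order).OrderedStructure M :=
  ⟨relMap_leSymb (L := FirstOrder.Language.order)⟩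

theorem linearlyOrderedStruct_of_isLinearOrder (L : FirstOrder.Language.{0, 0}) [L.IsOrdered]
    (M : Type) [LE M] [L.Structure M] [L.OrderedStructure M] [IsLinearOrder M (· ≤ ·)] :
    L.LinearlyOrderedStruct M :=
  ⟨leSymb, by simpa [relMap_leSymb]⟩

theorem countable_symbols_orbitLanguage [Countable M] :
    Countable (orbitLanguage G M).Symbols := by
  have (n : ℕ) : Countable ((orbitLanguage G M).Functions n) := inferInstanceAs (Countable Empty)
  have (n : ℕ) : Countable ((orbitLanguage G M).Relations n) :=
    inferInstanceAs (Countable (MulAction.orbitRel.Quotient G (Fin n → M)))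
  exact inferInstanceAs (Countable (_ ⊕ _))

theorem countable_symbols_sum {L : FirstOrder.Language.{u, v}} {L' : FirstOrder.Language.{u', v'}}
    (hL : Countable L.Symbols) (hL' : Countable L'.Symbols) : Countable (L.sum L').Symbols := by
  rw [← Cardinal.mk_le_aleph0_iff] at *
  exact card_sum.trans_le (Cardinal.add_le_aleph0.2
    ⟨Cardinal.lift_le_aleph0.2 hL, Cardinal.lift_le_aleph0.2 hL'⟩)

end OrbitLanguage

/-- **Kechris–Pestov–Todorcevic (the other direction).** If `G` is a non-Archimedean, second
countable, completely metrizable (i.e. Polish) topological group that is extremely amenable,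
then `G` is topologically isomorphic to the automorphism group (with the topology of
pointwise convergence) of a countable, ultrahomogeneous, locally finite, linearly ordered
structure in a countable language whose class of finite substructures has the Ramsey
property. -/
theorem kpt_reverse (G : Type) [Group G] [TopologicalSpace G] [NonarchimedeanGroup G]
    [PolishSpace G] (hEA : ExtremelyAmenable G) :
    ∃ (L : FirstOrder.Language.{0, 0}) (M : Type) (str : L.Structure M),
      Countable L.Symbols ∧ Countable M ∧
      (letI := str
       L.UltrahomogeneousFin M ∧ L.LocallyFiniteStruct M ∧ L.LinearlyOrderedStruct M ∧
         L.FiniteSubstructureRamsey M ∧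
         (letI : TopologicalSpace (M ≃[L] M) := L.autTopology M
          ∃ e : G ≃* (M ≃[L] M), Continuous e ∧ Continuous e.symm)) := by
  obtain ⟨M, _, _, _, M_countable, hind⟩ := exists_countable_discrete_isInducing_smul G
  have := continuousSMul_of_discreteTopology hind.continuous
  obtain ⟨r, _, r_invariant⟩ := hEA.exists_invariant_linearOrder M
  let : LE M := ⟨r⟩
  let := FirstOrder.Language.orderStructure M
  have : FirstOrder.Language.order.OrderedStructure M := ⟨fun _ => Iff.rfl⟩
  have automorphisms :=
    actsByAutomorphisms_orbitLanguage.sum (actsByAutomorphisms_order r_invariant)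
  have homogeneous := inducesFiniteIsomorphisms_orbitLanguage_sum (G := G) (M := M)
    FirstOrder.Language.order
  have locally_finite := locallyFiniteStruct_of_isRelational
    ((orbitLanguage G M).sum FirstOrder.Language.order) M
  exact ⟨(orbitLanguage G M).sum FirstOrder.Language.order, M, inferInstance,
    countable_symbols_sum countable_symbols_orbitLanguage inferInstance, M_countable,
    homogeneous.ultrahomogeneousFin automorphisms, locally_finite,
    linearlyOrderedStruct_of_isLinearOrder _ M,
    hEA.finiteSubstructureRamsey locally_finite automorphisms homogeneous,
    automorphisms.exists_continuous_mulEquiv locally_finite homogeneous hind⟩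
end

section
/- Given a positive integer c and two finite linearly ordered metric spaces A and B, there exists a finite linearly ordered metric space C such that for every coloring with c colors of the set of all subspaces of C that are order isometric to A, there exists a subspace B' of C order isometric to B such that all subspaces of B' order isometric to A have the same color. -/
/-- A finite linearly ordered metric space: a finite set equipped with a metric and a
linear order. -/
structure FinOrdMetricSpace where
  carrier : Type
  [met : MetricSpace carrier]
  [lin : LinearOrder carrier]
  [fin : Fintype carrier]

attribute [instance] FinOrdMetricSpace.met FinOrdMetricSpace.lin FinOrdMetricSpace.fin

instance : CoeSort FinOrdMetricSpace Type := ⟨FinOrdMetricSpace.carrier⟩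

/-- The subset `s` of `C`, with the induced metric and induced linear order, is *order
isometric* to `A`: there is a bijection from `A` onto `s` preserving the metric and the
linear order. -/
def IsOrderIsometricCopy (A : FinOrdMetricSpace) (C : FinOrdMetricSpace) (s : Set C) : Prop :=
  ∃ e : A ≃ s, (∀ x y : A, dist (e x : C) (e y : C) = dist x y) ∧
    (∀ x y : A, x ≤ y ↔ (e x : C) ≤ (e y : C))

/-!
Let `V` be a finite set of values containing `0` and the distances of `B` and closed under
truncated subtraction of distances. Order the `V`-valued `1`-Lipschitz functions on a space by the
largest element of the symmetric difference of their graphs. Every such function on `A` has a least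
extension along an embedding `A → B`, so restriction along the embedding is a rigid surjection from
the functions on `B` onto those on `A`. The dual Ramsey theorem yields a word `w` listing all
functions on `B` whose compositions with these restrictions get a single color. Evaluation of the
letters of `w` embeds `B` into the cube `V ^ n`: distance functions make it isometric, point masses
make it monotone. So `C = V ^ n` works.

The dual Ramsey theorem is the case of one letter in the Graham–Rothschild theorem, which is proved
by induction on the number of parameters. The induction step first makes the color of a word depend
only on its prefix before the first parameter, by the induction hypothesis, then only on the
position of the first parameter, by the Hales–Jewett theorem, and finally applies the pigeonhole
principle to the positions.
-/

open scoped NNReal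

universe u

/-- A *rigid surjection* between ordered sets: a surjection `f` whose fibers are ordered by their
least elements, that is, every value below `f x` is already taken at some point below `x`. -/
structure IsRigidSurj {X Y : Type*} [LT X] [LT Y] (f : X → Y) : Prop where
  surjective : Function.Surjective f
  exists_lt_apply_eq : ∀ ⦃x y⦄, y < f x → ∃ z < x, f z = y

namespace IsRigidSurj

variable {X Y Z : Type*}

theorem of_section [LT X] [LT Y] {f : X → Y} (s : Y → X) (hs : ∀ y, f (s y) = y)
    (hlt : ∀ x y, y < f x → s y < x) : IsRigidSurj f where
  surjective y := ⟨s y, hs y⟩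
  exists_lt_apply_eq x y hy := ⟨s y, hlt x y hy, hs y⟩

theorem id [LT X] : IsRigidSurj (id : X → X) :=
  of_section _root_.id (fun _ ↦ rfl) fun _ _ ↦ _root_.id

theorem comp [LT X] [LT Y] [LT Z] {g : Y → Z} {f : X → Y} (hg : IsRigidSurj g)
    (hf : IsRigidSurj f) : IsRigidSurj (g ∘ f) where
  surjective := hg.surjective.comp hf.surjective
  exists_lt_apply_eq x z hz := by
    obtain ⟨y, hy, rfl⟩ := hg.exists_lt_apply_eq hz
    obtain ⟨x', hx', rfl⟩ := hf.exists_lt_apply_eq hy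
    exact ⟨x', hx', rfl⟩

theorem orderIso [Preorder X] [Preorder Y] (e : X ≃o Y) : IsRigidSurj e :=
  of_section e.symm e.apply_symm_apply fun _ _ ↦ e.symm_apply_lt.mpr

theorem exists_apply_eq_forall_lt [Preorder X] [WellFoundedLT X] [LinearOrder Y] {f : X → Y}
    (hf : IsRigidSurj f) (y : Y) : ∃ x, f x = y ∧ ∀ z < x, f z < y := by
  obtain ⟨x, hx, hmin⟩ := wellFounded_lt.has_min {x | f x = y} (hf.surjective y)
  refine ⟨x, hx, fun z hzx ↦ ?_⟩
  by_contra! hyz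
  rcases hyz.eq_or_lt with h | h
  · exact hmin z h.symm hzx
  · obtain ⟨z', hz', hy⟩ := hf.exists_lt_apply_eq h
    exact hmin z' hy (hz'.trans hzx)

end IsRigidSurj

theorem isRigidSurj_extend {X Y : Type*} [Preorder X] [LinearOrder Y] [OrderBot Y] {e : Y → X}
    (he : StrictMono e) : IsRigidSurj (Function.extend e id fun _ ↦ ⊥) := by
  refine .of_section e (he.injective.extend_apply _ _) fun x y hy ↦ ?_
  by_cases hx : ∃ z, e z = x
  · obtain ⟨z, rfl⟩ := hx
    exact he (by rwa [he.injective.extend_apply] at hy)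
  · rw [Function.extend_apply' _ _ _ hx] at hy
    exact absurd hy not_lt_bot

/-- A *parameter word* over an alphabet of `a` letters: a rigid surjection fixing the first `a`
points. The usual word of length `n - a` with parameters `a, …, m - 1` is the restriction of
`f` to `a, …, n - 1`; prefixing it by the alphabet turns substitution into composition. -/
structure IsParamWord {n m : ℕ} (a : ℕ) (f : Fin n → Fin m) : Prop extends IsRigidSurj f where
  apply_of_lt : ∀ i : Fin n, (i : ℕ) < a → (f i : ℕ) = i

/-- The letter `a` occurs in the word `f` for the first time at position `t`, all earlier letters
being smaller. The value `t = n` encodes that only letters smaller than `a` occur. -/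
structure FirstOccursAt {n m : ℕ} (a : ℕ) (f : Fin n → Fin m) (t : ℕ) : Prop where
  le : t ≤ n
  apply_lt : ∀ i : Fin n, (i : ℕ) < t → (f i : ℕ) < a
  apply_eq : ∀ i : Fin n, (i : ℕ) = t → (f i : ℕ) = a

section Words

variable {n m l a b t T : ℕ}

theorem IsRigidSurj.card_le {f : Fin n → Fin m} (hf : IsRigidSurj f) : m ≤ n := by
  simpa using Fintype.card_le_of_surjective f hf.surjective

namespace IsParamWord

theorem id : IsParamWord a (id : Fin n → Fin n) := ⟨.id, fun _ _ ↦ rfl⟩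

theorem comp {g : Fin m → Fin l} {f : Fin n → Fin m} (hg : IsParamWord a g)
    (hf : IsParamWord a f) : IsParamWord a (g ∘ f) where
  toIsRigidSurj := hg.toIsRigidSurj.comp hf.toIsRigidSurj
  apply_of_lt i hi := by
    have hfi := hf.apply_of_lt i hi
    rw [Function.comp_apply, hg.apply_of_lt _ (by omega), hfi]

theorem mono {f : Fin n → Fin m} (hf : IsParamWord b f) (hab : a ≤ b) : IsParamWord a f :=
  ⟨hf.toIsRigidSurj, fun i hi ↦ hf.apply_of_lt i (hi.trans_le hab)⟩

theorem firstOccursAt {f : Fin n → Fin m} (hf : IsParamWord b f) (hab : a < b) (hbm : b ≤ m) :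
    FirstOccursAt a f a where
  le := by have := hf.card_le; omega
  apply_lt i hi := by rw [hf.apply_of_lt i (by omega)]; exact hi
  apply_eq i hi := by rw [hf.apply_of_lt i (by omega)]; exact hi

end IsParamWord

theorem IsRigidSurj.isParamWord_one {f : Fin n → Fin m} (hf : IsRigidSurj f) :
    IsParamWord 1 f where
  toIsRigidSurj := hf
  apply_of_lt i hi := by
    by_contra hne
    obtain ⟨z, hz, -⟩ := hf.exists_lt_apply_eq (x := i) (y := ⟨0, by omega⟩)
      (Fin.lt_def.mpr (by simp only; omega))
    exact absurd (Fin.lt_def.mp hz) (by omega)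

theorem IsRigidSurj.exists_firstOccursAt {f : Fin n → Fin m} (hf : IsRigidSurj f) (a : ℕ) :
    ∃ t, FirstOccursAt a f t := by
  by_cases ham : a < m
  · obtain ⟨i, hi, hlt⟩ := hf.exists_apply_eq_forall_lt ⟨a, ham⟩
    exact ⟨i, i.2.le, fun j hj ↦ hlt j hj, fun j hj ↦ by rw [Fin.ext hj, hi]⟩
  · exact ⟨n, le_rfl, fun i _ ↦ by omega, fun i hi ↦ by omega⟩

namespace FirstOccursAt

theorem comp {g : Fin m → Fin l} {f : Fin n → Fin m} (hg : FirstOccursAt a g t)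
    (hf : FirstOccursAt t f T) : FirstOccursAt a (g ∘ f) T :=
  ⟨hf.le, fun i hi ↦ hg.apply_lt _ (hf.apply_lt i hi), fun i hi ↦ hg.apply_eq _ (hf.apply_eq i hi)⟩

theorem le_of_isParamWord {f : Fin n → Fin m} (ht : FirstOccursAt a f t) (hf : IsParamWord b f)
    (hba : b ≤ a) (hbn : b ≤ n) : b ≤ t := by
  by_contra! htb
  have h1 := ht.apply_eq ⟨t, by omega⟩ rfl
  have h2 := hf.apply_of_lt ⟨t, by omega⟩ htb
  simp only at h2
  omega

theorem eq_of_le {f : Fin n → Fin m} (ht : FirstOccursAt a f t) (hma : m ≤ a) : t = n := by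
  by_contra hne
  have h1 := ht.le
  have h2 := ht.apply_eq ⟨t, by omega⟩ rfl
  omega

end FirstOccursAt

end Words

section Invariance

variable {n m a b : ℕ} {κ : Type*}

/-- The color of a parameter word over `a` letters depends only on its prefix before the first
parameter, at least for those words whose first `b` letters all lie in the alphabet. -/
def PrefixInvariant (a b : ℕ) (χ : (Fin n → Fin m) → κ) : Prop :=
  ∀ ⦃v v' t⦄, IsParamWord a v → IsParamWord a v' → FirstOccursAt a v t → FirstOccursAt a v' t →
    b ≤ t → (∀ i : Fin n, (i : ℕ) < t → v i = v' i) → χ v = χ v'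

/-- The color of a parameter word over `a` letters depends only on its first `b` letters and on
the position of its first parameter, at least for those words whose first `b` letters all lie in
the alphabet. -/
def PositionInvariant (a b : ℕ) (χ : (Fin n → Fin m) → κ) : Prop :=
  ∀ ⦃v v' t⦄, IsParamWord a v → IsParamWord a v' → FirstOccursAt a v t → FirstOccursAt a v' t →
    b ≤ t → (∀ i : Fin n, (i : ℕ) < b → v i = v' i) → χ v = χ v'

theorem PrefixInvariant.comp {N : ℕ} {χ : (Fin N → Fin m) → κ} (hχ : PrefixInvariant a a χ)
    {W : Fin N → Fin n} (hW : IsParamWord b W) (hab : a ≤ b) (hbn : b ≤ n) :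
    PrefixInvariant a b fun v ↦ χ (v ∘ W) := fun v v' t hv hv' ht ht' hbt hvv' ↦ by
  obtain ⟨T, hT⟩ := hW.exists_firstOccursAt t
  have hbN : b ≤ N := hbn.trans hW.card_le
  exact hχ (hv.comp (hW.mono hab)) (hv'.comp (hW.mono hab)) (ht.comp hT) (ht'.comp hT)
    (hab.trans (hT.le_of_isParamWord hW hbt hbN)) fun i hi ↦ hvv' _ (hT.apply_lt i hi)

theorem exists_forall_apply_eq_of_rel {α β : Type*} [Nonempty κ] (χ : α → κ) (R : α → β → Prop)
    (h : ∀ x y b, R x b → R y b → χ x = χ y) : ∃ ψ : β → κ, ∀ x b, R x b → χ x = ψ b := by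
  classical
  refine ⟨fun b ↦ if hb : ∃ x, R x b then χ hb.choose else Classical.arbitrary κ, fun x b hx ↦ ?_⟩
  have hb : ∃ x, R x b := ⟨x, hx⟩
  simp only [dif_pos hb]
  exact h x _ b hx hb.choose_spec

theorem PositionInvariant.exists_code [Nonempty κ] {χ : (Fin n → Fin m) → κ}
    (hχ : PositionInvariant a b χ) :
    ∃ ψ : (Fin b → Fin a) → ℕ → κ, ∀ v p t, IsParamWord a v → FirstOccursAt a v t → b ≤ t →
      (∀ (i : Fin n) (h : (i : ℕ) < b), (v i : ℕ) = p ⟨i, h⟩) → χ v = ψ p t := by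
  obtain ⟨ψ, hψ⟩ := exists_forall_apply_eq_of_rel (β := (Fin b → Fin a) × ℕ) χ
    (fun v q ↦ IsParamWord a v ∧ FirstOccursAt a v q.2 ∧ b ≤ q.2 ∧
      ∀ (i : Fin n) (h : (i : ℕ) < b), (v i : ℕ) = q.1 ⟨i, h⟩)
    fun v v' q ⟨hv, ht, hb, hq⟩ ⟨hv', ht', _, hq'⟩ ↦ hχ hv hv' ht ht' hb
      fun i hi ↦ Fin.ext ((hq i hi).trans (hq' i hi).symm)
  exact ⟨fun p t ↦ ψ (p, t), fun v p t hv ht hb hp ↦ hψ v (p, t) ⟨hv, ht, hb, hp⟩⟩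

theorem PositionInvariant.exists_position_color [Nonempty κ] {χ : (Fin n → Fin m) → κ}
    (hχ : PositionInvariant a a χ) (han : a ≤ n) :
    ∃ ψ : ℕ → κ, ∀ v t, IsParamWord a v → FirstOccursAt a v t → χ v = ψ t := by
  obtain ⟨ψ, hψ⟩ := hχ.exists_code
  exact ⟨ψ id, fun v t hv ht ↦ hψ v id t hv ht (ht.le_of_isParamWord hv le_rfl han)
    fun i hi ↦ hv.apply_of_lt i hi⟩

end Invariance

/-! ### The Graham–Rothschild theorem -/

/-- The Graham–Rothschild theorem for `d` parameters: for every finite coloring of long words with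
`d` parameters some word with `m - a` parameters has all its `d`-parameter subwords of one
color. -/
def GrahamRothschildProperty (d : ℕ) : Prop :=
  ∀ (κ : Type u) [Finite κ] [Nonempty κ] (a m : ℕ), 0 < a → a ≤ m →
    ∃ n, m ≤ n ∧ ∀ χ : (Fin n → Fin (a + d)) → κ, ∃ W : Fin n → Fin m, IsParamWord a W ∧
      ∃ col, ∀ v : Fin m → Fin (a + d), IsParamWord a v → χ (v ∘ W) = col

section PrefixReduction

variable {a b d n : ℕ}

/-- Evaluates the first `b` letters by `p : Fin b → Fin a` and renames the letter `b + i` to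
`a + i`. -/
def collapse (d : ℕ) (p : Fin b → Fin a) (y : Fin (b + 1 + d)) : Fin (a + (d + 1)) :=
  if h : (y : ℕ) < b then ⟨p ⟨y, h⟩, by omega⟩ else ⟨y - b + a, by omega⟩

/-- A right inverse of `collapse`: makes the first `b + 1` positions of `w` fresh letters and
renames the parameter `a + i` to `b + i` afterwards. -/
def uncollapse (hab : a ≤ b) (w : Fin n → Fin (a + (d + 1))) (x : Fin n) : Fin (b + 1 + d) :=
  if h : (x : ℕ) ≤ b then ⟨x, by omega⟩ else
  if (w x : ℕ) < a then ⟨w x, by omega⟩ else ⟨w x - a + b, by omega⟩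

section

variable (hab : a ≤ b) {w : Fin n → Fin (a + (d + 1))}

theorem uncollapse_of_le {x : Fin n} (hx : (x : ℕ) ≤ b) : (uncollapse hab w x : ℕ) = x := by
  simp [uncollapse, hx]

theorem uncollapse_of_lt {x : Fin n} (hx : b < (x : ℕ)) (hxa : (w x : ℕ) < a) :
    (uncollapse hab w x : ℕ) = w x := by
  simp [uncollapse, hx.not_ge, hxa]

theorem uncollapse_of_lt_of_le {x : Fin n} (hx : b < (x : ℕ)) (hxa : a ≤ (w x : ℕ)) :
    (uncollapse hab w x : ℕ) = w x - a + b := by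
  simp [uncollapse, hx.not_ge, hxa.not_gt]

theorem FirstOccursAt.uncollapse_eq (hb : FirstOccursAt a w b) {x : Fin n} {y : Fin (b + 1 + d)}
    (hy : b < (y : ℕ)) (hx : (w x : ℕ) = y - b + a) : uncollapse hab w x = y := by
  have hbx : b < (x : ℕ) := by
    by_contra! hxb
    rcases hxb.lt_or_eq with h | h
    · have := hb.apply_lt x h; omega
    · have := hb.apply_eq x h; omega
  exact Fin.ext (by rw [uncollapse_of_lt_of_le hab hbx (by omega)]; omega)

theorem IsParamWord.uncollapse (hw : IsParamWord a w) (hb : FirstOccursAt a w b) (hbn : b < n) :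
    IsParamWord (b + 1) (uncollapse hab w) := by
  refine ⟨⟨fun y ↦ ?_, fun x y hy ↦ ?_⟩, fun i hi ↦ uncollapse_of_le hab (by omega)⟩
  · by_cases hyb : (y : ℕ) ≤ b
    · exact ⟨⟨y, by omega⟩, Fin.ext (uncollapse_of_le hab hyb)⟩
    · obtain ⟨x, hx⟩ := hw.surjective ⟨y - b + a, by omega⟩
      exact ⟨x, hb.uncollapse_eq hab (by omega) (by simp [hx])⟩
  · rw [Fin.lt_def] at hy
    by_cases hxb : (x : ℕ) ≤ b
    · rw [uncollapse_of_le hab hxb] at hy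
      exact ⟨⟨y, by omega⟩, hy, Fin.ext (uncollapse_of_le hab (by simp only; omega))⟩
    by_cases hyb : (y : ℕ) ≤ b
    · exact ⟨⟨y, by omega⟩, Fin.lt_def.mpr (by simp only; omega),
        Fin.ext (uncollapse_of_le hab hyb)⟩
    have hxa : a ≤ (w x : ℕ) := by
      by_contra! h
      rw [uncollapse_of_lt hab (by omega) h] at hy
      omega
    rw [uncollapse_of_lt_of_le hab (by omega) hxa] at hy
    obtain ⟨z, hz, hzy⟩ := hw.exists_lt_apply_eq (x := x) (y := ⟨y - b + a, by omega⟩)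
      (Fin.lt_def.mpr (by simp only; omega))
    exact ⟨z, hz, hb.uncollapse_eq hab (by omega) (by simp [hzy])⟩

theorem collapse_comp_uncollapse {p : Fin b → Fin a} (hw : IsParamWord a w)
    (hb : FirstOccursAt a w b) (hp : ∀ (i : Fin n) (h : (i : ℕ) < b), (w i : ℕ) = p ⟨i, h⟩) :
    collapse d p ∘ uncollapse hab w = w := by
  funext x
  apply Fin.ext
  rcases lt_trichotomy (x : ℕ) b with hx | hx | hx
  · simp [collapse, uncollapse_of_le hab hx.le, hx, hp x hx]
  · simp [collapse, uncollapse_of_le hab hx.le, hx, hb.apply_eq x hx]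
  rcases lt_or_ge (w x : ℕ) a with hxa | hxa
  · have hpx : ((p ⟨w x, by omega⟩ : Fin a) : ℕ) = w x :=
      (hp ⟨w x, by omega⟩ (by simp only; omega)).symm.trans (hw.apply_of_lt _ hxa)
    simp [collapse, uncollapse_of_lt hab hx hxa, hxa.trans_le hab, hpx]
  · simp [collapse, uncollapse_of_lt_of_le hab hx hxa, hxa]

end

/-- Coloring a word `g` over `b + 1` letters by all `χ (collapse d p ∘ g)` at once turns words
whose first parameter is at `b` into words with `d` parameters, for which `hd` is available. -/
theorem GrahamRothschildProperty.exists_prefixInvariant {a b d M : ℕ}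
    (hd : GrahamRothschildProperty.{u} d) (κ : Type u) [Finite κ] [Nonempty κ] (hab : a ≤ b)
    (hbM : b ≤ M) :
    ∃ N, M ≤ N ∧ ∀ χ : (Fin N → Fin (a + (d + 1))) → κ, ∃ W : Fin N → Fin M,
      IsParamWord b W ∧ PrefixInvariant a b fun v ↦ χ (v ∘ W) := by
  induction hk : M - b generalizing b with
  | zero =>
    exact ⟨M, le_rfl, fun χ ↦ ⟨id, .id, fun _ _ _ _ _ ht _ hbt h ↦
      congrArg χ (funext fun i ↦ h i (by have := ht.le; omega))⟩⟩
  | succ k ih =>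
    obtain ⟨N₁, hN₁, ih⟩ := ih (b := b + 1) (by omega) (by omega) (by omega)
    obtain ⟨N, hN, hGR⟩ := hd ((Fin b → Fin a) → κ) (b + 1) N₁ (by omega) (by omega)
    refine ⟨N, hN₁.trans hN, fun χ ↦ ?_⟩
    obtain ⟨U, hU, col, hcol⟩ := hGR fun g p ↦ χ (collapse d p ∘ g)
    obtain ⟨W, hW, hWχ⟩ := ih fun v ↦ χ (v ∘ U)
    have hcol_prefix (v : Fin M → Fin (a + (d + 1))) (p : Fin b → Fin a) (hv : IsParamWord a v)
        (hb : FirstOccursAt a v b) (hp : ∀ i : Fin M, ∀ h : (i : ℕ) < b, (v i : ℕ) = p ⟨i, h⟩) :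
        χ (v ∘ W ∘ U) = col p := by
      have hvW : IsParamWord a (v ∘ W) := hv.comp (hW.mono (by omega))
      have hbW : FirstOccursAt a (v ∘ W) b := hb.comp (hW.firstOccursAt (by omega) (by omega))
      have hpW (i : Fin N₁) (h : (i : ℕ) < b) : (v (W i) : ℕ) = p ⟨i, h⟩ := by
        have hWi := hW.apply_of_lt i (by omega)
        rw [hp (W i) (by omega)]
        simp only [hWi]
      calc χ (v ∘ W ∘ U)
          = χ ((collapse d p ∘ uncollapse hab (v ∘ W)) ∘ U) := by
            rw [collapse_comp_uncollapse hab hvW hbW hpW, Function.comp_assoc]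
        _ = col p := congrFun (hcol _ (hvW.uncollapse hab hbW (by omega))) p
    refine ⟨W ∘ U, (hW.comp hU).mono (by omega), fun v v' t hv hv' ht ht' hbt hvv' ↦ ?_⟩
    rcases hbt.eq_or_lt with rfl | hbt
    · let p : Fin b → Fin a := fun i ↦ ⟨v ⟨i, by omega⟩, ht.apply_lt _ i.2⟩
      exact (hcol_prefix v p hv ht fun _ _ ↦ rfl).trans
        (hcol_prefix v' p hv' ht' fun i h ↦ by rw [← hvv' i h]).symm
    · exact hWχ hv hv' ht ht' hbt hvv'

end PrefixReduction

section HalesJewett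

variable {a b s D : ℕ} (k : ℕ)

/-- The word obtained from a combinatorial line of length `s` over `a` letters by prefixing the
alphabet of `b` letters and appending `k` fresh letters. The wildcard becomes the letter `b`. -/
def lineWord (hab : a ≤ b) (l : Combinatorics.Subspace Unit (Fin a) (Fin s)) (x : Fin (b + s + k)) :
    Fin (b + (k + 1)) :=
  if hb : (x : ℕ) < b then ⟨x, by omega⟩ else
  if h : (x : ℕ) < b + s then
    (l.idxFun ⟨x - b, by omega⟩).elim (Fin.castLE (by omega)) fun _ ↦ ⟨b, by omega⟩
  else ⟨x - s + 1, by omega⟩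

variable (hab : a ≤ b) (l : Combinatorics.Subspace Unit (Fin a) (Fin s))

theorem lineWord_of_lt {x : Fin (b + s + k)} (hx : (x : ℕ) < b) : (lineWord k hab l x : ℕ) = x := by
  simp [lineWord, hx]

theorem lineWord_of_le {x : Fin (b + s + k)} (hx : b + s ≤ (x : ℕ)) :
    (lineWord k hab l x : ℕ) = x - s + 1 := by
  simp [lineWord, hx.not_gt, show ¬(x : ℕ) < b by omega]

theorem lineWord_natAdd (i : Fin s) :
    lineWord k hab l ((Fin.natAdd b i).castAdd k) =
      (l.idxFun i).elim (Fin.castLE (by omega)) fun _ ↦ ⟨b, by omega⟩ := by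
  simp [lineWord]

theorem lineWord_le {x : Fin (b + s + k)} (hx : (x : ℕ) < b + s) :
    (lineWord k hab l x : ℕ) ≤ b := by
  by_cases hxb : (x : ℕ) < b
  · exact (lineWord_of_lt k hab l hxb).trans_le hxb.le
  · obtain ⟨i, rfl⟩ : ∃ i : Fin s, x = (Fin.natAdd b i).castAdd k :=
      ⟨⟨x - b, by omega⟩, Fin.ext (by simp; omega)⟩
    rw [lineWord_natAdd]
    rcases l.idxFun i with y | _
    · simp; omega
    · simp

theorem isParamWord_lineWord : IsParamWord b (lineWord k hab l) where
  apply_of_lt _ hi := lineWord_of_lt k hab l hi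
  toIsRigidSurj := by
    obtain ⟨i₀, hi₀⟩ := l.proper ()
    have hs := i₀.pos
    refine .of_section (fun y ↦ if hb : (y : ℕ) < b then ⟨y, by omega⟩ else
      if h : (y : ℕ) = b then (Fin.natAdd b i₀).castAdd k else ⟨y - 1 + s, by omega⟩)
      (fun y ↦ ?_) fun x y hy ↦ ?_
    · rcases lt_trichotomy (y : ℕ) b with hyb | hyb | hyb
      · simp [hyb, Fin.ext_iff, lineWord_of_lt]
      · simp [hyb, Fin.ext_iff, lineWord_natAdd, hi₀]
      · simp only [hyb.not_gt, hyb.ne', dite_false, Fin.ext_iff]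
        rw [lineWord_of_le] <;> simp only <;> omega
    · rw [Fin.lt_def] at hy
      by_cases hxs : (x : ℕ) < b + s
      · have hyb : (y : ℕ) < b := hy.trans_le (lineWord_le k hab l hxs)
        by_cases hxb : (x : ℕ) < b
        · simpa [hyb, Fin.lt_def, lineWord_of_lt k hab l hxb] using hy
        · simp only [hyb, dite_true, Fin.lt_def]; omega
      · rw [lineWord_of_le k hab l (by omega)] at hy
        simp only [Fin.lt_def]
        split_ifs <;> simp <;> omega

theorem firstOccursAt_lineWord {t : ℕ} (hbt : b < t) (htk : t ≤ b + (k + 1)) :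
    FirstOccursAt t (lineWord k hab l) (t + s - 1) where
  le := by omega
  apply_lt i hi := by
    rcases lt_or_ge (i : ℕ) (b + s) with h | h
    · exact (lineWord_le k hab l h).trans_lt hbt
    · rw [lineWord_of_le k hab l h]; omega
  apply_eq i hi := by rw [lineWord_of_le k hab l (by omega)]; omega

theorem apply_lineWord {v : Fin (b + (k + 1)) → Fin D} (hv : IsParamWord a v) {p : Fin b → Fin a}
    {q : Fin a} (hp : ∀ i : Fin b, (v (Fin.castAdd (k + 1) i) : ℕ) = p i)
    (hq : (v ⟨b, by omega⟩ : ℕ) = q) (i : Fin (b + s)) :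
    (v (lineWord k hab l (i.castAdd k)) : ℕ) = Fin.append p (l fun _ ↦ q) i := by
  induction i using Fin.addCases with
  | left i =>
    rw [Fin.append_left, ← hp]
    congr 2
    exact Fin.ext (lineWord_of_lt k hab l i.2)
  | right i =>
    rw [Fin.append_right, lineWord_natAdd, l.apply_def]
    rcases l.idxFun i with y | _
    · exact hv.apply_of_lt _ y.2
    · exact hq

/-- The letters `b, …, b + k - 1` are made irrelevant to the color one by one: put the letter in
place of the wildcard of a monochromatic Hales–Jewett line over the alphabet. -/
theorem exists_positionInvariant (κ : Type*) [Finite κ] [Nonempty κ] (D : ℕ) {a b : ℕ} (k : ℕ)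
    (hab : a ≤ b) :
    ∃ N, b + k ≤ N ∧ ∀ χ : (Fin N → Fin D) → κ, PrefixInvariant a a χ →
      ∃ W : Fin N → Fin (b + k), IsParamWord b W ∧ PositionInvariant a b fun v ↦ χ (v ∘ W) := by
  induction k generalizing b with
  | zero =>
    exact ⟨b, le_rfl, fun χ _ ↦ ⟨id, .id, fun _ _ _ _ _ _ _ _ h ↦
      congrArg χ (funext fun i ↦ h i i.2)⟩⟩
  | succ k ih =>
    obtain ⟨s, hs⟩ := Combinatorics.Subspace.exists_mono_in_high_dimension_fin (Fin a)
      ((Fin b → Fin a) × Fin (b + k + 2) → κ) Unit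
    have hs_pos : 0 < s := by
      obtain ⟨l, -⟩ := hs fun _ _ ↦ Classical.arbitrary κ
      exact (l.proper ()).choose.pos
    obtain ⟨N, hN, hχN⟩ := ih (b := b + s) (by omega)
    refine ⟨N, by omega, fun χ hχ ↦ ?_⟩
    obtain ⟨W, hW, hχW⟩ := hχN χ hχ
    obtain ⟨ψ, hψ⟩ := hχW.exists_code
    obtain ⟨l, col, hcol⟩ := hs fun y q ↦ ψ (Fin.append q.1 y) (q.2 + s - 1)
    have hL := isParamWord_lineWord k hab l
    have hLW : IsParamWord b (lineWord k hab l ∘ W) := hL.comp (hW.mono (by omega))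
    have hcol_prefix (v : Fin (b + (k + 1)) → Fin D) (t : Fin (b + k + 2)) (p : Fin b → Fin a)
        (hv : IsParamWord a v) (ht : FirstOccursAt a v t) (hbt : b < (t : ℕ))
        (hp : ∀ i : Fin b, (v (Fin.castAdd (k + 1) i) : ℕ) = p i) :
        χ (v ∘ lineWord k hab l ∘ W) = col (p, t) := by
      let q : Fin a := ⟨v ⟨b, by omega⟩, ht.apply_lt _ hbt⟩
      rw [← congrFun (hcol fun _ ↦ q) (p, t)]
      exact hψ _ _ (t + s - 1) (hv.comp (hL.mono hab))
        (ht.comp (firstOccursAt_lineWord k hab l hbt (by omega))) (by omega)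
        fun i h ↦ apply_lineWord k hab l hv hp rfl ⟨i, h⟩
    refine ⟨_, hLW, fun v v' t hv hv' ht ht' hbt hvv' ↦ ?_⟩
    rcases hbt.eq_or_lt with rfl | hbt
    · exact hχ.comp hLW hab (by omega) hv hv' ht ht' le_rfl hvv'
    · have htk : t < b + k + 2 := by have := ht.le; omega
      let p : Fin b → Fin a := fun i ↦
        ⟨v (Fin.castAdd (k + 1) i), ht.apply_lt _ (i.2.trans hbt)⟩
      exact (hcol_prefix v ⟨t, htk⟩ p hv ht hbt fun _ ↦ rfl).trans
        (hcol_prefix v' ⟨t, htk⟩ p hv' ht' hbt fun i ↦ by rw [← hvv' _ i.2]).symm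

end HalesJewett

theorem exists_isParamWord_forall_mem {a M : ℕ} (ha : 0 < a) (haM : a ≤ M) {S : Finset ℕ}
    (hS : S ⊆ Finset.Ico a M) :
    ∃ W : Fin M → Fin (a + S.card), IsParamWord a W ∧ ∀ i : Fin M, a ≤ (W i : ℕ) → (i : ℕ) ∈ S := by
  have hS_Ico (j : Fin S.card) : a ≤ S.orderEmbOfFin rfl j ∧ S.orderEmbOfFin rfl j < M :=
    Finset.mem_Ico.mp (hS (S.orderEmbOfFin_mem rfl j))
  let e : Fin (a + S.card) → Fin M := Fin.append (Fin.castLE haM) fun j ↦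
    ⟨S.orderEmbOfFin rfl j, (hS_Ico j).2⟩
  have he_left (x : Fin a) : e (Fin.castAdd _ x) = Fin.castLE haM x := Fin.append_left ..
  have he_right (j : Fin S.card) : (e (Fin.natAdd a j) : ℕ) = S.orderEmbOfFin rfl j :=
    congrArg Fin.val (Fin.append_right ..)
  have he : StrictMono e := fun x y hxy ↦ by
    rw [Fin.lt_def] at hxy ⊢
    induction x using Fin.addCases <;> induction y using Fin.addCases <;>
      simp only [he_left, he_right, Fin.val_castAdd, Fin.val_natAdd, Fin.val_castLE] at hxy ⊢
    · exact hxy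
    · exact (Fin.is_lt _).trans_le (hS_Ico _).1
    · omega
    · exact (S.orderEmbOfFin rfl).strictMono (Fin.lt_def.mpr (by omega))
  have : NeZero (a + S.card) := ⟨by omega⟩
  refine ⟨_, ⟨isRigidSurj_extend he, fun i hi ↦ ?_⟩, fun i hi ↦ ?_⟩
  · obtain ⟨x, rfl⟩ : ∃ x : Fin a, Fin.castLE haM x = i := ⟨⟨i, hi⟩, rfl⟩
    rw [← he_left, he.injective.extend_apply, he_left]
    rfl
  · by_cases hx : ∃ x, e x = i
    · obtain ⟨x, rfl⟩ := hx
      rw [he.injective.extend_apply] at hi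
      induction x using Fin.addCases with
      | left x => exact absurd hi x.2.not_ge
      | right j => exact he_right j ▸ S.orderEmbOfFin_mem rfl j
    · rw [Function.extend_apply' _ _ _ hx] at hi
      exact absurd hi ha.not_ge

theorem exists_isParamWord_forall_color_eq (κ : Type*) [Finite κ] [Nonempty κ] {a m : ℕ}
    (ha : 0 < a) (ham : a ≤ m) :
    ∃ M, m ≤ M ∧ ∀ χ : ℕ → κ, ∃ W : Fin M → Fin m, IsParamWord a W ∧
      ∃ col, ∀ i : Fin M, a ≤ (W i : ℕ) → χ i = col := by
  classical
  have := Fintype.ofFinite κ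
  obtain ⟨k, rfl⟩ := Nat.exists_eq_add_of_le ham
  refine ⟨a + k + Fintype.card κ * k, by omega, fun χ ↦ ?_⟩
  obtain ⟨col, -, hcol⟩ := Finset.exists_le_card_fiber_of_mul_le_card_of_maps_to
    (s := Finset.Ico a (a + k + Fintype.card κ * k)) (n := k) (fun i _ ↦ Finset.mem_univ (χ i))
    Finset.univ_nonempty (by rw [Nat.card_Ico, Finset.card_univ]; omega)
  obtain ⟨S, hS, rfl⟩ := Finset.exists_subset_card_eq hcol
  obtain ⟨W, hW, hWS⟩ := exists_isParamWord_forall_mem ha (by omega)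
    (hS.trans (Finset.filter_subset _ _))
  exact ⟨W, hW, col, fun i hi ↦ (Finset.mem_filter.mp (hS (hWS i hi))).2⟩

theorem grahamRothschildProperty_zero : GrahamRothschildProperty.{u} 0 := by
  intro κ _ _ a m _ ham
  obtain ⟨k, rfl⟩ := Nat.exists_eq_add_of_le ham
  obtain ⟨n, hn, hχ⟩ := exists_positionInvariant κ a k (le_refl a)
  refine ⟨n, hn, fun χ ↦ ?_⟩
  obtain ⟨W, hW, hχW⟩ := hχ χ fun v v' t _ _ ht _ _ hvv' ↦
    congrArg χ (funext fun i ↦ hvv' i (by rw [ht.eq_of_le le_rfl]; exact i.2))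
  obtain ⟨ψ, hψ⟩ := hχW.exists_position_color ham
  refine ⟨W, hW, ψ (a + k), fun v hv ↦ ?_⟩
  obtain ⟨t, ht⟩ := hv.exists_firstOccursAt a
  exact (hψ v t hv ht).trans (congrArg ψ (ht.eq_of_le le_rfl))

theorem GrahamRothschildProperty.succ {d : ℕ} (hd : GrahamRothschildProperty.{u} d) :
    GrahamRothschildProperty.{u} (d + 1) := by
  intro κ _ _ a m ha ham
  obtain ⟨M, hmM, hM⟩ := exists_isParamWord_forall_color_eq κ ha ham
  obtain ⟨k, rfl⟩ := Nat.exists_eq_add_of_le (ham.trans hmM)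
  obtain ⟨N, hMN, hN⟩ := exists_positionInvariant κ (a + (d + 1)) k (le_refl a)
  obtain ⟨n, hNn, hn⟩ := hd.exists_prefixInvariant κ (le_refl a) (show a ≤ N by omega)
  refine ⟨n, by omega, fun χ ↦ ?_⟩
  obtain ⟨W₁, hW₁, hχ₁⟩ := hn χ
  obtain ⟨W₂, hW₂, hχ₂⟩ := hN _ hχ₁
  obtain ⟨ψ, hψ⟩ := hχ₂.exists_position_color (by omega)
  obtain ⟨W₃, hW₃, col, hcol⟩ := hM ψ
  refine ⟨W₃ ∘ W₂ ∘ W₁, hW₃.comp (hW₂.comp hW₁), col, fun v hv ↦ ?_⟩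
  obtain ⟨T, hT⟩ := (hv.comp hW₃).exists_firstOccursAt a
  obtain ⟨x, hx⟩ := (hv.comp hW₃).surjective ⟨a, by omega⟩
  have hTM : T < a + k := by
    by_contra! h
    exact (hT.apply_lt x (by omega)).ne (congrArg Fin.val hx)
  rw [← hcol ⟨T, hTM⟩ ?_]
  · exact hψ _ T (hv.comp hW₃) hT
  · by_contra! h
    have hvT := hv.apply_of_lt _ h
    have hT_eq : (v (W₃ ⟨T, hTM⟩) : ℕ) = a := hT.apply_eq ⟨T, hTM⟩ rfl
    omega

theorem grahamRothschildProperty (d : ℕ) : GrahamRothschildProperty.{u} d :=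
  d.rec grahamRothschildProperty_zero fun _ ↦ .succ

theorem dual_ramsey (P Q : Type*) [LinearOrder P] [Finite P] [Nonempty P] [LinearOrder Q] [Finite Q]
    [Nonempty Q] (κ : Type u) [Finite κ] [Nonempty κ] :
    ∃ n : ℕ, ∀ χ : (Fin n → P) → κ, ∃ w : Fin n → Q, IsRigidSurj w ∧
      ∃ col, ∀ r : Q → P, IsRigidSurj r → χ (r ∘ w) = col := by
  have := Fintype.ofFinite P
  have := Fintype.ofFinite Q
  obtain ⟨d, hd⟩ := Nat.exists_eq_add_of_lt (Fintype.card_pos (α := P))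
  let eP : Fin (1 + d) ≃o P := Fintype.orderIsoFinOfCardEq P (by omega)
  let eQ : Fin (Fintype.card Q) ≃o Q := Fintype.orderIsoFinOfCardEq Q rfl
  obtain ⟨n, -, hn⟩ := grahamRothschildProperty d κ 1 _ one_pos (Fintype.card_pos (α := Q))
  refine ⟨n, fun χ ↦ ?_⟩
  obtain ⟨W, hW, col, hcol⟩ := hn fun v ↦ χ (eP ∘ v)
  refine ⟨eQ ∘ W, (IsRigidSurj.orderIso eQ).comp hW.toIsRigidSurj, col, fun r hr ↦ ?_⟩
  have hr' : IsRigidSurj (eP.symm ∘ r ∘ eQ) := (IsRigidSurj.orderIso eP.symm).comp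
    (hr.comp (IsRigidSurj.orderIso eQ))
  rw [← hcol _ hr'.isParamWord_one]
  congr 1
  funext i
  simp

/-! ### Spaces of Lipschitz functions -/

section Values

theorem finite_range_tsub_nsmul (v s : ℝ≥0) : (Set.range fun n : ℕ ↦ v - n • s).Finite := by
  rcases eq_or_ne s 0 with rfl | hs
  · simp
  · obtain ⟨J, hJ⟩ := Archimedean.arch v (pos_iff_ne_zero.mpr hs)
    refine ((Set.finite_Iic J).image fun n ↦ v - n • s).subset ?_
    rintro _ ⟨n, rfl⟩
    rcases le_total n J with hn | hn
    · exact ⟨n, hn, rfl⟩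
    · refine ⟨J, Set.self_mem_Iic, ?_⟩
      simp only [tsub_eq_zero_of_le hJ, tsub_eq_zero_of_le (hJ.trans (nsmul_le_nsmul_left s.2 hn))]

theorem exists_finset_tsub_mem (S T : Finset ℝ≥0) :
    ∃ V : Finset ℝ≥0, T ⊆ V ∧ ∀ v ∈ V, ∀ s ∈ S, v - s ∈ V := by
  classical
  induction S using Finset.induction_on with
  | empty => exact ⟨T, subset_rfl, by simp⟩
  | insert s S _ ih =>
    obtain ⟨V, hTV, hV⟩ := ih
    let F : Set ℝ≥0 := ⋃ v ∈ V, Set.range fun n : ℕ ↦ v - n • s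
    have hF : F.Finite := V.finite_toSet.biUnion fun v _ ↦ finite_range_tsub_nsmul v s
    have hmem (x : ℝ≥0) : x ∈ hF.toFinset ↔ ∃ v ∈ V, ∃ n : ℕ, v - n • s = x := by simp [F]
    refine ⟨hF.toFinset, fun v hv ↦ (hmem v).mpr ⟨v, hTV hv, 0, by simp⟩, fun x hx r hr ↦ ?_⟩
    obtain ⟨v, hv, n, rfl⟩ := (hmem x).mp hx
    rcases Finset.mem_insert.mp hr with rfl | hr
    · exact (hmem _).mpr ⟨v, hv, n + 1, by rw [succ_nsmul, tsub_tsub]⟩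
    · exact (hmem _).mpr ⟨v - r, hV v hv r hr, n, tsub_right_comm⟩

end Values

/-- A set `V` of values that contains `0` and all distances of `M` and is closed under truncated
subtraction of distances. This makes the least 1-Lipschitz extension of a `V`-valued function
`V`-valued again. -/
structure IsDistClosed (V : Finset ℝ≥0) (M : Type*) [PseudoMetricSpace M] : Prop where
  zero_mem : 0 ∈ V
  nndist_mem : ∀ x y : M, nndist x y ∈ V
  tsub_nndist_mem : ∀ v ∈ V, ∀ x y : M, v - nndist x y ∈ V

theorem exists_isDistClosed (M : Type*) [PseudoMetricSpace M] [Finite M] :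
    ∃ V, IsDistClosed V M := by
  classical
  have hS : (Set.range fun p : M × M ↦ nndist p.1 p.2).Finite := Set.finite_range _
  have hS_mem (x y : M) : nndist x y ∈ hS.toFinset := by simp
  obtain ⟨V, hSV, hV⟩ := exists_finset_tsub_mem hS.toFinset (insert 0 hS.toFinset)
  exact ⟨V, hSV (Finset.mem_insert_self _ _),
    fun x y ↦ hSV (Finset.mem_insert_of_mem (hS_mem x y)), fun v hv x y ↦ hV v hv _ (hS_mem x y)⟩

/-- The `1`-Lipschitz functions on `M` with values in `V`. -/
structure LipFun (V : Finset ℝ≥0) (M : Type*) [PseudoMetricSpace M] where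
  toFun : M → V
  le_add_nndist' : ∀ x y, (toFun x : ℝ≥0) ≤ toFun y + nndist x y

namespace LipFun

variable {V : Finset ℝ≥0} {M : Type*}

section Basic

variable [PseudoMetricSpace M]

instance : FunLike (LipFun V M) M V where
  coe := toFun
  coe_injective := by rintro ⟨f, _⟩ ⟨g, _⟩ rfl; rfl

instance [Finite M] : Finite (LipFun V M) := DFunLike.finite _

theorem le_add_nndist (φ : LipFun V M) (x y : M) : (φ x : ℝ≥0) ≤ φ y + nndist x y :=
  φ.le_add_nndist' x y

theorem dist_apply_le (φ : LipFun V M) (x y : M) : dist (φ x) (φ y) ≤ dist x y := by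
  have hxy : ((φ x : ℝ≥0) : ℝ) ≤ φ y + dist x y := mod_cast φ.le_add_nndist x y
  have hyx : ((φ y : ℝ≥0) : ℝ) ≤ φ x + dist y x := mod_cast φ.le_add_nndist y x
  rw [dist_comm y x] at hyx
  rw [Subtype.dist_eq, NNReal.dist_eq, abs_le]
  constructor <;> linarith

/-- The distance to the point `p`. -/
def distTo (hV : IsDistClosed V M) (p : M) : LipFun V M where
  toFun x := ⟨nndist x p, hV.nndist_mem x p⟩
  le_add_nndist' x y := by
    simpa only [add_comm] using nndist_triangle x y p

theorem coe_distTo_apply (hV : IsDistClosed V M) (p x : M) : (distTo hV p x : ℝ≥0) = nndist x p :=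
  rfl

/-- The function with value `t` at `p` and value `0` elsewhere. -/
noncomputable def pointMass {t : V} (hV : 0 ∈ V) (ht : ∀ x y : M, x ≠ y → t ≤ nndist x y) (p : M) :
    LipFun V M :=
  open scoped Classical in
  { toFun x := if x = p then t else ⟨0, hV⟩
    le_add_nndist' x y := by
      rcases eq_or_ne x p with rfl | hx
      · rcases eq_or_ne x y with rfl | hxy
        · simp
        · simpa [hxy.symm] using ht x y hxy
      · simp [hx] }

section PointMass

variable {t : V} {hV : 0 ∈ V} {ht : ∀ x y : M, x ≠ y → t ≤ nndist x y} {p x : M}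

theorem pointMass_apply_self : pointMass hV ht p p = t := if_pos rfl

theorem pointMass_apply_of_ne (hx : x ≠ p) : pointMass hV ht p x = ⟨0, hV⟩ := if_neg hx

end PointMass

end Basic

section Order

variable [PseudoMetricSpace M] [LinearOrder M] [Fintype M]

/-- The graph of `φ`, as a subset of `V × M` with the lexicographic order. -/
noncomputable def graph (φ : LipFun V M) : Finset (V ×ₗ M) :=
  Finset.univ.image fun x ↦ toLex (φ x, x)

theorem toLex_mem_graph {φ : LipFun V M} {v : V} {x : M} : toLex (v, x) ∈ φ.graph ↔ φ x = v := by
  simp [graph]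

theorem graph_injective : Function.Injective (graph : LipFun V M → Finset (V ×ₗ M)) :=
  fun φ ψ h ↦ DFunLike.ext _ _ fun x ↦
    (toLex_mem_graph.mp (h ▸ toLex_mem_graph.mpr rfl : toLex (φ x, x) ∈ ψ.graph)).symm

/-- Functions are ordered by the largest element of the symmetric difference of their graphs. -/
noncomputable instance : LinearOrder (LipFun V M) :=
  LinearOrder.lift' (fun φ ↦ toColex φ.graph) (toColex.injective.comp graph_injective)

theorem le_iff {φ ψ : LipFun V M} :
    φ ≤ ψ ↔ ∀ x, φ x ≠ ψ x → ∃ y, φ y ≠ ψ y ∧ toLex (φ x, x) ≤ toLex (ψ y, y) := by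
  change toColex φ.graph ≤ toColex ψ.graph ↔ _
  rw [Finset.Colex.toColex_le_toColex]
  constructor
  · intro h x hx
    obtain ⟨⟨w, y⟩, hψ, hφ, hle⟩ := h (toLex_mem_graph.mpr rfl) (mt toLex_mem_graph.mp hx.symm)
    obtain rfl := toLex_mem_graph.mp hψ
    exact ⟨y, mt toLex_mem_graph.mpr hφ, hle⟩
  · rintro h ⟨v, x⟩ hφ hψ
    obtain rfl := toLex_mem_graph.mp hφ
    obtain ⟨y, hy, hle⟩ := h x (Ne.symm (mt toLex_mem_graph.mpr hψ))
    exact ⟨_, toLex_mem_graph.mpr rfl, mt toLex_mem_graph.mp hy, hle⟩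

theorem le_of_forall_le {φ ψ : LipFun V M} (h : ∀ x, φ x ≤ ψ x) : φ ≤ ψ :=
  le_iff.mpr fun x hx ↦ ⟨x, hx, Prod.Lex.toLex_le_toLex.mpr (.inl ((h x).lt_of_ne hx))⟩

section PointMass

variable {t : V} {hV : 0 ∈ V} {ht : ∀ x y : M, x ≠ y → (t : ℝ≥0) ≤ nndist x y}

theorem pointMass_le {φ : LipFun V M} {p : M} (hp : t ≤ φ p) : pointMass hV ht p ≤ φ :=
  le_of_forall_le fun x ↦ by
    rcases eq_or_ne x p with rfl | hx
    · rwa [pointMass_apply_self]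
    · rw [pointMass_apply_of_ne hx]
      exact (zero_le : 0 ≤ (φ x : ℝ≥0))

theorem pointMass_mono : Monotone (pointMass hV ht) := fun p q hpq ↦ by
  rcases hpq.eq_or_lt with rfl | hlt
  · exact le_rfl
  have ht0 : (⟨0, hV⟩ : V) ≤ t := (zero_le : 0 ≤ (t : ℝ≥0))
  refine le_iff.mpr fun x hx ↦ ⟨q, ?_⟩
  rw [pointMass_apply_self, pointMass_apply_of_ne hlt.ne']
  rcases eq_or_ne x p with rfl | hxp
  · rw [pointMass_apply_self, pointMass_apply_of_ne hlt.ne] at hx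
    rw [pointMass_apply_self]
    exact ⟨hx.symm, Prod.Lex.toLex_mono ⟨le_rfl, hpq⟩⟩
  · rw [pointMass_apply_of_ne hxp] at hx ⊢
    rcases eq_or_ne x q with rfl | hxq
    · rw [pointMass_apply_self] at hx
      exact ⟨hx, Prod.Lex.toLex_mono ⟨ht0, le_rfl⟩⟩
    · exact absurd (pointMass_apply_of_ne hxq).symm hx

end PointMass

end Order

section Restriction

variable {A B : Type*} [PseudoMetricSpace A] [PseudoMetricSpace B] {f : A → B}

/-- The restriction of a function along an isometry. -/
def restrict (hf : Isometry f) (ψ : LipFun V B) : LipFun V A where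
  toFun a := ψ (f a)
  le_add_nndist' x y := hf.nndist_eq x y ▸ ψ.le_add_nndist (f x) (f y)

theorem restrict_apply (hf : Isometry f) (ψ : LipFun V B) (a : A) :
    restrict hf ψ a = ψ (f a) := rfl

variable [Fintype A] (hV : IsDistClosed V B)

/-- The least extension of a function along an isometry. -/
noncomputable def extend (f : A → B) (φ : LipFun V A) : LipFun V B where
  toFun b := ⟨Finset.univ.sup fun a ↦ (φ a : ℝ≥0) - nndist (f a) b,
    Finset.sup_mem (V : Set ℝ≥0) hV.zero_mem (fun x hx y hy ↦ by
      rcases le_total x y with h | h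
      · rwa [sup_eq_right.mpr h]
      · rwa [sup_eq_left.mpr h]) _ _ fun a _ ↦ hV.tsub_nndist_mem _ (φ a).2 _ _⟩
  le_add_nndist' x y := by
    refine Finset.sup_le fun a _ ↦ tsub_le_iff_right.mpr ?_
    calc (φ a : ℝ≥0) ≤ φ a - nndist (f a) y + nndist (f a) y := le_tsub_add
      _ ≤ φ a - nndist (f a) y + (nndist (f a) x + nndist x y) := by
        gcongr
        exact nndist_triangle _ _ _
      _ = φ a - nndist (f a) y + nndist x y + nndist (f a) x := by ring
      _ ≤ _ := by
        gcongr
        exact Finset.le_sup (f := fun a ↦ (φ a : ℝ≥0) - nndist (f a) y) (Finset.mem_univ a)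

theorem coe_extend_apply (φ : LipFun V A) (b : B) : (extend hV f φ b : ℝ≥0) =
    Finset.univ.sup fun a ↦ (φ a : ℝ≥0) - nndist (f a) b := rfl

theorem exists_extend_apply_eq {φ : LipFun V A} {b : B} (h : (extend hV f φ b : ℝ≥0) ≠ 0) :
    ∃ a, (extend hV f φ b : ℝ≥0) = φ a - nndist (f a) b := by
  rcases Finset.univ.eq_empty_or_nonempty (α := A) with hA | hA
  · simp [coe_extend_apply, hA] at h
  · obtain ⟨a, -, ha⟩ := Finset.exists_mem_eq_sup _ hA fun a ↦ (φ a : ℝ≥0) - nndist (f a) b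
    exact ⟨a, ha⟩

theorem restrict_extend (hf : Isometry f) (φ : LipFun V A) :
    restrict hf (extend hV f φ) = φ := DFunLike.ext _ _ fun a ↦ by
  refine Subtype.ext (le_antisymm (Finset.sup_le fun x _ ↦ ?_) ?_)
  · rw [hf.nndist_eq, tsub_le_iff_right]
    exact φ.le_add_nndist x a
  · have h := Finset.le_sup (f := fun x ↦ (φ x : ℝ≥0) - nndist (f x) (f a)) (Finset.mem_univ a)
    rwa [nndist_self, tsub_zero] at h

end Restriction

section RestrictionOrder

variable {A B : Type*} [PseudoMetricSpace A] [MetricSpace B] [LinearOrder A] [LinearOrder B]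
  [Fintype A] [Fintype B] {f : A → B}

theorem extend_le (hV : IsDistClosed V B) (hf : Isometry f) (hmono : Monotone f) {φ : LipFun V A}
    {ψ : LipFun V B} (h : φ ≤ restrict hf ψ) : extend hV f φ ≤ ψ := by
  -- Where the extension exceeds `ψ` at `b`, its value there comes from a point `a` of `A` at which
  -- `φ` exceeds `ψ` too and has a larger value, so the largest difference is in the image of `f`.
  refine le_iff.mpr fun b hb ↦ ?_
  rcases hb.lt_or_gt with hlt | hgt
  · exact ⟨b, hb, Prod.Lex.toLex_mono ⟨hlt.le, le_rfl⟩⟩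
  have hgt' : (ψ b : ℝ≥0) < extend hV f φ b := hgt
  obtain ⟨a, ha⟩ := exists_extend_apply_eq hV (pos_of_gt hgt').ne'
  have hψa : (ψ (f a) : ℝ≥0) < φ a :=
    calc (ψ (f a) : ℝ≥0) ≤ ψ b + nndist (f a) b := ψ.le_add_nndist _ _
      _ < φ a := lt_tsub_iff_right.mp (ha ▸ hgt')
  have hba : toLex (extend hV f φ b, b) ≤ toLex (φ a, f a) := by
    rcases eq_or_ne (f a) b with rfl | hne
    · exact Prod.Lex.toLex_mono ⟨Subtype.coe_le_coe.mp (ha.trans_le tsub_le_self), le_rfl⟩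
    · refine Prod.Lex.toLex_le_toLex.mpr (.inl (Subtype.coe_lt_coe.mp (ha.trans_lt ?_)))
      exact tsub_lt_self (pos_of_gt hψa) (pos_iff_ne_zero.mpr (mt nndist_eq_zero.mp hne))
  obtain ⟨a', ha', hle⟩ := le_iff.mp h a (Subtype.coe_lt_coe.mp hψa).ne'
  refine ⟨f a', by rwa [← restrict_apply hf, restrict_extend], hba.trans ?_⟩
  exact Prod.Lex.toLex_le_toLex.mpr ((Prod.Lex.toLex_le_toLex.mp hle).imp_right
    (And.imp_right fun h ↦ hmono h))

theorem isRigidSurj_restrict (hV : IsDistClosed V B) (hf : Isometry f) (hmono : Monotone f) :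
    IsRigidSurj (restrict (V := V) hf) :=
  .of_section (extend hV f) (restrict_extend hV hf) fun ψ φ h ↦
    (extend_le hV hf hmono h.le).lt_of_ne (by rintro rfl; exact h.ne (restrict_extend hV hf φ).symm)

end RestrictionOrder

end LipFun

/-! ### Evaluation into cubes -/

section Evaluation

variable {V : Finset ℝ≥0} {n : ℕ}

/-- The cube `V ^ n` with the supremum metric. The first coordinate in which two points differ
decides their order, the larger value coming first. -/
noncomputable def valueCube (V : Finset ℝ≥0) (n : ℕ) : FinOrdMetricSpace where
  carrier := Fin n → V
  lin := LinearOrder.lift' (fun u ↦ toLex fun i ↦ OrderDual.toDual (u i)) fun _ _ h ↦ h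

theorem valueCube_lt_of {u v : Fin n → V} (i : Fin n) (hlt : v i < u i)
    (heq : ∀ j < i, u j = v j) :
    (show valueCube V n from u) < (show valueCube V n from v) :=
  ⟨i, heq, hlt⟩

variable {M : Type*} [MetricSpace M] {w : Fin n → LipFun V M}

/-- Evaluates all the functions of the family `w` at a point. -/
def evalCube (w : Fin n → LipFun V M) (x : M) : valueCube V n := fun i ↦ w i x

theorem isometry_evalCube (hV : IsDistClosed V M) (hw : Function.Surjective w) :
    Isometry (evalCube w) := by
  refine Isometry.of_dist_eq fun x y ↦ le_antisymm ?_ ?_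
  · exact (dist_pi_le_iff dist_nonneg).mpr fun i ↦ (w i).dist_apply_le x y
  · obtain ⟨i, hi⟩ := hw (LipFun.distTo hV y)
    calc dist x y = dist (w i x) (w i y) := by
          simp [hi, Subtype.dist_eq, NNReal.dist_eq, LipFun.coe_distTo_apply]
      _ ≤ dist (evalCube w x) (evalCube w y) :=
        dist_le_pi_dist (fun i ↦ w i x) (fun i ↦ w i y) i

theorem strictMono_evalCube [LinearOrder M] [Fintype M] (hV : IsDistClosed V M)
    (hw : IsRigidSurj w) : StrictMono (evalCube w) := by
  intro x y hxy
  have hnndist {p q : M} (hpq : p ≠ q) : 0 < nndist p q :=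
    pos_iff_ne_zero.mpr (mt nndist_eq_zero.mp hpq)
  obtain ⟨t, ht, htmin⟩ := Set.exists_min_image {v : V | 0 < (v : ℝ≥0)} id (Set.toFinite _)
    ⟨⟨_, hV.nndist_mem x y⟩, hnndist hxy.ne⟩
  have ht_nndist (p q : M) (hpq : p ≠ q) : (t : ℝ≥0) ≤ nndist p q :=
    htmin ⟨_, hV.nndist_mem p q⟩ (hnndist hpq)
  let δ := LipFun.pointMass hV.zero_mem ht_nndist
  obtain ⟨i, hi, hlt⟩ := hw.exists_apply_eq_forall_lt (δ x)
  -- Since `δ x` is below every function that is nonzero at `x` or beyond, and `w i` is its first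
  -- occurrence, the earlier letters of `w` vanish there.
  have hzero {j : Fin n} (hj : j < i) {z : M} (hz : x ≤ z) : w j z = ⟨0, hV.zero_mem⟩ := by
    by_contra hne
    have hwz : t ≤ w j z := htmin _ (pos_iff_ne_zero.mpr fun h ↦ hne (Subtype.ext h))
    exact (hlt j hj).not_ge ((LipFun.pointMass_mono hz).trans (LipFun.pointMass_le hwz))
  refine valueCube_lt_of i ?_ fun j hj ↦ (hzero hj le_rfl).trans (hzero hj hxy.le).symm
  change w i y < w i x
  rw [hi, LipFun.pointMass_apply_of_ne hxy.ne', LipFun.pointMass_apply_self]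
  exact ht

end Evaluation

theorem isOrderIsometricCopy_iff {A C : FinOrdMetricSpace} {s : Set C} :
    IsOrderIsometricCopy A C s ↔ ∃ f : A → C, Isometry f ∧ StrictMono f ∧ Set.range f = s := by
  constructor
  · rintro ⟨e, hdist, hle⟩
    refine ⟨fun x ↦ e x, .of_dist_eq hdist, strictMono_of_le_iff_le hle, ?_⟩
    rw [Set.range_comp' Subtype.val e, e.range_eq_univ]
    simp
  · rintro ⟨f, hf, hmono, rfl⟩
    exact ⟨.ofInjective f hf.injective, hf.dist_eq, fun _ _ ↦ hmono.le_iff_le.symm⟩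

theorem exists_forall_embedding_color_eq (A B : FinOrdMetricSpace) (κ : Type*) [Finite κ]
    [Nonempty κ] :
    ∃ C : FinOrdMetricSpace, ∀ χ : (A → C) → κ, ∃ g : B → C, Isometry g ∧ StrictMono g ∧
      ∃ col, ∀ f : A → B, Isometry f → StrictMono f → χ (g ∘ f) = col := by
  obtain ⟨V, hV⟩ := exists_isDistClosed B
  have (M : FinOrdMetricSpace) : Nonempty (LipFun V M) := ⟨⟨fun _ ↦ ⟨0, hV.zero_mem⟩, by simp⟩⟩
  obtain ⟨n, hn⟩ := dual_ramsey (LipFun V A) (LipFun V B) κ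
  refine ⟨valueCube V n, fun χ ↦ ?_⟩
  obtain ⟨w, hw, col, hcol⟩ := hn fun u ↦ χ (evalCube u)
  exact ⟨evalCube w, isometry_evalCube hV hw.surjective, strictMono_evalCube hV hw, col,
    fun f hf hmono ↦ hcol _ (LipFun.isRigidSurj_restrict hV hf hmono.monotone)⟩

/-- **Nešetřil's Ramsey theorem for finite linearly ordered metric spaces.** Given `c ≥ 1`
colors and finite linearly ordered metric spaces `A` and `B`, there is a finite linearly
ordered metric space `C` such that for every coloring with `c` colors of the subspaces of `C`
order isometric to `A` there is a subspace `B'` of `C` order isometric to `B` all of whose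
subspaces order isometric to `A` get the same color. -/
theorem nesetril_ordered_metric_ramsey (c : ℕ) (hc : 0 < c) (A B : FinOrdMetricSpace) :
    ∃ C : FinOrdMetricSpace,
      ∀ χ : {s : Set C // IsOrderIsometricCopy A C s} → Fin c,
        ∃ B' : Set C, IsOrderIsometricCopy B C B' ∧
          ∃ color : Fin c,
            ∀ s : {s : Set C // IsOrderIsometricCopy A C s}, (s : Set C) ⊆ B' → χ s = color := by
  classical
  have : Nonempty (Fin c) := ⟨⟨0, hc⟩⟩
  obtain ⟨C, hC⟩ := exists_forall_embedding_color_eq A B (Fin c)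
  refine ⟨C, fun χ ↦ ?_⟩
  obtain ⟨g, hg, hg_mono, col, hcol⟩ := hC fun u ↦
    if h : IsOrderIsometricCopy A C (Set.range u) then χ ⟨_, h⟩ else ⟨0, hc⟩
  refine ⟨Set.range g, isOrderIsometricCopy_iff.mpr ⟨g, hg, hg_mono, rfl⟩, col, ?_⟩
  rintro ⟨s, hs⟩ hsg
  obtain ⟨e, he, he_mono, rfl⟩ := isOrderIsometricCopy_iff.mp hs
  choose f hf using fun a ↦ hsg ⟨a, rfl⟩
  obtain rfl : g ∘ f = e := funext hf
  have hf_isometry : Isometry f := .of_dist_eq fun a b ↦ by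
    rw [← hg.dist_eq]
    exact he.dist_eq a b
  have hf_mono : StrictMono f := fun a b hab ↦ hg_mono.lt_iff_lt.mp (he_mono hab)
  rw [← hcol f hf_isometry hf_mono, dif_pos hs]
end

section
/- Let p₁, …, p_k be prime numbers and let c be a positive integer. Then: there exists l₁ such that for all n₁ ≥ l₁, there exists l₂ such that for all n₂ ≥ l₂, …, there exists l_k such that for all n_k ≥ l_k, for every coloring with c colors of the product ∏_{i=1}^{k} (ℤ/p_i)^{n_i : l_i} there exist full sets L₁ ⊆ (ℤ/p₁)^{n₁ : l₁}, …, L_k ⊆ (ℤ/p_k)^{n_k : l_k} such that L₁ × ⋯ × L_k is monochromatic. -/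
/-- The domain of a partial function from `[n]` to `ℤ/p`, represented as a function
`Fin n → Option (ZMod p)`. -/
def pdom {p n : ℕ} (f : Fin n → Option (ZMod p)) : Finset (Fin n) :=
  Finset.univ.filter fun i => (f i).isSome

/-- `(ℤ/p)^{n:l}`: the partial functions from `[n]` to `ℤ/p` whose domain has at least
`n - l` elements. -/
def PartBox (p n l : ℕ) : Type := {f : Fin n → Option (ZMod p) // n - l ≤ (pdom f).card}

/-- The restriction of a total function `h : [n] → ℤ/p` to a set `a ⊆ [n]`, as a partial
function. -/
def restr {p n : ℕ} (h : Fin n → ZMod p) (a : Finset (Fin n)) : Fin n → Option (ZMod p) :=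
  fun i => if i ∈ a then some (h i) else none

/-- A set `L ⊆ (ℤ/p)^{n:l}` is *full* if there are `h ∈ (ℤ/p)^n` and `a ⊆ [n]` with exactly
`n - l` elements such that for every `r ∈ ℤ/p` there is `a ⊆ a_r ⊆ [n]` with
`(r + h) ↾ a_r ∈ L`. -/
def IsFull (p n l : ℕ) (L : Set (PartBox p n l)) : Prop :=
  ∃ (h : Fin n → ZMod p) (a : Finset (Fin n)), a.card = n - l ∧
    ∀ r : ZMod p, ∃ ar : Finset (Fin n), a ⊆ ar ∧
      ∃ hmem : n - l ≤ (pdom (restr (fun i => r + h i) ar)).card,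
        (⟨restr (fun i => r + h i) ar, hmem⟩ : PartBox p n l) ∈ L

/-- The core Ramsey conclusion of the Farah–Solecki theorem, for a list `ts` of triples
`(pᵢ, nᵢ, lᵢ)`: every coloring with `c` colors of `∏ᵢ (ℤ/pᵢ)^{nᵢ:lᵢ}` admits full sets
`Lᵢ ⊆ (ℤ/pᵢ)^{nᵢ:lᵢ}` with `L₁ × ⋯ × L_k` monochromatic. -/
def FSCore (c : ℕ) (ts : List (ℕ × ℕ × ℕ)) : Prop :=
  ∀ χ : (∀ i : Fin ts.length, PartBox (ts.get i).1 (ts.get i).2.1 (ts.get i).2.2) → Fin c,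
    ∃ L : ∀ i : Fin ts.length, Set (PartBox (ts.get i).1 (ts.get i).2.1 (ts.get i).2.2),
      (∀ i, IsFull (ts.get i).1 (ts.get i).2.1 (ts.get i).2.2 (L i)) ∧
      ∃ color : Fin c,
        ∀ g : ∀ i : Fin ts.length, PartBox (ts.get i).1 (ts.get i).2.1 (ts.get i).2.2,
          (∀ i, g i ∈ L i) → χ g = color

/-- The alternating quantifier prefix `∃ l₁ ∀ n₁ ≥ l₁ ⋯ ∃ l_k ∀ n_k ≥ l_k` of the
Farah–Solecki theorem, by recursion on the list of remaining primes; `ts` accumulates the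
triples `(pᵢ, nᵢ, lᵢ)` already chosen. -/
def FSAux (c : ℕ) : List ℕ → List (ℕ × ℕ × ℕ) → Prop
  | [], ts => FSCore c ts
  | p :: ps, ts => ∃ l : ℕ, ∀ n : ℕ, l ≤ n → FSAux c ps (ts ++ [(p, n, l)])

/-!
Call a set of partial functions an `m`-face if its members restrict one total function and are all
defined on one set missing at most `m` points. A cycle of `m`-faces bounds in the complex of
`(m + 1)`-faces: forgetting the values at the points of `[n]` one at a time deforms it to a constant
chain. Hence, applying `1 - g` and `1 + g + ⋯ + g ^ (p - 1)` alternately, where `g` translates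
values by `1`, and filling the resulting cycles, one builds a chain of dimension `l` on `l`-faces
which is the image of the top cell of a free `ZMod p`-sphere.

Let `l` be `p` times the number of colors and suppose that no `l`-face has a color that occurs on
all of its translates. Then, as `p` is prime, the color profiles of the faces map equivariantly to
`ZMod p`. This map pushes the subdivision of the chain to a chain of nondecreasing color profiles
along flags of `l + 1` faces; the profiles have total size between `1` and `l`, so two consecutive
ones agree and the image is degenerate. But descent along the periodic complex, which is exact on
nondegenerate chains over `ZMod p`, shows that it is not. Products are handled one factor at a time,
coloring the last factor by colorings of the others.
-/

section Equivariant

lemma exists_equivariant (G X : Type*) [AddGroup G] [AddAction G X] :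
    ∃ σ : X → G, ∀ x, AddAction.stabilizer G x = ⊥ → ∀ g : G, σ (g +ᵥ x) = g + σ x := by
  let rep (x : X) : X := (Quotient.mk (AddAction.orbitRel G X) x).out
  have hrep (x : X) : ∃ g : G, g +ᵥ rep x = x :=
    AddAction.orbitRel_apply.1
      ((AddAction.orbitRel G X).symm (Quotient.mk_out (s := AddAction.orbitRel G X) x))
  have hrep_vadd (g : G) (x : X) : rep (g +ᵥ x) = rep x := congrArg Quotient.out
    (Quotient.sound (s := AddAction.orbitRel G X) (AddAction.orbitRel_apply.2 ⟨g, rfl⟩))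
  choose σ hσ using hrep
  refine ⟨σ, fun x hx g => ?_⟩
  have hrep_eq : -σ x +ᵥ x = rep x := neg_vadd_eq_iff.2 (hσ x).symm
  have hmem : -g + (σ (g +ᵥ x) + -σ x) ∈ AddAction.stabilizer G x := by
    rw [AddAction.mem_stabilizer_iff, add_vadd, add_vadd, hrep_eq, ← hrep_vadd g, hσ,
      neg_vadd_vadd]
  rw [hx, AddSubgroup.mem_bot, neg_add_eq_zero, eq_add_neg_iff_add_eq] at hmem
  exact hmem.symm

lemma exists_shift_equivariant (p : ℕ) [Fact p.Prime] (A : Type*) :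
    ∃ σ : (ZMod p → A) → ZMod p, ∀ q : ZMod p → A, (¬ ∀ r, q r = q 0) →
      ∀ t, σ (fun r => q (r + t)) = t + σ q := by
  obtain ⟨σ, hσ⟩ := exists_equivariant (ZMod p)ᵈᵃᵃ (ZMod p → A)
  refine ⟨fun q => DomAddAct.mk.symm (σ q), fun q hq t => ?_⟩
  have hbot : AddAction.stabilizer (ZMod p)ᵈᵃᵃ q = ⊥ := by
    have : Fact (Nat.card (ZMod p)ᵈᵃᵃ).Prime := by
      rw [← Nat.card_congr DomAddAct.mk, Nat.card_zmod]; infer_instance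
    refine (AddSubgroup.eq_bot_or_eq_top_of_prime_card _).resolve_right fun htop => hq fun r => ?_
    have hr : DomAddAct.mk r +ᵥ q = q := AddAction.mem_stabilizer_iff.1 (htop ▸ trivial)
    simpa [DomAddAct.vadd_apply] using congrFun hr 0
  have hshift : DomAddAct.mk t +ᵥ q = fun r => q (r + t) := by
    funext r
    simp [DomAddAct.vadd_apply, add_comm]
  simp only [← hshift, hσ q hbot, add_comm (DomAddAct.mk t)]
  rfl

end Equivariant

/-- Ordered simplicial chains on the vertex set `V` with coefficients in `R`: a list of length
`k + 1` is an ordered `k`-simplex, possibly with repeated vertices, and the empty list is the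
simplex of dimension `-1`. -/
abbrev ListChain (R V : Type*) [Zero R] := List V →₀ R

namespace ListChain

open Finsupp

section Chains

variable {R : Type*} [CommRing R] {V W M : Type*} [AddCommGroup M] [Module R M]

lemma map_mem_of_mem_supported {f : ListChain R V →ₗ[R] M} {s : Set (List V)} {N : Submodule R M}
    (h : ∀ F ∈ s, f (single F 1) ∈ N) {z : ListChain R V} (hz : z ∈ supported R R s) :
    f z ∈ N := by
  have hle : supported R R s ≤ N.comap f := by
    rw [supported_eq_span_single, Submodule.span_le]
    rintro _ ⟨F, hF, rfl⟩
    exact h F hF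
  exact hle hz

lemma map_mem_of_single {f : ListChain R V →ₗ[R] M} {N : Submodule R M}
    (h : ∀ F, f (single F 1) ∈ N) (z : ListChain R V) : f z ∈ N :=
  map_mem_of_mem_supported (s := Set.univ) (fun F _ => h F) (by simp [supported_univ])

lemma eq_of_mem_supported {f g : ListChain R V →ₗ[R] M} {s : Set (List V)}
    (h : ∀ F ∈ s, f (single F 1) = g (single F 1)) {z : ListChain R V}
    (hz : z ∈ supported R R s) : f z = g z := by
  have hmem : (f - g) z ∈ (⊥ : Submodule R M) :=
    map_mem_of_mem_supported (fun F hF => by simp [h F hF]) hz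
  simpa [sub_eq_zero] using hmem

lemma eq_of_single {f g : ListChain R V →ₗ[R] M}
    (h : ∀ F, f (single F 1) = g (single F 1)) (z : ListChain R V) : f z = g z :=
  eq_of_mem_supported (s := Set.univ) (fun F _ => h F) (by simp [supported_univ])

/-- The chain map induced by a map of vertices. -/
noncomputable def map (u : V → W) : ListChain R V →ₗ[R] ListChain R W :=
  lmapDomain R R (List.map u)

/-- The cone operator with apex `v`, which puts `v` in front of every list. -/
noncomputable def cone (v : V) : ListChain R V →ₗ[R] ListChain R V :=
  lmapDomain R R (List.cons v)

/-- The boundary of a single ordered simplex, expanded along its first vertex; it is the usual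
alternating sum of the faces. -/
noncomputable def simplexBoundary : List V → ListChain R V
  | [] => 0
  | v :: F => single F 1 - cone v (simplexBoundary F)

/-- The augmented simplicial boundary operator. -/
noncomputable def boundary : ListChain R V →ₗ[R] ListChain R V :=
  linearCombination R simplexBoundary

@[simp] lemma map_single (u : V → W) (F : List V) :
    map u (single F (1 : R)) = single (F.map u) 1 := by simp [map]

@[simp] lemma cone_single (v : V) (F : List V) :
    cone v (single F (1 : R)) = single (v :: F) 1 := by simp [cone]

@[simp] lemma boundary_single_nil : boundary (single ([] : List V) (1 : R)) = 0 := by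
  simp [boundary, simplexBoundary]

lemma boundary_single_cons (v : V) (F : List V) : boundary (single (v :: F) (1 : R)) =
    single F 1 - cone v (boundary (single F 1)) := by
  simp [boundary, simplexBoundary]

@[simp] lemma map_id (z : ListChain R V) : map (fun v => v) z = z :=
  eq_of_single (g := LinearMap.id) (fun F => by simp) z

lemma map_map {X : Type*} (u : W → X) (w : V → W) (z : ListChain R V) :
    map u (map w z) = map (u ∘ w) z :=
  eq_of_single (f := map u ∘ₗ map w) (fun F => by simp) z

lemma map_cone (u : V → W) (v : V) (z : ListChain R V) :
    map u (cone v z) = cone (u v) (map u z) :=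
  eq_of_single (f := map u ∘ₗ cone v) (g := cone (u v) ∘ₗ map u) (fun F => by simp) z

lemma boundary_cone (v : V) (z : ListChain R V) :
    boundary (cone v z) = z - cone v (boundary z) :=
  eq_of_single (f := boundary ∘ₗ cone v) (g := LinearMap.id - cone v ∘ₗ boundary)
    (fun F => by simp [boundary_single_cons]) z

@[simp] lemma boundary_boundary (z : ListChain R V) : boundary (boundary z) = 0 := by
  refine eq_of_single (f := boundary ∘ₗ boundary) (g := 0) (fun F => ?_) z
  simp only [LinearMap.comp_apply, LinearMap.zero_apply]
  induction F with
  | nil => simp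
  | cons v F ih => rw [boundary_single_cons, map_sub, boundary_cone, ih]; simp

lemma boundary_map (u : V → W) (z : ListChain R V) :
    boundary (map u z) = map u (boundary z) := by
  refine eq_of_single (f := boundary ∘ₗ map u) (g := map u ∘ₗ boundary) (fun F => ?_) z
  simp only [LinearMap.comp_apply]
  induction F with
  | nil => simp
  | cons v F ih =>
    rw [map_single] at ih ⊢
    rw [List.map_cons, boundary_single_cons, boundary_single_cons, ih, map_sub, map_cone,
      map_single]

lemma boundary_single_mem_supported (F : List V) : boundary (single F (1 : R)) ∈
    supported R R {G | G.length + 1 = F.length ∧ G.Sublist F} := by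
  induction F with
  | nil => simp
  | cons v F ih =>
    rw [boundary_single_cons]
    refine Submodule.sub_mem _ (single_mem_supported _ _ (by simp)) ?_
    refine map_mem_of_mem_supported (fun G hG => ?_) ih
    rw [cone_single]
    exact single_mem_supported _ _ ⟨by simp [hG.1], hG.2.cons_cons v⟩

/-- The prism between `u F` and `w F` over a single simplex `F`. -/
noncomputable def simplexPrism (u w : V → W) : List V → ListChain R W
  | [] => 0
  | v :: F => single (u v :: w v :: F.map w) 1 - cone (u v) (simplexPrism u w F)

/-- The prism operator, a chain homotopy from `map u` to `map w`. -/
noncomputable def prism (u w : V → W) : ListChain R V →ₗ[R] ListChain R W :=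
  linearCombination R (simplexPrism u w)

lemma prism_single (u w : V → W) (F : List V) :
    prism u w (single F (1 : R)) = simplexPrism u w F := by simp [prism]

lemma prism_cone (u w : V → W) (v : V) (z : ListChain R V) :
    prism u w (cone v z) = cone (u v) (cone (w v) (map w z)) - cone (u v) (prism u w z) :=
  eq_of_single (f := prism u w ∘ₗ cone v)
    (g := cone (u v) ∘ₗ cone (w v) ∘ₗ map w - cone (u v) ∘ₗ prism u w)
    (fun F => by simp [prism_single, simplexPrism]) z

lemma boundary_prism (u w : V → W) (z : ListChain R V) :
    boundary (prism u w z) = map w z - map u z - prism u w (boundary z) := by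
  refine eq_of_single (f := boundary ∘ₗ prism u w) (g := map w - map u - prism u w ∘ₗ boundary)
    (fun F => ?_) z
  simp only [LinearMap.comp_apply, LinearMap.sub_apply]
  induction F with
  | nil => simp [prism_single, simplexPrism]
  | cons v F ih =>
    rw [← cone_single]
    simp only [prism_cone, boundary_cone, boundary_map, map_cone, map_sub, ih]
    abel

lemma simplexPrism_mem_supported (u w : V → W) (F : List V) : simplexPrism u w F ∈
    supported R R {G : List W | G.length = F.length + 1 ∧ G ⊆ F.map u ++ F.map w} := by
  induction F with
  | nil => simp [simplexPrism]
  | cons v F ih =>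
    refine Submodule.sub_mem _ (single_mem_supported _ _ ⟨by simp, ?_⟩) ?_
    · simp
    · refine map_mem_of_mem_supported (fun G hG => ?_) ih
      rw [cone_single]
      refine single_mem_supported _ _ ⟨by simp [hG.1], ?_⟩
      have := hG.2
      grind

end Chains

section Complexes

variable {R : Type*} [CommRing R] {V W : Type*}

/-- The chains on lists of length `k` whose vertices form a face of the simplicial complex `K`,
which is given as a downward closed family of sets of vertices. -/
def chains (R : Type*) [CommRing R] (K : LowerSet (Set V)) (k : ℕ) :
    Submodule R (ListChain R V) :=
  supported R R {F | F.length = k ∧ {v | v ∈ F} ∈ K}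

lemma chains_mono {K L : LowerSet (Set V)} (h : K ≤ L) (k : ℕ) : chains R K k ≤ chains R L k :=
  supported_mono fun _ hF => ⟨hF.1, h hF.2⟩

lemma boundary_mem_chains {K : LowerSet (Set V)} {k : ℕ} {z : ListChain R V}
    (hz : z ∈ chains R K (k + 1)) : boundary z ∈ chains R K k := by
  refine map_mem_of_mem_supported (fun F hF => ?_) hz
  refine supported_mono ?_ (boundary_single_mem_supported F)
  rintro G ⟨hlen, hsub⟩
  exact ⟨Nat.succ_injective (hlen.trans hF.1), K.lower (fun v hv => hsub.subset hv) hF.2⟩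

lemma map_mem_chains {K : LowerSet (Set V)} {L : LowerSet (Set W)} {u : V → W}
    (hu : ∀ S ∈ K, u '' S ∈ L) {k : ℕ} {z : ListChain R V} (hz : z ∈ chains R K k) :
    map u z ∈ chains R L k := by
  refine map_mem_of_mem_supported (fun F hF => ?_) hz
  rw [map_single]
  refine single_mem_supported _ _ ⟨by simp [hF.1], L.lower (fun w hw => ?_) (hu _ hF.2)⟩
  simpa using hw

lemma map_sub_map_mem_boundaries {K : LowerSet (Set V)} {L : LowerSet (Set W)} {u w : V → W}
    (huw : ∀ S ∈ K, u '' S ∪ w '' S ∈ L) {k : ℕ} {z : ListChain R V} (hz : z ∈ chains R K k)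
    (hcycle : boundary z = 0) : map w z - map u z ∈ (chains R L (k + 1)).map boundary := by
  refine ⟨prism u w z, ?_, by simp [boundary_prism, hcycle]⟩
  refine map_mem_of_mem_supported (fun F hF => ?_) hz
  rw [prism_single]
  refine supported_mono ?_ (simplexPrism_mem_supported u w F)
  rintro G ⟨hlen, hsub⟩
  refine ⟨by rw [hlen, hF.1], L.lower (fun v hv => ?_) (huw _ hF.2)⟩
  simpa using hsub hv

lemma map_const_mem_boundaries {L : LowerSet (Set W)} {w : W} (hw : {w} ∈ L) {k : ℕ}
    {K : LowerSet (Set V)} {z : ListChain R V} (hz : z ∈ chains R K k) (hcycle : boundary z = 0) :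
    map (fun _ => w) z ∈ (chains R L (k + 1)).map boundary := by
  refine ⟨cone w (map (fun _ => w) z), ?_, by simp [boundary_cone, boundary_map, hcycle]⟩
  refine map_mem_of_mem_supported (f := cone w ∘ₗ map fun _ => w) (fun F hF => ?_) hz
  rw [LinearMap.comp_apply, map_single, cone_single]
  refine single_mem_supported _ _ ⟨by simp [hF.1], L.lower (fun v hv => ?_) hw⟩
  simp only [Set.mem_ofPred_eq, List.mem_cons, List.mem_map] at hv
  grind

end Complexes

section Subdivision

variable {R : Type*} [CommRing R] {V W : Type*}

/-- The span of the lists with two equal consecutive entries. -/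
def degenerate (R W : Type*) [CommRing R] : Submodule R (ListChain R W) :=
  supported R R {F | ¬ F.IsChain (· ≠ ·)}

lemma cone_mem_degenerate (w : W) {z : ListChain R W} (hz : z ∈ degenerate R W) :
    cone w z ∈ degenerate R W := by
  refine map_mem_of_mem_supported (fun F hF => ?_) hz
  rw [cone_single]
  exact single_mem_supported _ _ fun h => hF h.tail

lemma cone_cone_mem_degenerate (w : W) (z : ListChain R W) :
    cone w (cone w z) ∈ degenerate R W := by
  refine map_mem_of_single (f := cone w ∘ₗ cone w) (fun F => ?_) z
  rw [LinearMap.comp_apply, cone_single, cone_single]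
  exact single_mem_supported _ _ (by simp)

lemma boundary_mem_degenerate {z : ListChain R W} (hz : z ∈ degenerate R W) :
    boundary z ∈ degenerate R W := by
  refine map_mem_of_mem_supported (fun F hF => ?_) hz
  induction F with
  | nil => simp at hF
  | cons v F ih =>
    rw [boundary_single_cons]
    by_cases hF' : F.IsChain (· ≠ ·)
    · obtain ⟨F, rfl⟩ : ∃ G, F = v :: G := by
        rcases F with _ | ⟨w, F⟩
        · simp at hF
        · simp only [Set.mem_ofPred_eq, List.isChain_cons_cons, hF', and_true, not_not] at hF
          exact ⟨F, by rw [hF]⟩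
      rw [boundary_single_cons, map_sub, cone_single, sub_sub_cancel]
      exact cone_cone_mem_degenerate v _
    · exact Submodule.sub_mem _ (single_mem_supported _ _ hF')
        (cone_mem_degenerate v (ih hF'))

lemma map_mem_degenerate {X : Type*} {u : W → X} {z : ListChain R W}
    (hz : z ∈ degenerate R W) : map u z ∈ degenerate R X := by
  refine map_mem_of_mem_supported (fun F hF => ?_) hz
  rw [map_single]
  exact single_mem_supported _ _ fun h =>
    hF (((List.isChain_map u).1 h).imp fun _ _ hne heq => hne (congrArg u heq))

/-- The chain map determined by a label `s F : W` for every simplex `F` over `V`: a simplex is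
subdivided into its complete flags, and each flag is replaced by the list of its labels, largest
simplex first. The natural number is the common length of the lists that are subdivided. -/
noncomputable def subdivision (s : List V → W) : ℕ → ListChain R V →ₗ[R] ListChain R W
  | 0 => linearCombination R fun _ => single [] 1
  | k + 1 => linearCombination R fun F =>
      cone (s F) (subdivision s k (boundary (single F 1)))

variable (s : List V → W)

@[simp] lemma subdivision_zero_single (F : List V) :
    subdivision s 0 (single F (1 : R)) = single [] 1 := by
  simp [subdivision]

lemma subdivision_succ_single (k : ℕ) (F : List V) :
    subdivision s (k + 1) (single F (1 : R)) =
      cone (s F) (subdivision s k (boundary (single F 1))) := by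
  simp [subdivision]

lemma boundary_subdivision (k : ℕ) (z : ListChain R V) :
    boundary (subdivision s (k + 1) z) = subdivision s k (boundary z) := by
  refine eq_of_single (f := boundary ∘ₗ subdivision s (k + 1)) (g := subdivision s k ∘ₗ boundary)
    (fun F => ?_) z
  simp only [LinearMap.comp_apply, subdivision_succ_single, boundary_cone]
  suffices h : boundary (subdivision s k (boundary (single F (1 : R)))) = 0 by
    rw [h, map_zero, sub_zero]
  cases k with
  | zero =>
    exact eq_of_single (f := boundary (R := R) ∘ₗ subdivision s 0) (g := 0) (by simp) _
  | succ k => rw [boundary_subdivision k, boundary_boundary, map_zero]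

lemma subdivision_map {X Y : Type*} {s : List V → W} {s' : List X → Y} {u : V → X} {w : W → Y}
    {K : LowerSet (Set V)} (hs : ∀ F ≠ [], {v | v ∈ F} ∈ K → s' (F.map u) = w (s F)) {k : ℕ}
    {z : ListChain R V} (hz : z ∈ chains R K k) :
    subdivision s' k (map u z) = map w (subdivision s k z) := by
  induction k generalizing z with
  | zero =>
    exact eq_of_single (f := subdivision s' 0 ∘ₗ map u) (g := map w ∘ₗ subdivision s 0)
      (by simp) z
  | succ k ih =>
    refine eq_of_mem_supported (f := subdivision s' (k + 1) ∘ₗ map u)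
      (g := map w ∘ₗ subdivision s (k + 1)) (fun F hF => ?_) hz
    have hne : F ≠ [] := List.ne_nil_of_length_eq_add_one hF.1
    rw [LinearMap.comp_apply, LinearMap.comp_apply, subdivision_succ_single, map_cone,
      ← hs F hne hF.2, ← ih (boundary_mem_chains (single_mem_supported _ _ hF)), map_single,
      subdivision_succ_single, ← map_single, boundary_map]

lemma subdivision_mem_chains_top (k : ℕ) (z : ListChain R V) :
    subdivision s k z ∈ chains R ⊤ k := by
  refine map_mem_of_single (fun F => ?_) z
  induction k generalizing F with
  | zero =>
    rw [subdivision_zero_single]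
    exact single_mem_supported _ _ ⟨rfl, trivial⟩
  | succ k ih =>
    rw [subdivision_succ_single]
    refine map_mem_of_mem_supported (fun G hG => ?_) (map_mem_of_single ih (boundary (single F 1)))
    rw [cone_single]
    exact single_mem_supported _ _ ⟨by simp [hG.1], trivial⟩

lemma subdivision_single_mem_degenerate {rk : List V → ℕ} (hpos : ∀ F ≠ [], 0 < rk F)
    (hmono : ∀ F G, G.Sublist F → rk G ≤ rk F)
    (hs : ∀ F G, G.Sublist F → rk G = rk F → s G = s F) {F : List V} (hF : rk F < F.length) :
    subdivision s F.length (single F (1 : R)) ∈ degenerate R W := by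
  obtain ⟨k, hk⟩ : ∃ k, F.length = k := ⟨_, rfl⟩
  rw [hk] at hF ⊢
  induction k generalizing F with
  | zero => omega
  | succ k ih =>
    have hrk : 0 < rk F := hpos F (List.ne_nil_of_length_eq_add_one hk)
    rw [subdivision_succ_single]
    refine map_mem_of_mem_supported (f := cone (R := R) (s F) ∘ₗ subdivision s k) (fun G hG => ?_)
      (boundary_single_mem_supported F)
    rw [LinearMap.comp_apply]
    have hlen : G.length = k := by have := hG.1; omega
    rcases (hmono F G hG.2).lt_or_eq with hlt | heq
    · exact cone_mem_degenerate _ (ih (by omega) hlen)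
    · obtain ⟨k, rfl⟩ := Nat.exists_eq_add_of_lt (show 0 < k by omega)
      rw [zero_add, subdivision_succ_single, hs F G hG.2 heq]
      exact cone_cone_mem_degenerate _ _

end Subdivision

section Periodic

variable {R : Type*} [CommRing R] {p : ℕ} {V W : Type*} [AddAction (ZMod p) V]
  [AddAction (ZMod p) W]

lemma map_vadd_map_vadd (s t : ZMod p) (z : ListChain R V) :
    map (s +ᵥ ·) (map (t +ᵥ ·) z) = map ((s + t) +ᵥ ·) z := by
  rw [map_map]
  congr 2
  ext v
  exact vadd_vadd s t v

lemma map_vadd_comm (s t : ZMod p) (z : ListChain R V) :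
    map (s +ᵥ ·) (map (t +ᵥ ·) z) = map (t +ᵥ ·) (map (s +ᵥ ·) z) := by
  rw [map_vadd_map_vadd, map_vadd_map_vadd, add_comm]

@[simp] lemma map_zero_vadd (z : ListChain R V) : map ((0 : ZMod p) +ᵥ ·) z = z := by
  simp only [zero_vadd, map_id]

variable [NeZero p]

/-- With `g` the translation by `1 : ZMod p`, the operator `1 - g` for even `j` and the norm
`1 + g + ⋯ + g ^ (p - 1)` for odd `j`: the differentials of the periodic resolution of `ZMod p`. -/
noncomputable def periodicOp (p : ℕ) [NeZero p] [AddAction (ZMod p) V] (j : ℕ) :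
    ListChain R V →ₗ[R] ListChain R V :=
  if Even j then LinearMap.id - map ((1 : ZMod p) +ᵥ ·) else ∑ r : ZMod p, map (r +ᵥ ·)

lemma periodicOp_of_even {j : ℕ} (hj : Even j) (z : ListChain R V) :
    periodicOp p j z = z - map ((1 : ZMod p) +ᵥ ·) z := by
  simp [periodicOp, hj]

lemma periodicOp_of_not_even {j : ℕ} (hj : ¬ Even j) (z : ListChain R V) :
    periodicOp p j z = ∑ r : ZMod p, map (r +ᵥ ·) z := by
  simp [periodicOp, hj]

lemma periodicOp_add_two (j : ℕ) :
    (periodicOp p (j + 2) : ListChain R V →ₗ[R] ListChain R V) = periodicOp p j := by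
  simp [periodicOp, Nat.even_add]

lemma periodicOp_mem {N : Submodule R (ListChain R V)}
    (hN : ∀ t : ZMod p, ∀ z ∈ N, map (t +ᵥ ·) z ∈ N) (j : ℕ) {z : ListChain R V} (hz : z ∈ N) :
    periodicOp p j z ∈ N := by
  by_cases hj : Even j
  · rw [periodicOp_of_even hj]
    exact N.sub_mem hz (hN 1 z hz)
  · rw [periodicOp_of_not_even hj]
    exact N.sum_mem fun r _ => hN r z hz

lemma map_periodicOp_of_commute {Φ : ListChain R V →ₗ[R] ListChain R W} {z : ListChain R V}
    (hΦ : ∀ t : ZMod p, Φ (map (t +ᵥ ·) z) = map (t +ᵥ ·) (Φ z)) (j : ℕ) :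
    Φ (periodicOp p j z) = periodicOp p j (Φ z) := by
  by_cases hj : Even j
  · rw [periodicOp_of_even hj, periodicOp_of_even hj, map_sub, hΦ]
  · simp only [periodicOp_of_not_even hj, map_sum, hΦ]

lemma boundary_periodicOp (j : ℕ) (z : ListChain R V) :
    boundary (periodicOp p j z) = periodicOp p j (boundary z) :=
  map_periodicOp_of_commute (fun _ => boundary_map _ z) j

lemma periodicOp_succ_periodicOp (j : ℕ) (z : ListChain R V) :
    periodicOp p (j + 1) (periodicOp p j z) = 0 := by
  have hsum : ∑ r : ZMod p, map ((r + 1) +ᵥ ·) z = ∑ r : ZMod p, map (r +ᵥ ·) z :=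
    Equiv.sum_comp (Equiv.addRight (1 : ZMod p)) fun r => map (r +ᵥ ·) z
  by_cases hj : Even j
  · rw [periodicOp_of_not_even (by simpa [Nat.even_add_one] using hj), periodicOp_of_even hj]
    simp only [map_sub, map_vadd_map_vadd, Finset.sum_sub_distrib, hsum, sub_self]
  · rw [periodicOp_of_even (by simpa [Nat.even_add_one] using hj), periodicOp_of_not_even hj]
    simp only [map_sum, map_vadd_map_vadd, add_comm (1 : ZMod p), hsum, sub_self]

lemma sub_map_vadd_mem {N : Submodule R (ListChain R V)}
    (hN : ∀ z ∈ N, map ((1 : ZMod p) +ᵥ ·) z ∈ N) {z : ListChain R V}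
    (hz : z - map ((1 : ZMod p) +ᵥ ·) z ∈ N) (r : ZMod p) : z - map (r +ᵥ ·) z ∈ N := by
  rw [← ZMod.natCast_zmod_val r]
  induction r.val with
  | zero => simp
  | succ k ih =>
    have h := N.add_mem hz (hN _ ih)
    rwa [map_sub, map_vadd_map_vadd, sub_add_sub_cancel, add_comm, ← Nat.cast_add_one] at h

lemma sub_map_vadd_mem_range_periodicOp {j : ℕ} (hj : Even j) (z : ListChain R V) (r : ZMod p) :
    z - map (r +ᵥ ·) z ∈ LinearMap.range (periodicOp p j : ListChain R V →ₗ[R] _) := by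
  refine sub_map_vadd_mem ?_ (LinearMap.mem_range.2 ⟨z, periodicOp_of_even hj z⟩) r
  rintro _ ⟨y, rfl⟩
  exact ⟨_, (map_periodicOp_of_commute (fun t => map_vadd_comm 1 t y) j).symm⟩

end Periodic

section Descent

variable {R : Type*} [CommRing R] {W : Type*} [DecidableEq W]

/-- The part of a chain supported on the nondegenerate lists with first entry `w`. -/
noncomputable def headPart (w : W) : ListChain R W →ₗ[R] ListChain R W :=
  linearCombination R fun F =>
    if F.head? = some w ∧ F.IsChain (· ≠ ·) then single F 1 else 0

lemma headPart_single (w : W) (F : List W) : headPart w (single F (1 : R)) =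
    if F.head? = some w ∧ F.IsChain (· ≠ ·) then single F 1 else 0 := by
  simp [headPart]

lemma headPart_of_mem_degenerate (w : W) {z : ListChain R W} (hz : z ∈ degenerate R W) :
    headPart w z = 0 :=
  eq_of_mem_supported (g := 0) (fun F hF => by simp [headPart_single, show ¬ _ from hF]) hz

lemma headPart_map {X : Type*} [DecidableEq X] {u : W → X} (hu : u.Injective) (w : W)
    (z : ListChain R W) : headPart (u w) (map u z) = map u (headPart w z) := by
  refine eq_of_single (f := headPart (u w) ∘ₗ map u) (g := map u ∘ₗ headPart w) (fun F => ?_) z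
  simp only [LinearMap.comp_apply, map_single, headPart_single, List.head?_map, List.isChain_map,
    hu.ne_iff, Option.map_eq_some_iff, hu.eq_iff, exists_eq_right]
  split_ifs <;> simp

lemma sub_sum_headPart_mem [Fintype W] [Nonempty W] (z : ListChain R W) :
    z - ∑ w, headPart w z ∈ LinearMap.range (boundary (R := R)) ⊔ degenerate R W := by
  suffices h : (LinearMap.id - ∑ w, headPart w : ListChain R W →ₗ[R] ListChain R W) z ∈
      LinearMap.range (boundary (R := R)) ⊔ degenerate R W by simpa using h
  refine map_mem_of_single (fun F => ?_) z
  simp only [LinearMap.sub_apply, LinearMap.id_apply, LinearMap.sum_apply, headPart_single]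
  rcases F with _ | ⟨v, F⟩
  · obtain ⟨w⟩ := ‹Nonempty W›
    refine Submodule.mem_sup_left ⟨single [w] 1, ?_⟩
    simp [boundary_single_cons]
  · refine Submodule.mem_sup_right ?_
    by_cases hF : (v :: F).IsChain (· ≠ ·)
    · simp [hF]
    · simpa [hF, degenerate] using single_mem_supported R (1 : R) hF

/-- The sum of the boundaries, the image of the next periodic operator and the degenerate chains
over the vertex set `ZMod p`. A fundamental chain of degree `j` never lies in it. -/
noncomputable def inessential (R : Type*) [CommRing R] (p : ℕ) [NeZero p] (j : ℕ) :
    Submodule R (ListChain R (ZMod p)) :=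
  LinearMap.range boundary ⊔ LinearMap.range (periodicOp p (j + 1)) ⊔ degenerate R (ZMod p)

lemma mem_inessential_of_sum_headPart_mem {p : ℕ} [NeZero p] {j : ℕ} {z : ListChain R (ZMod p)}
    (hz : ∑ r, headPart r z ∈ LinearMap.range (periodicOp (R := R) p (j + 1))) :
    z ∈ inessential R p j := by
  rw [← sub_add_cancel z (∑ r, headPart r z)]
  refine Submodule.add_mem _ ?_ (Submodule.mem_sup_left (Submodule.mem_sup_right hz))
  exact (sup_le_sup_right le_sup_left _ : _ ≤ inessential R p j) (sub_sum_headPart_mem z)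

/-- Translation permutes the head parts of a chain freely. -/
lemma mem_inessential_of_periodicOp_mem_degenerate {p : ℕ} [NeZero p] {j : ℕ}
    {z : ListChain R (ZMod p)} (hz : periodicOp p j z ∈ degenerate R (ZMod p)) :
    z ∈ inessential R p j := by
  refine mem_inessential_of_sum_headPart_mem ?_
  have hhead (t r : ZMod p) (y : ListChain R (ZMod p)) :
      headPart (t + r) (map (t +ᵥ ·) y) = map (t +ᵥ ·) (headPart r y) :=
    headPart_map (add_right_injective t) r y
  by_cases hj : Even j
  · rw [periodicOp_of_even hj] at hz
    have horbit (r : ZMod p) : headPart r z = map (r +ᵥ ·) (headPart 0 z) := by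
      rw [← hhead, add_zero, ← sub_eq_zero, ← map_sub]
      exact headPart_of_mem_degenerate r
        (sub_map_vadd_mem (fun _ hy => map_mem_degenerate hy) hz r)
    refine ⟨headPart 0 z, ?_⟩
    rw [periodicOp_of_not_even (by simpa [Nat.even_add_one] using hj)]
    exact Finset.sum_congr rfl fun r _ => (horbit r).symm
  · rw [periodicOp_of_not_even hj] at hz
    have hzero : ∑ r : ZMod p, map (-r +ᵥ ·) (headPart r z) = 0 := by
      rw [← headPart_of_mem_degenerate 0 hz, map_sum, ← Equiv.sum_comp (Equiv.neg (ZMod p))]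
      refine Finset.sum_congr rfl fun r _ => ?_
      rw [Equiv.neg_apply, neg_neg, ← hhead, add_neg_cancel]
    have hsum : ∑ r, headPart r z =
        ∑ r : ZMod p, (headPart r z - map (-r +ᵥ ·) (headPart r z)) := by
      rw [Finset.sum_sub_distrib, hzero, sub_zero]
    rw [hsum]
    exact Submodule.sum_mem _ fun r _ => sub_map_vadd_mem_range_periodicOp
      (by simpa [Nat.even_add_one] using hj) _ (-r)

end Descent

section FundamentalChain

variable {R : Type*} [CommRing R] {p : ℕ} [NeZero p] {V : Type*} [AddAction (ZMod p) V]

/-- Fundamental chains of degree `j` in `K`: `j + 1`-fold iterates, starting from a vertex, of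
applying a periodic operator and filling the resulting cycle. They play the role of the top cell
of a `j`-dimensional free `ZMod p`-sphere mapped equivariantly to `K`. -/
inductive IsFundamentalChain (R : Type*) [CommRing R] (p : ℕ) [NeZero p] [AddAction (ZMod p) V]
    (K : LowerSet (Set V)) : ℕ → ListChain R V → Prop
  | vertex {v : V} (hv : {v} ∈ K) : IsFundamentalChain R p K 0 (single [v] 1)
  | fill {j : ℕ} {x y : ListChain R V} (hx : IsFundamentalChain R p K j x)
      (hy : y ∈ chains R K (j + 2)) (hxy : boundary y = periodicOp p j x) :
      IsFundamentalChain R p K (j + 1) y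

namespace IsFundamentalChain

variable {K L : LowerSet (Set V)} {j : ℕ} {x : ListChain R V}

lemma mem_chains (hx : IsFundamentalChain R p K j x) : x ∈ chains R K (j + 1) := by
  induction hx with
  | @vertex v hv => exact single_mem_supported R _ ⟨rfl, by simpa using hv⟩
  | fill _ hy _ _ => exact hy

lemma mono (hx : IsFundamentalChain R p K j x) (hKL : K ≤ L) : IsFundamentalChain R p L j x := by
  induction hx with
  | vertex hv => exact .vertex (hKL hv)
  | fill _ hy hxy ih => exact .fill ih (chains_mono hKL _ hy) hxy

lemma boundary_periodicOp_eq_zero (hx : IsFundamentalChain R p K j x) :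
    boundary (periodicOp p j x) = 0 := by
  rw [boundary_periodicOp]
  cases hx with
  | vertex => simp [boundary_single_cons, periodicOp_of_even]
  | fill _ _ hxy => rw [hxy, periodicOp_succ_periodicOp]

lemma exists_of_filtration {K : ℕ → LowerSet (Set V)} (hmono : Monotone K)
    (hvadd : ∀ j, ∀ S ∈ K j, ∀ t : ZMod p, (t +ᵥ ·) '' S ∈ K j)
    (hfill : ∀ j, ∀ z ∈ chains R (K j) (j + 1), boundary z = 0 →
      z ∈ (chains R (K (j + 1)) (j + 2)).map boundary)
    {v : V} (hv : {v} ∈ K 0) (j : ℕ) : ∃ x : ListChain R V, IsFundamentalChain R p (K j) j x := by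
  induction j with
  | zero => exact ⟨_, vertex hv⟩
  | succ j ih =>
    obtain ⟨x, hx⟩ := ih
    have hcycle : periodicOp p j x ∈ chains R (K j) (j + 1) :=
      periodicOp_mem (fun t _ hz => map_mem_chains (fun S hS => hvadd j S hS t) hz) j hx.mem_chains
    obtain ⟨y, hy, hxy⟩ := hfill j _ hcycle hx.boundary_periodicOp_eq_zero
    exact ⟨y, (hx.mono (hmono j.le_succ)).fill hy hxy⟩

lemma subdivision {W : Type*} [AddAction (ZMod p) W] {s : List V → W}
    (hs : ∀ F ≠ [], {v | v ∈ F} ∈ K → ∀ t : ZMod p, s (F.map (t +ᵥ ·)) = t +ᵥ s F)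
    (hx : IsFundamentalChain R p K j x) :
    IsFundamentalChain R p ⊤ j (subdivision s (j + 1) x) := by
  induction hx with
  | @vertex v hv =>
    rw [subdivision_succ_single]
    simpa [boundary_single_cons] using vertex (R := R) (p := p) (K := ⊤) (v := s [v]) trivial
  | @fill j x y hx _ hxy ih =>
    refine ih.fill (subdivision_mem_chains_top s (j + 2) y) ?_
    rw [boundary_subdivision, hxy]
    exact map_periodicOp_of_commute
      (fun t => subdivision_map (fun F hF hFK => hs F hF hFK t) hx.mem_chains) j

end IsFundamentalChain

end FundamentalChain

section Essential

variable {R : Type*} [CommRing R] {p : ℕ} [NeZero p]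

lemma map_apply_nil {V W : Type*} (u : V → W) (z : ListChain R V) : map u z [] = z [] := by
  refine eq_of_single (f := lapply [] ∘ₗ map u) (g := lapply []) (fun F => ?_) z
  cases F <;> simp

lemma boundary_apply_nil_of_mem_inessential [CharP R p] {z : ListChain R (ZMod p)}
    (hz : z ∈ inessential R p 0) : boundary z [] = 0 := by
  suffices hle : inessential R p 0 ≤ LinearMap.ker (lapply [] ∘ₗ boundary) from hle hz
  refine sup_le (sup_le ?_ ?_) fun d hd => ?_
  · rintro _ ⟨b, rfl⟩
    simp
  · rintro _ ⟨c, rfl⟩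
    simp [periodicOp_of_not_even, boundary_map, map_apply_nil]
  · exact (mem_supported' _ _).1 (boundary_mem_degenerate hd) [] (by simp)

lemma IsFundamentalChain.notMem_inessential [CharP R p] [Nontrivial R] {j : ℕ}
    {x : ListChain R (ZMod p)} (hx : IsFundamentalChain R p ⊤ j x) : x ∉ inessential R p j := by
  induction hx with
  | vertex =>
    intro hmem
    simpa [boundary_single_cons] using boundary_apply_nil_of_mem_inessential hmem
  | @fill j x y _ _ hxy ih =>
    intro hmem
    obtain ⟨u, hu, d, hd, rfl⟩ := Submodule.mem_sup.1 hmem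
    obtain ⟨_, ⟨b, rfl⟩, _, ⟨c, rfl⟩, rfl⟩ := Submodule.mem_sup.1 hu
    rw [periodicOp_add_two, map_add, map_add, boundary_boundary, zero_add, boundary_periodicOp]
      at hxy
    have hsub : x - boundary c ∈ inessential R p j := by
      refine mem_inessential_of_periodicOp_mem_degenerate ?_
      rw [map_sub, ← hxy, add_sub_cancel_left]
      exact boundary_mem_degenerate hd
    have hc : boundary c ∈ inessential R p j :=
      Submodule.mem_sup_left (Submodule.mem_sup_left ⟨c, rfl⟩)
    exact ih (by simpa using Submodule.add_mem _ hsub hc)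

lemma IsFundamentalChain.notMem_degenerate [CharP R p] [Nontrivial R] {j : ℕ}
    {x : ListChain R (ZMod p)} (hx : IsFundamentalChain R p ⊤ j x) : x ∉ degenerate R (ZMod p) :=
  fun h => hx.notMem_inessential (Submodule.mem_sup_right h)

end Essential

section Coloring

variable {p : ℕ} {V κ : Type*} [AddAction (ZMod p) V] [DecidableEq κ]

/-- The color profile of a simplex `F` under a coloring `χ` of the vertices: the sets of colors
occurring on the translates `r +ᵥ F`. -/
def colorProfile (χ : V → κ) (F : List V) (r : ZMod p) : Finset κ :=
  (F.map fun f => χ (r +ᵥ f)).toFinset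

lemma mem_colorProfile {χ : V → κ} {F : List V} {r : ZMod p} {y : κ} :
    y ∈ colorProfile χ F r ↔ ∃ f ∈ F, χ (r +ᵥ f) = y := by
  simp [colorProfile]

lemma colorProfile_map_vadd (χ : V → κ) (F : List V) (t : ZMod p) :
    colorProfile χ (F.map (t +ᵥ ·)) = fun r => colorProfile χ F (r + t) := by
  funext r
  simp [colorProfile, Function.comp_def, add_vadd]

lemma colorProfile_mono (χ : V → κ) {F G : List V} (h : G.Sublist F) (r : ZMod p) :
    colorProfile χ G r ⊆ colorProfile χ F r := fun y hy => by
  rw [mem_colorProfile] at hy ⊢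
  exact hy.imp fun f hf => ⟨h.subset hf.1, hf.2⟩

lemma colorProfile_eq_of_sum_card_eq [NeZero p] (χ : V → κ) {F G : List V} (h : G.Sublist F)
    (hcard : ∑ r : ZMod p, (colorProfile χ G r).card = ∑ r : ZMod p, (colorProfile χ F r).card) :
    (colorProfile χ G : ZMod p → Finset κ) = colorProfile χ F := by
  have hr := (Finset.sum_eq_sum_iff_of_le
    fun r _ => Finset.card_le_card (colorProfile_mono χ h r)).1 hcard
  exact funext fun r =>
    Finset.eq_of_subset_of_card_le (colorProfile_mono χ h r) (hr r (Finset.mem_univ r)).ge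

end Coloring

/-- Otherwise no color profile is invariant under translation, so the profiles label the simplices
equivariantly in `ZMod p`; but a flag of `l + 1` simplices has two consecutive equal profiles. -/
theorem IsFundamentalChain.exists_face_of_coloring {R V κ : Type*} [CommRing R] [Nontrivial R]
    {p : ℕ} [CharP R p] [Fact p.Prime] [AddAction (ZMod p) V] [Fintype κ] {K : LowerSet (Set V)}
    {l : ℕ} (hl : p * Fintype.card κ ≤ l) {x : ListChain R V} (hx : IsFundamentalChain R p K l x)
    (χ : V → κ) : ∃ S ∈ K, ∃ y, ∀ r : ZMod p, ∃ f ∈ S, χ (r +ᵥ f) = y := by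
  classical
  by_contra! hno
  obtain ⟨σ, hσ⟩ := exists_shift_equivariant p (Finset κ)
  have hequiv (F : List V) (hne : F ≠ []) (hF : {v | v ∈ F} ∈ K) (t : ZMod p) :
      σ (colorProfile χ (F.map (t +ᵥ ·))) = t +ᵥ σ (colorProfile χ F) := by
    rw [colorProfile_map_vadd]
    refine hσ _ (fun hconst => ?_) t
    obtain ⟨f, hf⟩ := List.exists_mem_of_ne_nil F hne
    obtain ⟨r, hr⟩ := hno _ hF (χ ((0 : ZMod p) +ᵥ f))
    have hmem : χ ((0 : ZMod p) +ᵥ f) ∈ colorProfile χ F r :=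
      hconst r ▸ mem_colorProfile.2 ⟨f, hf, rfl⟩
    obtain ⟨g, hg, hχ⟩ := mem_colorProfile.1 hmem
    exact hr g hg hχ
  refine (hx.subdivision (s := fun F => σ (colorProfile χ F)) hequiv).notMem_degenerate
    (map_mem_of_mem_supported ?_ hx.mem_chains)
  rintro F ⟨hlen, -⟩
  rw [← hlen]
  refine subdivision_single_mem_degenerate _
    (rk := fun F => ∑ r : ZMod p, (colorProfile χ F r).card)
    (fun F hF => ?_) (fun F G h => ?_) (fun F G h hcard => ?_) ?_
  · obtain ⟨f, hf⟩ := List.exists_mem_of_ne_nil F hF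
    exact Finset.sum_pos' (fun _ _ => Nat.zero_le _)
      ⟨0, Finset.mem_univ 0, Finset.card_pos.2 ⟨_, mem_colorProfile.2 ⟨f, hf, rfl⟩⟩⟩
  · exact Finset.sum_le_sum fun r _ => Finset.card_le_card (colorProfile_mono χ h r)
  · rw [colorProfile_eq_of_sum_card_eq χ h hcard]
  · calc ∑ r : ZMod p, (colorProfile χ F r).card
        ≤ ∑ _r : ZMod p, Fintype.card κ := Finset.sum_le_sum fun _ _ => Finset.card_le_univ _
      _ = p * Fintype.card κ := by simp
      _ < F.length := by omega

end ListChain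

section PartialFunctions

open ListChain Function

/-- Translation of the defined values of a partial function. -/
instance optionAddAction {M α : Type*} [AddMonoid M] [AddAction M α] : AddAction M (Option α) where
  zero_vadd f := by cases f <;> simp
  add_vadd s t f := by cases f <;> simp [add_vadd]

variable {p n : ℕ}

lemma pdom_restr (h : Fin n → ZMod p) (b : Finset (Fin n)) : pdom (restr h b) = b := by
  ext i
  simp [pdom, restr]

lemma le_card_pdom_restr (h : Fin n → ZMod p) {a b : Finset (Fin n)} {l : ℕ}
    (ha : n ≤ a.card + l) (hab : a ⊆ b) : n - l ≤ (pdom (restr h b)).card := by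
  have := Finset.card_le_card hab
  rw [pdom_restr]
  omega

lemma vadd_restr (r : ZMod p) (h : Fin n → ZMod p) (b : Finset (Fin n)) :
    r +ᵥ restr h b = restr (fun i => r + h i) b := by
  funext i
  by_cases hi : i ∈ b <;> simp [restr, hi]

lemma update_restr_none (h : Fin n → ZMod p) (b : Finset (Fin n)) (i : Fin n) :
    update (restr h b) i none = restr h (b.erase i) := by
  funext j
  rcases eq_or_ne j i with rfl | hj <;> simp [restr, *]

lemma update_restr_some (h : Fin n → ZMod p) (b : Finset (Fin n)) (i : Fin n) (y : ZMod p) :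
    update (restr h b) i (some y) = restr (update h i y) (insert i b) := by
  funext j
  rcases eq_or_ne j i with rfl | hj <;> simp [restr, *]

lemma restr_update_erase (h : Fin n → ZMod p) (b : Finset (Fin n)) (i : Fin n) (y : ZMod p) :
    restr (update h i y) (b.erase i) = restr h (b.erase i) := by
  funext j
  rcases eq_or_ne j i with rfl | hj <;> simp [restr, *]

/-- The simplicial complex of sets of partial functions that are restrictions of one total
function to supersets of one set missing at most `m` points. -/
def aligned (p n m : ℕ) : LowerSet (Set (Fin n → Option (ZMod p))) where
  carrier := {S | ∃ (h : Fin n → ZMod p) (a : Finset (Fin n)), n ≤ a.card + m ∧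
    ∀ f ∈ S, ∃ b, a ⊆ b ∧ f = restr h b}
  lower' := fun _ _ hST ⟨h, a, ha, hS⟩ => ⟨h, a, ha, fun f hf => hS f (hST hf)⟩

lemma aligned_mono : Monotone (aligned p n) := fun _ _ hm _ ⟨h, a, ha, hS⟩ =>
  ⟨h, a, by omega, hS⟩

lemma image_vadd_mem_aligned {m : ℕ} {S : Set (Fin n → Option (ZMod p))} (hS : S ∈ aligned p n m)
    (t : ZMod p) : (t +ᵥ ·) '' S ∈ aligned p n m := by
  obtain ⟨h, a, ha, hS⟩ := hS
  refine ⟨fun i => t + h i, a, ha, ?_⟩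
  rintro _ ⟨f, hf, rfl⟩
  obtain ⟨b, hab, rfl⟩ := hS f hf
  exact ⟨b, hab, vadd_restr t h b⟩

lemma image_update_some_mem_aligned {m : ℕ} {S : Set (Fin n → Option (ZMod p))}
    (hS : S ∈ aligned p n m) (i : Fin n) (y : ZMod p) :
    (fun f => update f i (some y)) '' S ∈ aligned p n m := by
  obtain ⟨h, a, ha, hS⟩ := hS
  refine ⟨update h i y, a, ha, ?_⟩
  rintro _ ⟨f, hf, rfl⟩
  obtain ⟨b, hab, rfl⟩ := hS f hf
  exact ⟨insert i b, hab.trans (Finset.subset_insert i b), update_restr_some h b i y⟩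

lemma image_update_none_union_mem_aligned {m : ℕ} {S : Set (Fin n → Option (ZMod p))}
    (hS : S ∈ aligned p n m) (i : Fin n) :
    (fun f => update f i none) '' S ∪ (fun f => f) '' S ∈ aligned p n (m + 1) := by
  obtain ⟨h, a, ha, hS⟩ := hS
  have hcard := Finset.pred_card_le_card_erase (s := a) (a := i)
  refine ⟨h, a.erase i, by omega, ?_⟩
  rintro _ (⟨f, hf, rfl⟩ | ⟨f, hf, rfl⟩) <;> obtain ⟨b, hab, rfl⟩ := hS f hf
  · exact ⟨b.erase i, Finset.erase_subset_erase i hab, update_restr_none h b i⟩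
  · exact ⟨b, (Finset.erase_subset i a).trans hab, rfl⟩

lemma image_update_none_union_update_some_mem_aligned {m : ℕ}
    {S : Set (Fin n → Option (ZMod p))} (hS : S ∈ aligned p n m) (i : Fin n) (y : ZMod p) :
    (fun f => update f i none) '' S ∪ (fun f => update f i (some y)) '' S ∈
      aligned p n (m + 1) := by
  obtain ⟨h, a, ha, hS⟩ := hS
  have hcard := Finset.pred_card_le_card_erase (s := a) (a := i)
  refine ⟨update h i y, a.erase i, by omega, ?_⟩
  rintro _ (⟨f, hf, rfl⟩ | ⟨f, hf, rfl⟩) <;> obtain ⟨b, hab, rfl⟩ := hS f hf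
  · exact ⟨b.erase i, Finset.erase_subset_erase i hab,
      (update_restr_none h b i).trans (restr_update_erase h b i y).symm⟩
  · exact ⟨insert i b, ((Finset.erase_subset i a).trans hab).trans (Finset.subset_insert i b),
      update_restr_some h b i y⟩

variable {R : Type*} [CommRing R] {m k : ℕ} {z : ListChain R (Fin n → Option (ZMod p))}

/-- Both `z` and its image are homologous to the chain where the value at `i` is forgotten. -/
lemma sub_map_update_some_mem_boundaries (hz : z ∈ chains R (aligned p n m) k)
    (hcycle : boundary z = 0) (i : Fin n) (y : ZMod p) :
    z - map (fun f => update f i (some y)) z ∈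
      (chains R (aligned p n (m + 1)) (k + 1)).map boundary := by
  have hid := map_sub_map_mem_boundaries (fun S hS => image_update_none_union_mem_aligned hS i)
    hz hcycle
  have hsome := map_sub_map_mem_boundaries
    (fun S hS => image_update_none_union_update_some_mem_aligned hS i y) hz hcycle
  simpa only [map_id, sub_sub_sub_cancel_right] using Submodule.sub_mem _ hid hsome

lemma sub_map_piecewise_mem_boundaries (hz : z ∈ chains R (aligned p n m) k)
    (hcycle : boundary z = 0) (I : Finset (Fin n)) (g : Fin n → ZMod p) :
    z - map (fun f => I.piecewise (fun i => some (g i)) f) z ∈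
      (chains R (aligned p n (m + 1)) (k + 1)).map boundary := by
  induction I using Finset.induction_on generalizing z with
  | empty => simp
  | insert i I hi ih =>
    have hcomm : (fun f : Fin n → Option (ZMod p) => (insert i I).piecewise (fun i => some (g i)) f)
        = (fun f => I.piecewise (fun i => some (g i)) f) ∘ fun f => update f i (some (g i)) := by
      funext f
      rw [Function.comp_apply, Finset.piecewise_insert, Finset.update_piecewise_of_notMem _ _ _ hi]
    rw [hcomm, ← map_map, ← sub_add_sub_cancel]
    refine Submodule.add_mem _ (sub_map_update_some_mem_boundaries hz hcycle i (g i)) (ih ?_ ?_)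
    · exact map_mem_chains (fun S hS => image_update_some_mem_aligned hS i (g i)) hz
    · rw [boundary_map, hcycle, map_zero]

lemma singleton_mem_aligned (h : Fin n → ZMod p) (m : ℕ) :
    {fun i => some (h i)} ∈ aligned p n m :=
  ⟨h, Finset.univ, by simp,
    fun f hf => ⟨Finset.univ, subset_rfl, hf.trans (funext fun i => by simp [restr])⟩⟩

lemma mem_boundaries_aligned_of_cycle (hz : z ∈ chains R (aligned p n m) k)
    (hcycle : boundary z = 0) : z ∈ (chains R (aligned p n (m + 1)) (k + 1)).map boundary := by
  have hsub := sub_map_piecewise_mem_boundaries hz hcycle Finset.univ 0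
  simp only [Finset.piecewise_univ] at hsub
  simpa using Submodule.add_mem _ hsub
    (map_const_mem_boundaries (singleton_mem_aligned 0 (m + 1)) hz hcycle)

theorem exists_restr_same_color (p n : ℕ) [Fact p.Prime] {κ : Type*} [Fintype κ]
    (χ : (Fin n → Option (ZMod p)) → κ) :
    ∃ (y : κ) (h : Fin n → ZMod p) (a : Finset (Fin n)), n ≤ a.card + p * Fintype.card κ ∧
      ∀ r : ZMod p, ∃ b, a ⊆ b ∧ χ (restr (fun i => r + h i) b) = y := by
  obtain ⟨x, hx⟩ := IsFundamentalChain.exists_of_filtration (R := ZMod p) aligned_mono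
    (fun j S hS t => image_vadd_mem_aligned hS t)
    (fun j z hz hcycle => mem_boundaries_aligned_of_cycle hz hcycle)
    (singleton_mem_aligned (0 : Fin n → ZMod p) 0) (p * Fintype.card κ)
  obtain ⟨S, ⟨h, a, ha, hS⟩, y, hy⟩ := hx.exists_face_of_coloring le_rfl χ
  refine ⟨y, h, a, ha, fun r => ?_⟩
  obtain ⟨f, hf, hχ⟩ := hy r
  obtain ⟨b, hab, rfl⟩ := hS f hf
  exact ⟨b, hab, by rwa [vadd_restr] at hχ⟩

theorem exists_isFull_preimage (p : ℕ) [Fact p.Prime] (κ : Type*) [Finite κ] :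
    ∃ l, ∀ n (χ : PartBox p n l → κ), ∃ y, IsFull p n l (χ ⁻¹' {y}) := by
  have := Fintype.ofFinite κ
  refine ⟨p * Fintype.card κ, fun n χ => ?_⟩
  obtain ⟨y, h, a, ha, hy⟩ := exists_restr_same_color p n (Function.extend Subtype.val χ
    fun _ => χ ⟨restr 0 Finset.univ, le_card_pdom_restr 0 (by simp) subset_rfl⟩)
  obtain ⟨a', ha', hcard'⟩ :=
    Finset.exists_subset_card_eq (show n - p * Fintype.card κ ≤ a.card by omega)
  refine ⟨y, h, a', hcard', fun r => ?_⟩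
  obtain ⟨b, hab, hχ⟩ := hy r
  have hmem := le_card_pdom_restr (fun i => r + h i) ha hab
  refine ⟨b, ha'.trans hab, hmem, ?_⟩
  exact (Subtype.val_injective.extend_apply χ _ ⟨_, hmem⟩).symm.trans hχ

end PartialFunctions

section Product

/-- Every coloring of `∏ i, X i` by `κ` is constant on a product of large sets, where `Large i`
says which subsets of `X i` are large. -/
def ProductRamsey {ι : Type*} (X : ι → Type*) (Large : ∀ i, Set (X i) → Prop) (κ : Type*) : Prop :=
  ∀ χ : (∀ i, X i) → κ, ∃ L : ∀ i, Set (X i), (∀ i, Large i (L i)) ∧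
    ∃ y, ∀ g : ∀ i, X i, (∀ i, g i ∈ L i) → χ g = y

lemma productRamsey_of_isEmpty {ι : Type*} [IsEmpty ι] (X : ι → Type*)
    (Large : ∀ i, Set (X i) → Prop) (κ : Type*) : ProductRamsey X Large κ := fun χ =>
  ⟨isEmptyElim, isEmptyElim, χ isEmptyElim, fun _ _ => congrArg χ (Subsingleton.elim _ _)⟩

/-- Color a point of the last factor by the coloring of the other factors that it induces. -/
lemma productRamsey_succ {m : ℕ} {X : Fin (m + 1) → Type*} {Large : ∀ i, Set (X i) → Prop}
    {κ : Type*}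
    (hinit : ProductRamsey (fun i : Fin m => X i.castSucc) (fun i => Large i.castSucc) κ)
    (hlast : ∀ χ : X (Fin.last m) → (∀ i : Fin m, X i.castSucc) → κ,
      ∃ ξ, Large (Fin.last m) (χ ⁻¹' {ξ})) : ProductRamsey X Large κ := by
  intro χ
  let induced (b : X (Fin.last m)) (g : ∀ i : Fin m, X i.castSucc) : κ := χ (Fin.snoc g b)
  obtain ⟨ξ, hξ⟩ := hlast induced
  obtain ⟨L, hL, y, hy⟩ := hinit ξ
  refine ⟨Fin.snoc (α := fun i => Set (X i)) L (induced ⁻¹' {ξ}), ?_, y, fun g hg => ?_⟩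
  · refine Fin.lastCases ?_ fun i => ?_
    · rwa [Fin.snoc_last]
    · rw [Fin.snoc_castSucc]
      exact hL i
  · have hglast : induced (g (Fin.last m)) = ξ := by simpa using hg (Fin.last m)
    have hginit : ξ (Fin.init g) = y := hy _ fun i => by simpa [Fin.init] using hg i.castSucc
    rw [← hginit, ← hglast]
    exact congrArg χ (Fin.snoc_init_self g).symm

/-- The conclusion `FSCore` for a tuple instead of a list of parameters. -/
def FullProductRamsey (c : ℕ) {m : ℕ} (T : Fin m → ℕ × ℕ × ℕ) : Prop :=
  ProductRamsey (fun i => PartBox (T i).1 (T i).2.1 (T i).2.2)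
    (fun i => IsFull (T i).1 (T i).2.1 (T i).2.2) (Fin c)

lemma fsCore_ofFn {c m : ℕ} (T : Fin m → ℕ × ℕ × ℕ) :
    FSCore c (List.ofFn T) ↔ FullProductRamsey c T :=
  iff_of_eq (congrArg (fun s : Σ m, Fin m → ℕ × ℕ × ℕ => FullProductRamsey c s.2)
    (List.equivSigmaTuple.apply_symm_apply ⟨m, T⟩))

lemma fullProductRamsey_snoc {c m : ℕ} {T : Fin m → ℕ × ℕ × ℕ} (hT : FullProductRamsey c T)
    (t : ℕ × ℕ × ℕ) (ht : ∀ χ : PartBox t.1 t.2.1 t.2.2 →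
      (∀ i, PartBox (T i).1 (T i).2.1 (T i).2.2) → Fin c, ∃ ξ, IsFull t.1 t.2.1 t.2.2 (χ ⁻¹' {ξ})) :
    FullProductRamsey c (Fin.snoc T t : Fin (m + 1) → ℕ × ℕ × ℕ) := by
  obtain ⟨T', rfl, rfl⟩ : ∃ T' : Fin (m + 1) → ℕ × ℕ × ℕ, Fin.init T' = T ∧ T' (Fin.last m) = t :=
    ⟨Fin.snoc T t, Fin.init_snoc _ _, Fin.snoc_last _ _⟩
  rw [Fin.snoc_init_self]
  exact productRamsey_succ hT ht

lemma finite_partBox {p : ℕ} (hp : p ≠ 0) (n l : ℕ) : Finite (PartBox p n l) := by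
  have : NeZero p := ⟨hp⟩
  exact Subtype.finite

theorem fsAux_ofFn (c : ℕ) {ps : List ℕ} (hps : ∀ p ∈ ps, p.Prime) {m : ℕ}
    {T : Fin m → ℕ × ℕ × ℕ} (hne : ∀ i, (T i).1 ≠ 0) (hT : FullProductRamsey c T) :
    FSAux c ps (List.ofFn T) := by
  induction ps generalizing m with
  | nil => exact (fsCore_ofFn T).2 hT
  | cons p ps ih =>
    obtain ⟨hp, hps⟩ := List.forall_mem_cons.1 hps
    have : Fact p.Prime := ⟨hp⟩
    have (i : Fin m) := finite_partBox (hne i) (T i).2.1 (T i).2.2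
    obtain ⟨l, hl⟩ := exists_isFull_preimage p
      ((∀ i, PartBox (T i).1 (T i).2.1 (T i).2.2) → Fin c)
    refine ⟨l, fun n _ => ?_⟩
    have hofFn : List.ofFn T ++ [(p, n, l)] =
        List.ofFn (Fin.snoc T (p, n, l) : Fin (m + 1) → ℕ × ℕ × ℕ) := by
      rw [List.ofFn_succ']
      simp
    rw [hofFn]
    refine ih hps (Fin.lastCases ?_ fun i => ?_) (fullProductRamsey_snoc hT _ (hl n))
    · simpa using hp.ne_zero
    · simpa using hne i

end Product

/-- **The Farah–Solecki theorem.** For primes `p₁, …, p_k` and `c ≥ 1` colors: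
`∃ l₁ ∀ n₁ ≥ l₁ ⋯ ∃ l_k ∀ n_k ≥ l_k`, for every coloring with `c` colors of
`∏ᵢ (ℤ/pᵢ)^{nᵢ:lᵢ}` there are full sets `Lᵢ ⊆ (ℤ/pᵢ)^{nᵢ:lᵢ}` such that `L₁ × ⋯ × L_k` is
monochromatic. -/
theorem farah_solecki (k c : ℕ) (hc : 0 < c) (p : Fin k → ℕ) (hp : ∀ i, (p i).Prime) :
    FSAux c (List.ofFn p) [] := by
  have hbase : FullProductRamsey c (Fin.elim0 : Fin 0 → ℕ × ℕ × ℕ) := productRamsey_of_isEmpty _ _ _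
  have hprime : ∀ q ∈ List.ofFn p, q.Prime := List.forall_mem_ofFn_iff.2 hp
  simpa only [List.ofFn_zero] using fsAux_ofFn c hprime (fun i => i.elim0) hbase
end

section
/- Let (𝓕, 𝓟, ∙•, •) be a linear, vanishing Ramsey domain over a normed composition space (A, X, ∙, ·, ∂, |·|), and assume that each set in 𝓟 is finite. If condition (LP) holds, then condition (R) holds. Condition (R): for every positive integer c and every P ∈ 𝓟 there is F ∈ 𝓕 such that F ∙• P is defined and for every coloring of F ∙• P with c colors there is f ∈ F such that f ∙ P = {f ∙ x : x ∈ P} is monochromatic. Condition (LP): for every positive integer c, every P ∈ 𝓟, and every y ∈ ∂P, there are F ∈ 𝓕 and a ∈ A such that F ∙• P is defined, a ∙ y is defined, and for every coloring with c colors of F_a ∙ P_y = {f ∙ x : f ∈ F_a, x ∈ P_y} there is f ∈ F_a such that f ∙ P_y is monochromatic; here P_y = {x ∈ P : ∂x = y} and F_a = {f ∈ F : f extends a}. -/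
/-- A *normed composition space* `(A, X, ∙, ·, ∂, |·|)`: a partial multiplication on `A`,
a partial action of `A` on `X` (partial operations are modelled via `Option`), a truncation
`∂ : X → X` and a norm `|·| : X → L` into a partial order, subject to the axioms (i)–(iii)
and the action condition. -/
structure NormedCompositionSpace (A X L : Type) [PartialOrder L] where
  /-- the partial multiplication `(a, b) ↦ a · b` on `A` -/
  mul : A → A → Option A
  /-- the partial action `(a, x) ↦ a ∙ x` of `A` on `X` -/
  act : A → X → Option X
  /-- the truncation `∂ : X → X` -/
  trunc : X → X
  /-- the norm `|·| : X → L` -/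
  norm : X → L
  /-- the action condition: if `a ∙ (b ∙ x)` and `(a · b) ∙ x` are both defined, then they
  are equal -/
  act_act : ∀ a b x u v m w, act b x = some u → act a u = some v →
    mul a b = some m → act m x = some w → v = w
  /-- (i) if `a ∙ x` and `a ∙ ∂x` are defined, then `∂(a ∙ x) = a ∙ ∂x` -/
  trunc_act : ∀ a x y z, act a x = some y → act a (trunc x) = some z → trunc y = z
  /-- (ii) `|∂x| ≤ |x|` -/
  norm_trunc : ∀ x, norm (trunc x) ≤ norm x
  /-- (iii) if `|x| ≤ |y|` and `a ∙ y` is defined, then `a ∙ x` is defined and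
  `|a ∙ x| ≤ |a ∙ y|` -/
  act_norm : ∀ a x y z, norm x ≤ norm y → act a y = some z →
    ∃ w, act a x = some w ∧ norm w ≤ norm z

namespace NormedCompositionSpace

variable {A X L : Type} [PartialOrder L]

/-- `b` *extends* `a` if whenever `a ∙ x` is defined, `b ∙ x` is defined and equal to it. -/
def Extends (S : NormedCompositionSpace A X L) (b a : A) : Prop :=
  ∀ x y, S.act a x = some y → S.act b x = some y

/-- `∂P = {∂x : x ∈ P}`. -/
def truncSet (S : NormedCompositionSpace A X L) (P : Set X) : Set X := S.trunc '' P

end NormedCompositionSpace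

/-- A *Ramsey domain* `(𝓕, 𝓟, ∙•, •)` over a normed composition space: families `𝓕, 𝓟` of
nonempty subsets of `A` and `X` with partial operations `•` (composition, given pointwise by
`·`) and `∙•` (action, given pointwise by `∙`), satisfying conditions (a), (b), (c). -/
structure RamseyDomain {A X L : Type} [PartialOrder L]
    (S : NormedCompositionSpace A X L) where
  /-- the family `𝓕` of subsets of `A` -/
  F : Set (Set A)
  /-- the family `𝓟` of subsets of `X` -/
  P : Set (Set X)
  F_nonempty : ∀ F₀ ∈ F, F₀.Nonempty
  P_nonempty : ∀ P₀ ∈ P, P₀.Nonempty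
  /-- the partial operation `F • G` on `𝓕` -/
  comp : Set A → Set A → Option (Set A)
  /-- the partial operation `F ∙• P` from `𝓕 × 𝓟` to `𝓟` -/
  compAct : Set A → Set X → Option (Set X)
  comp_mem : ∀ F₁ ∈ F, ∀ F₂ ∈ F, ∀ H, comp F₁ F₂ = some H →
    H ∈ F ∧ (∀ f ∈ F₁, ∀ g ∈ F₂, ∃ h, S.mul f g = some h) ∧
      H = {h | ∃ f ∈ F₁, ∃ g ∈ F₂, S.mul f g = some h}
  compAct_mem : ∀ F₀ ∈ F, ∀ P₀ ∈ P, ∀ Q, compAct F₀ P₀ = some Q →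
    Q ∈ P ∧ (∀ f ∈ F₀, ∀ x ∈ P₀, ∃ y, S.act f x = some y) ∧
      Q = {y | ∃ f ∈ F₀, ∃ x ∈ P₀, S.act f x = some y}
  /-- (a) if `F ∙• (G ∙• P)` is defined then `(F • G) ∙• P` is defined -/
  cond_a : ∀ F₁ ∈ F, ∀ F₂ ∈ F, ∀ P₀ ∈ P, ∀ Q R, compAct F₂ P₀ = some Q →
    compAct F₁ Q = some R → ∃ H, comp F₁ F₂ = some H ∧ (compAct H P₀).isSome
  /-- (b) if `P ∈ 𝓟` then `∂P ∈ 𝓟` -/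
  cond_b : ∀ P₀ ∈ P, S.truncSet P₀ ∈ P
  /-- (c) if `F ∙• ∂P` is defined then there is `G ∈ 𝓕` with `G ∙• P` defined such that each
  `f ∈ F` has an extension `g ∈ G` -/
  cond_c : ∀ F₀ ∈ F, ∀ P₀ ∈ P, (compAct F₀ (S.truncSet P₀)).isSome →
    ∃ G ∈ F, (compAct G P₀).isSome ∧ ∀ f ∈ F₀, ∃ g ∈ G, S.Extends g f

namespace RamseyDomain

variable {A X L : Type} [PartialOrder L] {S : NormedCompositionSpace A X L}

/-- The Ramsey domain is *vanishing* if each `P ∈ 𝓟` is shrunk to a single point by some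
iterate of the truncation. -/
def Vanishing (D : RamseyDomain S) : Prop :=
  ∀ P₀ ∈ D.P, ∃ (t : ℕ) (x : X), (S.truncSet)^[t] P₀ = {x}

/-- The Ramsey domain is *linear* if for each `P ∈ 𝓟` the set `{|x| : x ∈ P}` is linearly
ordered in `L`. -/
def Linear (D : RamseyDomain S) : Prop :=
  ∀ P₀ ∈ D.P, ∀ x ∈ P₀, ∀ y ∈ P₀, S.norm x ≤ S.norm y ∨ S.norm y ≤ S.norm x

/-- Condition (R): for every number of colors `c ≥ 1` and every `P ∈ 𝓟` there is `F ∈ 𝓕`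
with `F ∙• P` defined such that every coloring of `F ∙• P` with `c` colors admits `f ∈ F`
with `f ∙ P` monochromatic. -/
def CondR (D : RamseyDomain S) : Prop :=
  ∀ c : ℕ, 0 < c → ∀ P₀ ∈ D.P, ∃ F₀ ∈ D.F, ∃ Q, D.compAct F₀ P₀ = some Q ∧
    ∀ χ : X → Fin c, ∃ f ∈ F₀, ∃ color : Fin c,
      ∀ x ∈ P₀, ∀ y, S.act f x = some y → χ y = color

/-- Condition (LP), the local pigeonhole principle: for every number of colors `c ≥ 1`,
every `P ∈ 𝓟`, and every `y ∈ ∂P`, there are `F ∈ 𝓕` and `a ∈ A` such that `F ∙• P` is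
defined, `a ∙ y` is defined, and every coloring with `c` colors of `F_a ∙ P_y` admits
`f ∈ F_a` with `f ∙ P_y` monochromatic (where `P_y = {x ∈ P : ∂x = y}` and
`F_a = {f ∈ F : f extends a}`). -/
def CondLP (D : RamseyDomain S) : Prop :=
  ∀ c : ℕ, 0 < c → ∀ P₀ ∈ D.P, ∀ y ∈ S.truncSet P₀,
    ∃ F₀ ∈ D.F, ∃ a : A, (D.compAct F₀ P₀).isSome ∧ (S.act a y).isSome ∧
      ∀ χ : X → Fin c, ∃ f ∈ F₀, S.Extends f a ∧ ∃ color : Fin c,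
        ∀ x ∈ P₀, S.trunc x = y → ∀ z, S.act f x = some z → χ z = color

end RamseyDomain

/-! Write `f ∙ P` for the set of all defined `f ∙ x` with `x ∈ P`. If `g` extends `a`, then `g` maps
the fiber of `∂` over `y` into the fiber over `a ∙ y`.

*Fiberwise pigeonhole.* For every finite `T ⊆ ∂P` there is `F` such that, for each coloring, some
`f ∈ F` makes `f ∙ P_y` monochromatic for all `y ∈ T` at once, with a color depending on `y`. Take
`y ∈ T` of largest norm and `F`, `a` from (LP) for `y`. By (iii) `a` acts on all of `T`, so the
elements of `F` extending `a` carry the other fibers into those over `a ∙ (T \ {y})`, which is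
smaller than `T`. If `H` works for `F ∙• P` and `a ∙ (T \ {y})`, by induction, then `H • F` works
for `P` and `T`: color `F ∙• P` through the chosen `h ∈ H` when applying (LP).

*Descent along `∂`.* If `F` witnesses (R) at `∂P`, lift `F` to a `G` acting on `P` and take a
fiberwise `H` for `Q = G ∙• P`. The colors that `h ∈ H` gives to the fibers of `Q` form a coloring
of `∂Q`; applying (R) at `∂P` to it shows that `H • G` witnesses (R) at `P`. Since the domain is
vanishing, the descent ends at a single point, where (LP) itself gives (R). -/

theorem exists_mem_forall_map_le_of_isChain {ι α : Type*} [Preorder α] {f : ι → α} {T : Set ι}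
    (hT : T.Finite) (hne : T.Nonempty) (hchain : IsChain (· ≤ ·) (f '' T)) :
    ∃ y ∈ T, ∀ y' ∈ T, f y' ≤ f y := by
  obtain ⟨y, hy, hmax⟩ := hT.exists_maximalFor f T hne
  refine ⟨y, hy, fun y' hy' => ?_⟩
  exact (hchain.total (Set.mem_image_of_mem f hy') (Set.mem_image_of_mem f hy)).elim id (hmax hy')

/-- The coloring `χ` is constant on `Q`. -/
def IsMonochromatic {X κ : Type*} (χ : X → κ) (Q : Set X) : Prop :=
  ∃ color, ∀ z ∈ Q, χ z = color

theorem IsMonochromatic.mono {X κ : Type*} {χ : X → κ} {Q R : Set X} (hR : IsMonochromatic χ R)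
    (h : Q ⊆ R) : IsMonochromatic χ Q :=
  hR.imp fun _ hcolor z hz => hcolor z (h hz)

namespace NormedCompositionSpace

variable {A X L : Type} [PartialOrder L] {S : NormedCompositionSpace A X L}

/-- The set `f ∙ P` of all values `f ∙ x` with `x ∈ P`, ignoring those `x` for which `f ∙ x` is
undefined. -/
def actSet (S : NormedCompositionSpace A X L) (f : A) (P : Set X) : Set X :=
  {z | ∃ x ∈ P, S.act f x = some z}

/-- The fiber `P_y = {x ∈ P : ∂x = y}` of the truncation. -/
def fiber (S : NormedCompositionSpace A X L) (P : Set X) (y : X) : Set X :=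
  {x ∈ P | S.trunc x = y}

theorem actSet_mono (f : A) {P P' : Set X} (h : P ⊆ P') : S.actSet f P ⊆ S.actSet f P' :=
  fun _ ⟨x, hx, hz⟩ => ⟨x, h hx, hz⟩

theorem fiber_subset (P : Set X) (y : X) : S.fiber P y ⊆ P :=
  Set.sep_subset _ _

theorem fiber_mono {P P' : Set X} (h : P ⊆ P') (y : X) : S.fiber P y ⊆ S.fiber P' y :=
  fun _ hx => ⟨h hx.1, hx.2⟩

theorem some_image_actSet_subset (f : A) (T : Set X) :
    some '' S.actSet f T ⊆ S.act f '' T := by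
  rintro _ ⟨z, ⟨x, hx, hz⟩, rfl⟩
  exact ⟨x, hx, hz⟩

theorem finite_actSet (f : A) {T : Set X} (hT : T.Finite) : (S.actSet f T).Finite :=
  ((hT.image _).subset (some_image_actSet_subset f T)).of_finite_image
    (Option.some_injective X).injOn

theorem ncard_actSet_le (f : A) {T : Set X} (hT : T.Finite) :
    (S.actSet f T).ncard ≤ T.ncard :=
  calc (S.actSet f T).ncard = (some '' S.actSet f T).ncard :=
        (Set.ncard_image_of_injective _ (Option.some_injective X)).symm
    _ ≤ (S.act f '' T).ncard := Set.ncard_le_ncard (some_image_actSet_subset f T) (hT.image _)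
    _ ≤ T.ncard := Set.ncard_image_le hT

theorem actSet_mul_subset {f g k : A} {P : Set X} (hk : S.mul f g = some k)
    (hdef : ∀ x ∈ P, ∃ u v, S.act g x = some u ∧ S.act f u = some v) :
    S.actSet k P ⊆ S.actSet f (S.actSet g P) := by
  rintro z ⟨x, hx, hz⟩
  obtain ⟨u, v, hu, hv⟩ := hdef x hx
  exact ⟨u, ⟨x, hx, hu⟩, S.act_act f g x u v k z hu hv hk hz ▸ hv⟩

theorem act_trunc {f : A} {x u : X} (h : S.act f x = some u) :
    S.act f (S.trunc x) = some (S.trunc u) := by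
  obtain ⟨w, hw, -⟩ := S.act_norm f (S.trunc x) x u (S.norm_trunc x) h
  rw [hw, S.trunc_act f x u w h hw]

theorem Extends.trunc_eq {g a : A} {x u v : X} (hext : S.Extends g a)
    (hv : S.act a (S.trunc x) = some v) (hu : S.act g x = some u) : S.trunc u = v :=
  Option.some.inj ((act_trunc hu).symm.trans (hext _ _ hv))

theorem Extends.actSet_fiber_subset {g a : A} {y v : X} (hext : S.Extends g a)
    (hv : S.act a y = some v) (P : Set X) :
    S.actSet g (S.fiber P y) ⊆ S.fiber (S.actSet g P) v := by
  rintro u ⟨x, ⟨hx, rfl⟩, hu⟩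
  exact ⟨⟨x, hx, hu⟩, hext.trunc_eq hv hu⟩

theorem Extends.actSet_truncSet_subset {g a : A} {P : Set X} (hext : S.Extends g a)
    (hdef : ∀ x ∈ P, ∃ u, S.act g x = some u) :
    S.actSet a (S.truncSet P) ⊆ S.truncSet (S.actSet g P) := by
  rintro v ⟨_, ⟨x, hx, rfl⟩, hv⟩
  obtain ⟨u, hu⟩ := hdef x hx
  exact ⟨u, ⟨x, hx, hu⟩, hext.trunc_eq hv hu⟩

theorem isMonochromatic_actSet_of_comp {κ : Type*} {χ : X → κ} {h : A} {Q : Set X}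
    (hQ : IsMonochromatic (fun u => χ ((S.act h u).getD u)) Q) :
    IsMonochromatic χ (S.actSet h Q) := by
  obtain ⟨color, hcolor⟩ := hQ
  refine ⟨color, ?_⟩
  rintro z ⟨u, hu, hz⟩
  simpa only [hz, Option.getD_some] using hcolor u hu

end NormedCompositionSpace

namespace RamseyDomain

open NormedCompositionSpace

variable {A X L : Type} {κ : Type*} [PartialOrder L] {S : NormedCompositionSpace A X L}
  {D : RamseyDomain S}

/-- Condition (R) for a single set `P` and colorings with values in `κ`. -/
def RamseyAt (D : RamseyDomain S) (κ : Type*) (P : Set X) : Prop :=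
  ∃ F ∈ D.F, (D.compAct F P).isSome ∧
    ∀ χ : X → κ, ∃ f ∈ F, IsMonochromatic χ (S.actSet f P)

/-- Condition (LP) for colorings with values in `κ`. -/
def LocalPigeonhole (D : RamseyDomain S) (κ : Type*) : Prop :=
  ∀ P ∈ D.P, ∀ y ∈ S.truncSet P, ∃ F ∈ D.F, ∃ a, (D.compAct F P).isSome ∧ (S.act a y).isSome ∧
    ∀ χ : X → κ, ∃ f ∈ F, S.Extends f a ∧ IsMonochromatic χ (S.actSet f (S.fiber P y))

/-- The fiberwise form of (R) over `T`: the fibers `P_y`, `y ∈ T`, are made monochromatic by one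
and the same element, with a color that may depend on `y`. -/
def FiberwiseRamsey (D : RamseyDomain S) (κ : Type*) (P T : Set X) : Prop :=
  ∃ F ∈ D.F, (D.compAct F P).isSome ∧
    ∀ χ : X → κ, ∃ f ∈ F, ∀ y ∈ T, IsMonochromatic χ (S.actSet f (S.fiber P y))

theorem condR_of_ramseyAt (h : ∀ c, 0 < c → ∀ P ∈ D.P, D.RamseyAt (Fin c) P) : D.CondR := by
  intro c hc P hP
  obtain ⟨F, hF, hdef, hcol⟩ := h c hc P hP
  obtain ⟨Q, hQ⟩ := Option.isSome_iff_exists.1 hdef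
  refine ⟨F, hF, Q, hQ, fun χ => ?_⟩
  obtain ⟨f, hf, color, hcolor⟩ := hcol χ
  exact ⟨f, hf, color, fun x hx z hz => hcolor z ⟨x, hx, hz⟩⟩

theorem CondLP.localPigeonhole (h : D.CondLP) {c : ℕ} (hc : 0 < c) :
    D.LocalPigeonhole (Fin c) := by
  intro P hP y hy
  obtain ⟨F, hF, a, hdef, hay, hcol⟩ := h c hc P hP y hy
  refine ⟨F, hF, a, hdef, hay, fun χ => ?_⟩
  obtain ⟨f, hf, hfa, color, hcolor⟩ := hcol χ
  exact ⟨f, hf, hfa, color, fun z ⟨x, ⟨hx, hxy⟩, hz⟩ => hcolor x hx hxy z hz⟩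

theorem Linear.isChain_norm_truncSet (h : D.Linear) {P : Set X} (hP : P ∈ D.P) :
    IsChain (· ≤ ·) (S.norm '' S.truncSet P) := by
  rintro _ ⟨y, hy, rfl⟩ _ ⟨y', hy', rfl⟩ -
  exact h _ (D.cond_b P hP) y hy y' hy'

theorem actSet_subset_of_compAct {F : Set A} {P Q : Set X} {f : A} (hF : F ∈ D.F) (hP : P ∈ D.P)
    (hQ : D.compAct F P = some Q) (hf : f ∈ F) : S.actSet f P ⊆ Q := by
  obtain ⟨-, -, hQeq⟩ := D.compAct_mem F hF P hP Q hQ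
  rintro z ⟨x, hx, hz⟩
  exact hQeq ▸ ⟨f, hf, x, hx, hz⟩

theorem exists_comp_actSet_subset {G H : Set A} {P Q : Set X} (hG : G ∈ D.F) (hH : H ∈ D.F)
    (hP : P ∈ D.P) (hQ : D.compAct G P = some Q) (hHQ : (D.compAct H Q).isSome) :
    ∃ K ∈ D.F, (D.compAct K P).isSome ∧ ∀ h ∈ H, ∀ g ∈ G, ∃ k ∈ K, ∀ P' ⊆ P,
      S.actSet k P' ⊆ S.actSet h (S.actSet g P') := by
  obtain ⟨R, hR⟩ := Option.isSome_iff_exists.1 hHQ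
  obtain ⟨K, hK, hKP⟩ := D.cond_a H hH G hG P hP Q R hQ hR
  obtain ⟨hKF, hmul, hKeq⟩ := D.comp_mem H hH G hG K hK
  obtain ⟨hQP, hactG, -⟩ := D.compAct_mem G hG P hP Q hQ
  obtain ⟨-, hactH, -⟩ := D.compAct_mem H hH Q hQP R hR
  refine ⟨K, hKF, hKP, fun h hh g hg => ?_⟩
  obtain ⟨k, hk⟩ := hmul h hh g hg
  refine ⟨k, hKeq ▸ ⟨h, hh, g, hg, hk⟩, fun P' hP' =>
    actSet_mul_subset hk fun x hx => ?_⟩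
  obtain ⟨u, hu⟩ := hactG g hg x (hP' hx)
  obtain ⟨v, hv⟩ := hactH h hh u (actSet_subset_of_compAct hG hP hQ hg ⟨x, hP' hx, hu⟩)
  exact ⟨u, v, hu, hv⟩

theorem FiberwiseRamsey.insert {F : Set A} {P Q T : Set X} {a : A} {y : X} (hF : F ∈ D.F)
    (hP : P ∈ D.P) (hQ : D.compAct F P = some Q)
    (hcol : ∀ χ : X → κ, ∃ f ∈ F, S.Extends f a ∧ IsMonochromatic χ (S.actSet f (S.fiber P y)))
    (ha : ∀ t ∈ T, ∃ v, S.act a t = some v) (hT : D.FiberwiseRamsey κ Q (S.actSet a T)) :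
    D.FiberwiseRamsey κ P (insert y T) := by
  obtain ⟨H, hH, hHQ, hHcol⟩ := hT
  obtain ⟨K, hK, hKP, hcomp⟩ := exists_comp_actSet_subset hF hH hP hQ hHQ
  refine ⟨K, hK, hKP, fun χ => ?_⟩
  obtain ⟨h, hh, hhcol⟩ := hHcol χ
  obtain ⟨f, hf, hfa, hfcol⟩ := hcol fun u => χ ((S.act h u).getD u)
  obtain ⟨k, hk, hkhf⟩ := hcomp h hh f hf
  refine ⟨k, hk, Set.forall_mem_insert.2 ⟨?_, fun t ht => ?_⟩⟩
  · exact (isMonochromatic_actSet_of_comp hfcol).mono (hkhf _ (fiber_subset P y))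
  · obtain ⟨v, hv⟩ := ha t ht
    have hfiber : S.actSet f (S.fiber P t) ⊆ S.fiber Q v :=
      (hfa.actSet_fiber_subset hv P).trans (fiber_mono (actSet_subset_of_compAct hF hP hQ hf) v)
    exact (hhcol v ⟨t, ht, hv⟩).mono
      ((hkhf _ (fiber_subset P t)).trans (actSet_mono h hfiber))

theorem LocalPigeonhole.fiberwiseRamsey_empty (hLP : D.LocalPigeonhole κ) {P : Set X}
    (hP : P ∈ D.P) : D.FiberwiseRamsey κ P ∅ := by
  obtain ⟨x, hx⟩ := D.P_nonempty P hP
  obtain ⟨F, hF, _, hFP, -, -⟩ := hLP P hP (S.trunc x) ⟨x, hx, rfl⟩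
  obtain ⟨f, hf⟩ := D.F_nonempty F hF
  exact ⟨F, hF, hFP, fun _ => ⟨f, hf, fun _ => False.elim⟩⟩

theorem LocalPigeonhole.fiberwiseRamsey [Nonempty κ] (hLP : D.LocalPigeonhole κ)
    (hchain : ∀ P ∈ D.P, IsChain (· ≤ ·) (S.norm '' S.truncSet P)) {P T : Set X} (hP : P ∈ D.P)
    (hT : T.Finite) (hTP : T ⊆ S.truncSet P) : D.FiberwiseRamsey κ P T := by
  induction hn : T.ncard using Nat.strong_induction_on generalizing P T with
  | _ n ih =>
  subst hn
  obtain rfl | hne := T.eq_empty_or_nonempty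
  · exact hLP.fiberwiseRamsey_empty hP
  obtain ⟨y, hy, hmax⟩ := exists_mem_forall_map_le_of_isChain hT hne
    ((hchain P hP).mono (Set.image_mono hTP))
  obtain ⟨F, hF, a, hFP, hay, hcol⟩ := hLP P hP y (hTP hy)
  obtain ⟨Q, hQ⟩ := Option.isSome_iff_exists.1 hFP
  obtain ⟨w, hw⟩ := Option.isSome_iff_exists.1 hay
  obtain ⟨hQP, hact, -⟩ := D.compAct_mem F hF P hP Q hQ
  have ha : ∀ t ∈ T, ∃ v, S.act a t = some v := fun t ht =>
    (S.act_norm a t y w (hmax t ht) hw).imp fun _ => And.left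
  have himage : S.actSet a (T \ {y}) ⊆ S.truncSet Q := by
    obtain ⟨f, hf, hfa, -⟩ := hcol (Classical.arbitrary _)
    calc S.actSet a (T \ {y}) ⊆ S.actSet a (S.truncSet P) :=
          actSet_mono a (Set.sdiff_subset.trans hTP)
      _ ⊆ S.truncSet (S.actSet f P) := hfa.actSet_truncSet_subset (hact f hf)
      _ ⊆ S.truncSet Q := Set.image_mono (actSet_subset_of_compAct hF hP hQ hf)
  have hcard : (S.actSet a (T \ {y})).ncard < T.ncard :=
    (ncard_actSet_le a hT.sdiff).trans_lt (Set.ncard_sdiff_singleton_lt_of_mem hy hT)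
  rw [← Set.insert_sdiff_self_of_mem hy]
  exact FiberwiseRamsey.insert hF hP hQ hcol (fun t ht => ha t ht.1)
    (ih _ hcard hQP (finite_actSet a hT.sdiff) himage rfl)

theorem LocalPigeonhole.ramseyAt_of_subsingleton_truncSet (hLP : D.LocalPigeonhole κ) {P : Set X}
    (hP : P ∈ D.P) (hsub : (S.truncSet P).Subsingleton) : D.RamseyAt κ P := by
  obtain ⟨x, hx⟩ := D.P_nonempty P hP
  have hfiber : P ⊆ S.fiber P (S.trunc x) := fun x' hx' => ⟨hx', hsub ⟨x', hx', rfl⟩ ⟨x, hx, rfl⟩⟩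
  obtain ⟨F, hF, _, hFP, -, hcol⟩ := hLP P hP (S.trunc x) ⟨x, hx, rfl⟩
  refine ⟨F, hF, hFP, fun χ => ?_⟩
  obtain ⟨f, hf, -, hmono⟩ := hcol χ
  exact ⟨f, hf, hmono.mono (actSet_mono f hfiber)⟩

theorem RamseyAt.of_truncSet [Nonempty κ] {P : Set X} (hP : P ∈ D.P)
    (htrunc : D.RamseyAt κ (S.truncSet P))
    (hfiberwise : ∀ Q ∈ D.P, D.FiberwiseRamsey κ Q (S.truncSet Q)) : D.RamseyAt κ P := by
  obtain ⟨F, hF, hFP, hFcol⟩ := htrunc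
  obtain ⟨G, hG, hGP, hext⟩ := D.cond_c F hF P hP hFP
  obtain ⟨R, hR⟩ := Option.isSome_iff_exists.1 hFP
  obtain ⟨Q, hQ⟩ := Option.isSome_iff_exists.1 hGP
  obtain ⟨-, hactF, -⟩ := D.compAct_mem F hF _ (D.cond_b P hP) R hR
  obtain ⟨hQP, -, -⟩ := D.compAct_mem G hG P hP Q hQ
  obtain ⟨H, hH, hHQ, hHcol⟩ := hfiberwise Q hQP
  obtain ⟨K, hK, hKP, hcomp⟩ := exists_comp_actSet_subset hG hH hP hQ hHQ
  refine ⟨K, hK, hKP, fun χ => ?_⟩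
  obtain ⟨h, hh, hhcol⟩ := hHcol χ
  choose! χ' hχ' using hhcol
  obtain ⟨f, hf, color, hcolor⟩ := hFcol χ'
  obtain ⟨g, hg, hgf⟩ := hext f hf
  obtain ⟨k, hk, hkhg⟩ := hcomp h hh g hg
  refine ⟨k, hk, color, fun z hz => ?_⟩
  obtain ⟨u, ⟨x, hx, hu⟩, huz⟩ := hkhg P subset_rfl hz
  have hxP : S.trunc x ∈ S.truncSet P := ⟨x, hx, rfl⟩
  have huQ : u ∈ Q := actSet_subset_of_compAct hG hP hQ hg ⟨x, hx, hu⟩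
  have htrunc_u : S.trunc u ∈ S.actSet f (S.truncSet P) := by
    obtain ⟨v, hv⟩ := hactF f hf _ hxP
    exact ⟨S.trunc x, hxP, hgf.trunc_eq hv hu ▸ hv⟩
  calc χ z = χ' (S.trunc u) := hχ' _ ⟨u, huQ, rfl⟩ z ⟨u, ⟨huQ, rfl⟩, huz⟩
    _ = color := hcolor _ htrunc_u

end RamseyDomain

theorem abstract_ramsey_theorem_general {A X L : Type} {κ : Type*} [Nonempty κ] [PartialOrder L]
    {S : NormedCompositionSpace A X L} (D : RamseyDomain S)
    (hchain : ∀ P ∈ D.P, IsChain (· ≤ ·) (S.norm '' S.truncSet P)) (hvan : D.Vanishing)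
    (hfin : ∀ P ∈ D.P, (S.truncSet P).Finite) (hLP : D.LocalPigeonhole κ) :
    ∀ P ∈ D.P, D.RamseyAt κ P := by
  intro P hP
  obtain ⟨t, x, hx⟩ := hvan P hP
  induction t generalizing P with
  | zero =>
    obtain rfl : P = {x} := hx
    exact hLP.ramseyAt_of_subsingleton_truncSet hP (Set.subsingleton_singleton.image _)
  | succ t ih =>
    exact (ih _ (D.cond_b P hP) hx).of_truncSet hP fun Q hQ =>
      hLP.fiberwiseRamsey hchain hQ (hfin Q hQ) subset_rfl

/-- **Solecki's abstract Ramsey theorem.** For a linear, vanishing Ramsey domain over a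
normed composition space in which every set in `𝓟` is finite, the local pigeonhole
principle (LP) implies the Ramsey condition (R). -/
theorem abstract_ramsey_theorem {A X L : Type} [PartialOrder L]
    {S : NormedCompositionSpace A X L} (D : RamseyDomain S)
    (hlin : D.Linear) (hvan : D.Vanishing) (hfin : ∀ P₀ ∈ D.P, P₀.Finite)
    (hLP : D.CondLP) : D.CondR :=
  RamseyDomain.condR_of_ramseyAt fun _ hc =>
    have := Fin.pos_iff_nonempty.1 hc
    abstract_ramsey_theorem_general D (fun _ => hlin.isChain_norm_truncSet) hvan
      (fun P hP => (hfin P hP).image _) (hLP.localPigeonhole hc)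
end
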